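/- Let q = p^f be a power of a prime p, let n ≥ 3 and suppose GU_n(q) is not solvable. Let π be a set of primes with 2 ∈ π, 3 ∈ π and p ∉ π, and let H be a solvable Hall π-subgroup of GU_n(q). Set G = H·SU_n(q). Then there exist x, y, z ∈ G such that H ∩ H^x ∩ H^y ∩ H^z is contained in the center Z(GU_n(q)), i.e. consists of scalar matrices. -/

import Mathlib

open Matrix Pointwise

/-- `H^x = x⁻¹ H x`. -/
def conjBy {G : Type*} [Group G] (H : Subgroup G) (x : G) : Subgroup G :=
  Subgroup.map ((MulAut.conj x⁻¹).toMonoidHom) H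

/-- Hall π-subgroup of the whole group. -/
def IsHallSubgroup {G : Type*} [Group G] (π : Set ℕ) (H : Subgroup G) : Prop :=
  (∀ r : ℕ, r.Prime → r ∣ Nat.card H → r ∈ π) ∧ ∀ r ∈ π, ¬ r ∣ H.index

/-- Hall π-subgroup of the subgroup `K`. -/
def IsHallSubgroupIn {G : Type*} [Group G] (π : Set ℕ) (K H : Subgroup G) : Prop :=
  H ≤ K ∧ (∀ r : ℕ, r.Prime → r ∣ Nat.card H → r ∈ π) ∧ ∀ r ∈ π, ¬ r ∣ H.relIndex K

/-- The subgroup `SL_n` of `GL_n`. -/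
def SLsub (n : ℕ) (F : Type*) [Field F] : Subgroup (GL (Fin n) F) where
  carrier := {g | Matrix.det (g : Matrix (Fin n) (Fin n) F) = 1}
  one_mem' := by simp
  mul_mem' := by
    intro a b ha hb
    simp only [Set.mem_setOf_eq, Units.val_mul, Matrix.det_mul] at *
    rw [ha, hb, one_mul]
  inv_mem' := by
    intro g hg
    simp only [Set.mem_setOf_eq] at *
    have h1 : ((g⁻¹ : GL (Fin n) F) : Matrix (Fin n) (Fin n) F) *
        (g : Matrix (Fin n) (Fin n) F) = 1 := g.inv_mul
    have := congrArg Matrix.det h1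
    rw [Matrix.det_mul, Matrix.det_one, hg, mul_one] at this
    exact this

/-- The group of similitudes of the bilinear form `B` (acting on row vectors). -/
def similitudeGroup {n : ℕ} {F : Type*} [Field F]
    (B : (Fin n → F) → (Fin n → F) → F) : Subgroup (GL (Fin n) F) where
  carrier := {g | ∃ c : Fˣ, ∀ u v : Fin n → F,
    B (Matrix.vecMul u (g : Matrix (Fin n) (Fin n) F))
      (Matrix.vecMul v (g : Matrix (Fin n) (Fin n) F)) = (c : F) * B u v}
  one_mem' := ⟨1, by simp⟩
  mul_mem' := by
    rintro a b ⟨c, hc⟩ ⟨d, hd⟩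
    refine ⟨c * d, fun u v => ?_⟩
    simp only [Units.val_mul, ← Matrix.vecMul_vecMul, hd, hc]
    ring
  inv_mem' := by
    rintro g ⟨c, hc⟩
    refine ⟨c⁻¹, fun u v => ?_⟩
    have h1 : ∀ w : Fin n → F, Matrix.vecMul
        (Matrix.vecMul w ((g⁻¹ : GL (Fin n) F) : Matrix (Fin n) (Fin n) F))
        (g : Matrix (Fin n) (Fin n) F) = w := by
      intro w
      rw [Matrix.vecMul_vecMul, g.inv_mul, Matrix.vecMul_one]
    have h2 := hc (Matrix.vecMul u ((g⁻¹ : GL (Fin n) F) : Matrix (Fin n) (Fin n) F))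
      (Matrix.vecMul v ((g⁻¹ : GL (Fin n) F) : Matrix (Fin n) (Fin n) F))
    rw [h1, h1] at h2
    rw [h2, Units.val_inv_eq_inv_val, inv_mul_cancel_left₀ (by exact_mod_cast c.ne_zero)]

/-- The isometry group of the bilinear form `B` (acting on row vectors). -/
def isometryGroup {n : ℕ} {F : Type*} [Field F]
    (B : (Fin n → F) → (Fin n → F) → F) : Subgroup (GL (Fin n) F) where
  carrier := {g | ∀ u v : Fin n → F,
    B (Matrix.vecMul u (g : Matrix (Fin n) (Fin n) F))
      (Matrix.vecMul v (g : Matrix (Fin n) (Fin n) F)) = B u v}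
  one_mem' := by simp
  mul_mem' := by
    intro a b ha hb u v
    simp only [Set.mem_setOf_eq] at ha hb
    simp only [Units.val_mul, ← Matrix.vecMul_vecMul]
    rw [hb, ha]
  inv_mem' := by
    intro g hg u v
    have h1 : ∀ w : Fin n → F, Matrix.vecMul
        (Matrix.vecMul w ((g⁻¹ : GL (Fin n) F) : Matrix (Fin n) (Fin n) F))
        (g : Matrix (Fin n) (Fin n) F) = w := by
      intro w
      rw [Matrix.vecMul_vecMul, g.inv_mul, Matrix.vecMul_one]
    have h2 := hg (Matrix.vecMul u ((g⁻¹ : GL (Fin n) F) : Matrix (Fin n) (Fin n) F))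
      (Matrix.vecMul v ((g⁻¹ : GL (Fin n) F) : Matrix (Fin n) (Fin n) F))
    rw [h1, h1] at h2
    exact h2.symm

/-- The group of similitudes of the quadratic form `Q` (acting on row vectors). -/
def qSimilitudeGroup {n : ℕ} {F : Type*} [Field F]
    (Q : (Fin n → F) → F) : Subgroup (GL (Fin n) F) where
  carrier := {g | ∃ c : Fˣ, ∀ v : Fin n → F,
    Q (Matrix.vecMul v (g : Matrix (Fin n) (Fin n) F)) = (c : F) * Q v}
  one_mem' := ⟨1, by simp⟩
  mul_mem' := by
    rintro a b ⟨c, hc⟩ ⟨d, hd⟩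
    refine ⟨c * d, fun v => ?_⟩
    simp only [Units.val_mul, ← Matrix.vecMul_vecMul, hd, hc]
    ring
  inv_mem' := by
    rintro g ⟨c, hc⟩
    refine ⟨c⁻¹, fun v => ?_⟩
    have h1 : ∀ w : Fin n → F, Matrix.vecMul
        (Matrix.vecMul w ((g⁻¹ : GL (Fin n) F) : Matrix (Fin n) (Fin n) F))
        (g : Matrix (Fin n) (Fin n) F) = w := by
      intro w
      rw [Matrix.vecMul_vecMul, g.inv_mul, Matrix.vecMul_one]
    have h2 := hc (Matrix.vecMul v ((g⁻¹ : GL (Fin n) F) : Matrix (Fin n) (Fin n) F))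
    rw [h1] at h2
    rw [h2, Units.val_inv_eq_inv_val, inv_mul_cancel_left₀ (by exact_mod_cast c.ne_zero)]

/-- The unitary group `GU_n` with respect to the field automorphism `φ`. -/
def GUgrp (n : ℕ) {K : Type*} [Field K] (φ : K →+* K) : Subgroup (GL (Fin n) K) where
  carrier := {g | ((g : Matrix (Fin n) (Fin n) K).map φ)ᵀ * (g : Matrix (Fin n) (Fin n) K) = 1}
  one_mem' := by
    simp [Matrix.map_one φ φ.map_zero φ.map_one]
  mul_mem' := by
    intro a b ha hb
    simp only [Set.mem_setOf_eq, Units.val_mul, Matrix.map_mul, Matrix.transpose_mul] at *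
    calc ((b : Matrix (Fin n) (Fin n) K).map φ)ᵀ * ((a : Matrix (Fin n) (Fin n) K).map φ)ᵀ *
          ((a : Matrix (Fin n) (Fin n) K) * (b : Matrix (Fin n) (Fin n) K))
        = ((b : Matrix (Fin n) (Fin n) K).map φ)ᵀ *
          (((a : Matrix (Fin n) (Fin n) K).map φ)ᵀ * (a : Matrix (Fin n) (Fin n) K)) *
          (b : Matrix (Fin n) (Fin n) K) := by noncomm_ring
      _ = 1 := by rw [ha, mul_one, hb]
  inv_mem' := by
    intro g hg
    simp only [Set.mem_setOf_eq] at *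
    have hcomm : (g : Matrix (Fin n) (Fin n) K) * ((g : Matrix (Fin n) (Fin n) K).map φ)ᵀ = 1 :=
      _root_.mul_eq_one_comm.mp hg
    have h1 : ((g : Matrix (Fin n) (Fin n) K) * ((g⁻¹ : GL (Fin n) K) : Matrix (Fin n) (Fin n) K)).map φ = 1 := by
      rw [g.mul_inv]
      exact Matrix.map_one φ φ.map_zero φ.map_one
    rw [Matrix.map_mul] at h1
    have h2 := congrArg Matrix.transpose h1
    rw [Matrix.transpose_mul, Matrix.transpose_one] at h2
    calc (((g⁻¹ : GL (Fin n) K) : Matrix (Fin n) (Fin n) K).map φ)ᵀ *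
          ((g⁻¹ : GL (Fin n) K) : Matrix (Fin n) (Fin n) K)
        = (((g⁻¹ : GL (Fin n) K) : Matrix (Fin n) (Fin n) K).map φ)ᵀ *
          (((g : Matrix (Fin n) (Fin n) K).map φ)ᵀ * (g : Matrix (Fin n) (Fin n) K)) *
          ((g⁻¹ : GL (Fin n) K) : Matrix (Fin n) (Fin n) K) := by rw [hg, mul_one]
      _ = ((((g⁻¹ : GL (Fin n) K) : Matrix (Fin n) (Fin n) K).map φ)ᵀ *
          ((g : Matrix (Fin n) (Fin n) K).map φ)ᵀ) *
          ((g : Matrix (Fin n) (Fin n) K) * ((g⁻¹ : GL (Fin n) K) : Matrix (Fin n) (Fin n) K)) := by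
            noncomm_ring
      _ = 1 := by rw [h2, g.mul_inv, mul_one]

/-!
Since `H` has odd index, a conjugate of `H` contains the 2-subgroup of `GU_n(q)` generated by the
reflections in the coordinate axes together with enough diagonal matrices of order 4 (if
`q ≡ 3 mod 4`) or plane rotations (if `q ≡ 1 mod 4`). A solvable `p'`-group of unitary matrices
containing these preserves an orthogonal decomposition, compatible with the coordinates, on whose
components it acts primitively; the Fitting structure of the primitive pieces forces the components
to have dimension at most two, so `H` permutes a frame of lines and planes. Such frames can be
moved by elements of the special unitary group so that a matrix permuting all four frames must be
scalar.
-/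

open scoped commutatorElement

section LinearAlgebra

theorem eq_one_of_pow_eq_one_of_isNilpotent_sub_one {R : Type*} [Ring R] {b : R} {N : ℕ}
    (hN : IsUnit (N : R)) (hb : b ^ N = 1) (hnil : IsNilpotent (b - 1)) : b = 1 := by
  set S := ∑ i ∈ Finset.range N, b ^ i
  set S' := ∑ i ∈ Finset.range N, ∑ j ∈ Finset.range i, b ^ j
  have hS : S = N + (b - 1) * S' := by
    rw [Finset.mul_sum]
    simp_rw [mul_geom_sum]
    simp [S]
  have hcomm : Commute (b - 1) S' :=
    .sum_right _ _ _ fun i _ => .sum_right _ _ _ fun j _ =>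
      ((Commute.refl b).sub_left (.one_left b)).pow_right j
  have hunit : IsUnit S := by
    rw [hS]
    exact (hcomm.isNilpotent_mul_right hnil).isUnit_add_left_of_commute hN
      (Nat.cast_commute _ _).symm
  have hzero : (b - 1) * S = 0 := by rw [mul_geom_sum, hb, sub_self]
  exact sub_eq_zero.mp (hunit.mul_left_eq_zero.mp hzero)

variable {K : Type*} [Field K] {ι : Type*} [Fintype ι]

theorem rank_add_le_add_rank (A B : Matrix ι ι K) : (A + B).rank ≤ A.rank + B.rank := by
  classical
  rw [Matrix.rank, Matrix.mulVecLin_add]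
  exact (Submodule.finrank_mono (LinearMap.range_add_le _ _)).trans
    (Submodule.finrank_add_le_finrank_add_finrank _ _)

theorem rank_smul_le (c : K) (A : Matrix ι ι K) : (c • A).rank ≤ A.rank := by
  classical
  simpa using Matrix.rank_mul_le_right (c • (1 : Matrix ι ι K)) A

theorem mul_apply_of_row {a : Matrix ι ι K} {i : ι} (ha : ∀ j, j ≠ i → a i j = 0)
    (d : Matrix ι ι K) (b : ι) : (a * d) i b = a i i * d i b := by
  rw [Matrix.mul_apply, Finset.sum_eq_single i (fun j _ hj => by rw [ha j hj, zero_mul]) (by simp)]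

variable [DecidableEq ι]

theorem rank_smul_one {c : K} (hc : c ≠ 0) : (c • (1 : Matrix ι ι K)).rank = Fintype.card ι := by
  rw [← Algebra.algebraMap_eq_smul_one]
  exact Matrix.rank_of_isUnit _ ((IsUnit.mk0 _ hc).map _)

theorem smul_one_eq_one_of_rank_sub_one_lt {c : K}
    (h : (c • (1 : Matrix ι ι K) - 1).rank < Fintype.card ι) : c = 1 := by
  by_contra hc
  have hsub : c • (1 : Matrix ι ι K) - 1 = (c - 1) • 1 := by rw [sub_smul, one_smul]
  rw [hsub, rank_smul_one (sub_ne_zero.mpr hc)] at h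
  exact h.false

end LinearAlgebra

section LineProjection

variable {K : Type*} [Field K] [StarRing K] {ι : Type*} [Fintype ι]

/-- The orthogonal projection onto the line spanned by `v`, meaningful when `star v ⬝ᵥ v ≠ 0`. -/
def lineProjection (v : ι → K) : Matrix ι ι K :=
  (star v ⬝ᵥ v)⁻¹ • vecMulVec v (star v)

theorem trace_lineProjection {v : ι → K} (hv : star v ⬝ᵥ v ≠ 0) :
    (lineProjection v).trace = 1 := by
  rw [lineProjection, Matrix.trace_smul, Matrix.trace_vecMulVec, dotProduct_comm v, smul_eq_mul,
    inv_mul_cancel₀ hv]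

theorem lineProjection_mul_mul_self (v : ι → K) (X : Matrix ι ι K) :
    lineProjection v * X * lineProjection v =
      (lineProjection v * X).trace • lineProjection v := by
  simp only [lineProjection, smul_mul_assoc, mul_smul_comm, Matrix.vecMulVec_mul,
    Matrix.vecMul_vecMulVec, Matrix.trace_smul, Matrix.trace_vecMulVec, smul_smul,
    Matrix.vecMulVec_smul, smul_eq_mul]
  rw [dotProduct_comm v]
  congr 1
  ring

theorem star_lineProjection (v : ι → K) : star (lineProjection v) = lineProjection v := by
  have hstar : star (star v ⬝ᵥ v) = star v ⬝ᵥ v := by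
    rw [← Matrix.star_dotProduct_star, star_star, dotProduct_comm]
  rw [lineProjection, Matrix.star_eq_conjTranspose, Matrix.conjTranspose_smul, star_inv₀, hstar,
    Matrix.conjTranspose_vecMulVec, star_star]

theorem rank_lineProjection_le (v : ι → K) : (lineProjection v).rank ≤ 1 :=
  (rank_smul_le _ _).trans (Matrix.rank_vecMulVec_le _ _)

theorem lineProjection_mul_self {v : ι → K} (hv : star v ⬝ᵥ v ≠ 0) :
    lineProjection v * lineProjection v = lineProjection v := by
  classical
  simpa [trace_lineProjection hv] using lineProjection_mul_mul_self v 1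

theorem isStarProjection_lineProjection {v : ι → K} (hv : star v ⬝ᵥ v ≠ 0) :
    IsStarProjection (lineProjection v) :=
  ⟨lineProjection_mul_self hv, star_lineProjection v⟩

end LineProjection

section Unitary

variable {K : Type*} [Field K] [StarRing K] {ι : Type*} [Fintype ι] [DecidableEq ι]

/-- The diagonal unitary matrix with the given norm-one diagonal entries, as a
homomorphism. -/
def diagonalUnitary : (ι → unitary K) →* Matrix.unitaryGroup ι K where
  toFun d := ⟨Matrix.diagonal fun i => (d i : K), by
    rw [Matrix.mem_unitaryGroup_iff', Matrix.star_eq_conjTranspose, Matrix.diagonal_conjTranspose,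
      Matrix.diagonal_mul_diagonal, ← Matrix.diagonal_one]
    congr 1
    ext i
    exact Unitary.star_mul_self_of_mem (d i).2⟩
  map_one' := Subtype.ext (by simp)
  map_mul' d e := Subtype.ext (by simp)

@[simp] theorem coe_diagonalUnitary (d : ι → unitary K) :
    (diagonalUnitary d : Matrix ι ι K) = Matrix.diagonal fun i => (d i : K) := rfl

/-- The unitary matrix scaling the `i`-th coordinate by `c` and fixing the others. -/
def coordUnitary (i : ι) : unitary K →* Matrix.unitaryGroup ι K :=
  diagonalUnitary.comp (MonoidHom.mulSingle (fun _ => unitary K) i)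

/-- The scalar unitary matrices. -/
def scalarUnitary (ι K : Type*) [Fintype ι] [DecidableEq ι] [Field K] [StarRing K] :
    Subgroup (Matrix.unitaryGroup ι K) where
  carrier := {a | ∃ c : K, (a : Matrix ι ι K) = c • 1}
  one_mem' := ⟨1, by simp⟩
  mul_mem' := by
    rintro _ _ ⟨c, hc⟩ ⟨d, hd⟩
    exact ⟨c * d, by simp [hc, hd, smul_smul, mul_comm]⟩
  inv_mem' := by
    rintro _ ⟨c, hc⟩
    exact ⟨star c, by simp [hc]⟩

theorem commute_coe {a b : Matrix.unitaryGroup ι K} (h : Commute a b) :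
    Commute (a : Matrix ι ι K) b :=
  congrArg Subtype.val h.eq

theorem coe_eq_one_iff {a : Matrix.unitaryGroup ι K} : (a : Matrix ι ι K) = 1 ↔ a = 1 := by
  rw [Subtype.ext_iff, Matrix.UnitaryGroup.one_val]

theorem commute_of_mem_scalarUnitary {z : Matrix.unitaryGroup ι K} (hz : z ∈ scalarUnitary ι K)
    (a : Matrix.unitaryGroup ι K) : Commute z a := by
  obtain ⟨c, hc⟩ := hz
  exact Subtype.ext (by simp [hc])

theorem pow_card_eq_one_of_mem_scalarUnitary {z : Matrix.unitaryGroup ι K}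
    (hz : z ∈ scalarUnitary ι K) (hdet : (z : Matrix ι ι K).det = 1) : z ^ Fintype.card ι = 1 := by
  obtain ⟨c, hc⟩ := hz
  have hpow : c ^ Fintype.card ι = 1 := by simpa [hc, Matrix.det_smul] using hdet
  exact Subtype.ext (by simp [hc, smul_pow, hpow])

theorem det_commutator (a d : Matrix.unitaryGroup ι K) :
    ((⁅a, d⁆ : Matrix.unitaryGroup ι K) : Matrix ι ι K).det = 1 := by
  have h : (⁅a, d⁆ * (d * a) : Matrix.unitaryGroup ι K) = a * d := by
    rw [commutatorElement_def]; group
  have hdet := congrArg (fun u : Matrix.unitaryGroup ι K => (u : Matrix ι ι K).det) h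
  simp only [Matrix.UnitaryGroup.mul_val, Matrix.det_mul] at hdet
  have hu := ((Matrix.UnitaryGroup.det_isUnit d).mul (Matrix.UnitaryGroup.det_isUnit a)).ne_zero
  exact mul_right_cancel₀ hu (by rw [hdet, one_mul, mul_comm])

theorem exists_mul_eq_smul_mul {a d : Matrix.unitaryGroup ι K}
    (h : ⁅a, d⁆ ∈ scalarUnitary ι K) : ∃ ν : K, (a * d : Matrix ι ι K) = ν • (d * a) := by
  obtain ⟨ν, hν⟩ := h
  have hcomm : a * d = ⁅a, d⁆ * (d * a) := by rw [commutatorElement_def]; group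
  refine ⟨ν, ?_⟩
  rw [← Matrix.UnitaryGroup.mul_val, hcomm, Matrix.UnitaryGroup.mul_val, hν, smul_one_mul,
    Matrix.UnitaryGroup.mul_val]

theorem trace_eq_zero_of_mul_eq_smul_mul {a d : Matrix.unitaryGroup ι K} {ν : K} (hν : ν ≠ 1)
    (h : (a * d : Matrix ι ι K) = ν • (d * a)) : (a : Matrix ι ι K).trace = 0 := by
  have htr : (a : Matrix ι ι K).trace = ν * (a : Matrix ι ι K).trace := by
    calc (a : Matrix ι ι K).trace = (star (d : Matrix ι ι K) * (a * d)).trace := by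
          rw [Matrix.trace_mul_comm, mul_assoc, Matrix.mem_unitaryGroup_iff.mp d.2, mul_one]
      _ = ν * (a : Matrix ι ι K).trace := by
          rw [h, mul_smul_comm, ← mul_assoc, Matrix.mem_unitaryGroup_iff'.mp d.2, one_mul,
            Matrix.trace_smul, smul_eq_mul]
  have hzero : (1 - ν) * (a : Matrix ι ι K).trace = 0 := by linear_combination htr
  exact (mul_eq_zero.mp hzero).resolve_left (sub_ne_zero.mpr hν.symm)

theorem rank_commutator_sub_one_le (g a : Matrix.unitaryGroup ι K) :
    ((⁅g, a⁆ : Matrix.unitaryGroup ι K) - 1 : Matrix ι ι K).rank ≤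
      2 * (g - 1 : Matrix ι ι K).rank := by
  have hg := Matrix.mem_unitaryGroup_iff'.mp g.2
  have ha := Matrix.mem_unitaryGroup_iff.mp a.2
  have hsplit : ((⁅g, a⁆ : Matrix.unitaryGroup ι K) - 1 : Matrix ι ι K) =
      (g - 1) * (a * star (g : Matrix ι ι K) * star (a : Matrix ι ι K)) +
        (a * -star (g : Matrix ι ι K)) * ((g - 1) * star (a : Matrix ι ι K)) := by
    have hcancel : (a * -star (g : Matrix ι ι K) : Matrix ι ι K) *
        ((g - 1) * star (a : Matrix ι ι K)) =
          a * star (g : Matrix ι ι K) * star (a : Matrix ι ι K) - 1 := by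
      calc _ = a * star (g : Matrix ι ι K) * star (a : Matrix ι ι K) -
            a * (star (g : Matrix ι ι K) * g) * star (a : Matrix ι ι K) := by noncomm_ring
        _ = _ := by rw [hg, mul_one, ha]
    rw [hcancel, commutatorElement_def]
    simp only [Matrix.UnitaryGroup.mul_val, Matrix.UnitaryGroup.inv_val]
    noncomm_ring
  rw [hsplit, two_mul]
  exact (rank_add_le_add_rank _ _).trans (add_le_add (Matrix.rank_mul_le_left _ _)
    ((Matrix.rank_mul_le_right _ _).trans (Matrix.rank_mul_le_left _ _)))

theorem apply_eq_zero_of_commute_diagonalUnitary {a : Matrix ι ι K} {d : ι → unitary K}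
    (h : Commute a (diagonalUnitary d)) {i j : ι} (hij : d i ≠ d j) : a i j = 0 := by
  have hmat : (a * Matrix.diagonal fun l => (d l : K)) =
      Matrix.diagonal (fun l => (d l : K)) * a := h.eq
  have hentry := congrFun (congrFun hmat i) j
  rw [Matrix.mul_diagonal, Matrix.diagonal_mul] at hentry
  have hzero : ((d i : K) - d j) * a i j = 0 := by linear_combination -hentry
  exact (mul_eq_zero.mp hzero).resolve_left (sub_ne_zero.mpr fun h => hij (Subtype.ext h))

theorem apply_self_ne_zero_of_row {a : Matrix.unitaryGroup ι K} {i : ι}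
    (ha : ∀ j, j ≠ i → (a : Matrix ι ι K) i j = 0) : (a : Matrix ι ι K) i i ≠ 0 := by
  intro h
  have hentry := congrFun (congrFun (Matrix.mem_unitaryGroup_iff.mp a.2) i) i
  rw [mul_apply_of_row ha, h, zero_mul, Matrix.one_apply_eq] at hentry
  exact zero_ne_one hentry

theorem eq_one_of_mul_eq_smul_mul_of_row {a d : Matrix.unitaryGroup ι K} {ν : K} {i : ι}
    (ha : ∀ j, j ≠ i → (a : Matrix ι ι K) i j = 0) (hd : ∀ j, j ≠ i → (d : Matrix ι ι K) i j = 0)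
    (h : (a * d : Matrix ι ι K) = ν • (d * a)) : ν = 1 := by
  have hentry := congrFun (congrFun h i) i
  rw [Matrix.smul_apply, mul_apply_of_row ha, mul_apply_of_row hd, smul_eq_mul] at hentry
  have hne := mul_ne_zero (apply_self_ne_zero_of_row ha) (apply_self_ne_zero_of_row hd)
  exact (mul_right_cancel₀ hne (by linear_combination hentry)).symm

theorem star_dotProduct_single (i : ι) : star (Pi.single i (1 : K)) ⬝ᵥ Pi.single i 1 = 1 := by
  simp

theorem lineProjection_single (i : ι) :
    lineProjection (Pi.single i (1 : K)) = Matrix.single i i 1 := by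
  rw [lineProjection, star_dotProduct_single, inv_one, one_smul, ← Pi.single_star, star_one,
    ← Matrix.single_eq_single_vecMulVec_single]

theorem coe_coordUnitary (i : ι) (c : unitary K) :
    (coordUnitary i c : Matrix ι ι K) = 1 + ((c : K) - 1) • lineProjection (Pi.single i 1) := by
  rw [lineProjection_single]
  change Matrix.diagonal (fun j => ((Pi.mulSingle i c : ι → unitary K) j : K)) = _
  rw [← Matrix.diagonal_one, Matrix.smul_single, smul_eq_mul, mul_one, ← Matrix.diagonal_single,
    Matrix.diagonal_add]
  congr 1
  ext j
  by_cases hj : j = i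
  · subst hj; simp
  · simp [hj]

theorem coe_coordUnitary_neg_one (i : ι) :
    (coordUnitary i (-1 : unitary K) : Matrix ι ι K) =
      1 - (2 : K) • lineProjection (Pi.single i 1) := by
  rw [coe_coordUnitary, Unitary.coe_neg, OneMemClass.coe_one]
  module

theorem apply_eq_zero_of_commute_coordUnitary {a : Matrix ι ι K} {i : ι} {c : unitary K}
    (hc : c ≠ 1) (h : Commute a (coordUnitary i c)) {j : ι} (hj : j ≠ i) : a i j = 0 := by
  refine apply_eq_zero_of_commute_diagonalUnitary h ?_
  simpa [hj] using hc

theorem rank_coordUnitary_sub_one_le (i : ι) (c : unitary K) :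
    (coordUnitary i c - 1 : Matrix ι ι K).rank ≤ 1 := by
  rw [coe_coordUnitary, add_sub_cancel_left]
  exact (rank_smul_le _ _).trans (rank_lineProjection_le _)

theorem neg_one_ne_one_unitary (h2 : (2 : K) ≠ 0) : (-1 : unitary K) ≠ 1 := by
  intro h
  have hval : (-1 : K) = 1 := congrArg Subtype.val h
  exact h2 (by linear_combination -hval)

end Unitary

section Primitive

section IdempotentPair

theorem sub_one_pow_four_eq_zero {R : Type*} [Ring R] {b b' : R} (hb : b * b' = 1)
    (hb' : b' * b = 1) (h : (2 - b - b') * (2 - b - b') = 0) : (b - 1) ^ 4 = 0 := by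
  have hl : (b - 1) ^ 2 = -(b * (2 - b - b')) := by
    rw [mul_sub, mul_sub, hb, mul_two]; noncomm_ring
  have hr : (b - 1) ^ 2 = -((2 - b - b') * b) := by
    rw [sub_mul, sub_mul, hb', two_mul]; noncomm_ring
  calc (b - 1) ^ 4 = (b - 1) ^ 2 * (b - 1) ^ 2 := by rw [← pow_add]
    _ = b * ((2 - b - b') * (2 - b - b')) * b := by nth_rw 1 [hl]; rw [hr]; noncomm_ring
    _ = 0 := by rw [h, mul_zero, zero_mul]

variable {K R : Type*} [Field K] [Ring R] [Algebra K R] {p q : R} {z : K}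

theorem sub_sq_mul_self_of_mul_mul_eq_smul (hp : p * p = p) (hq : q * q = q)
    (hpqp : p * q * p = z • p) (hqpq : q * p * q = z • q) :
    (p - q) ^ 2 * (p - q) ^ 2 = (1 - z) • (p - q) ^ 2 := by
  have hQ : (p - q) ^ 2 = p + q - p * q - q * p := by
    calc (p - q) ^ 2 = p * p + q * q - p * q - q * p := by noncomm_ring
      _ = _ := by rw [hp, hq]
  have hpQ : p * (p - q) ^ 2 = (1 - z) • p := by
    calc p * (p - q) ^ 2 = p * p + p * q - p * p * q - p * q * p := by rw [hQ]; noncomm_ring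
      _ = _ := by rw [hp, hpqp]; module
  have hqQ : q * (p - q) ^ 2 = (1 - z) • q := by
    calc q * (p - q) ^ 2 = q * p + q * q - q * p * q - q * q * p := by rw [hQ]; noncomm_ring
      _ = _ := by rw [hq, hqpq]; module
  calc (p - q) ^ 2 * (p - q) ^ 2 = (p - q) * (p * (p - q) ^ 2 - q * (p - q) ^ 2) := by noncomm_ring
    _ = _ := by rw [hpQ, hqQ, ← smul_sub, mul_smul_comm, ← sq]

theorem four_mul_sub_sq (hp : p * p = p) (hq : q * q = q) :
    4 * (p - q) ^ 2 = 2 - (1 - 2 * p) * (1 - 2 * q) - (1 - 2 * q) * (1 - 2 * p) := by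
  calc 4 * (p - q) ^ 2 = 4 * (p * p) + 4 * (q * q) - 4 * (p * q) - 4 * (q * p) := by noncomm_ring
    _ = _ := by rw [hp, hq]; noncomm_ring; norm_num

theorem commute_of_commute_natCast_mul {x y : R} {n : ℕ} (hn : (n : K) ≠ 0)
    (h : Commute x (n * y)) : Commute x y := by
  rw [← nsmul_eq_mul, ← Nat.cast_smul_eq_nsmul K] at h
  simpa only [inv_smul_smul₀ hn] using h.smul_right (n : K)⁻¹

theorem mem_centralizer_centralizer_of_four_mul_eq (h2 : (2 : K) ≠ 0) {S : Set R} {b b' y : R}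
    (hb : b ∈ S) (hb' : b' ∈ S) (h : 4 * y = 2 - b - b') : y ∈ S.centralizer.centralizer := by
  intro X hX
  have h4 : Commute X (4 * y) := by
    rw [h]
    exact ((Commute.ofNat_right X 2).sub_right (hX b hb).symm).sub_right (hX b' hb').symm
  refine (commute_of_commute_natCast_mul (n := 4) (K := K) ?_ (by exact_mod_cast h4)).eq
  rw [show ((4 : ℕ) : K) = 2 * 2 by norm_num]
  exact mul_ne_zero h2 h2

theorem isStarProjection_smul_sub_sq [StarRing K] [StarRing R] [StarModule K R]
    (hp : IsStarProjection p) (hq : IsStarProjection q) (hpqp : p * q * p = z • p)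
    (hqpq : q * p * q = z • q) (hz : 1 - z ≠ 0) (hstar : star z = z) :
    IsStarProjection ((1 - z)⁻¹ • (p - q) ^ 2) := by
  have hQ := sub_sq_mul_self_of_mul_mul_eq_smul hp.isIdempotentElem hq.isIdempotentElem hpqp hqpq
  refine ⟨?_, ?_⟩
  · rw [IsIdempotentElem, smul_mul_smul_comm, hQ, smul_smul, mul_assoc, inv_mul_cancel₀ hz,
      mul_one]
  · rw [IsSelfAdjoint, star_smul, star_inv₀, star_sub, star_one, hstar, star_pow, star_sub,
      hp.isSelfAdjoint.star_eq, hq.isSelfAdjoint.star_eq]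

end IdempotentPair

section UnitaryConj

variable {K : Type*} [Field K] [StarRing K] {ι : Type*} [Fintype ι] [DecidableEq ι]

theorem conj_lineProjection_mul_mul_self (v : ι → K) (a : Matrix.unitaryGroup ι K) :
    (a * lineProjection v * star (a : Matrix ι ι K)) * lineProjection v *
        (a * lineProjection v * star (a : Matrix ι ι K)) =
      (lineProjection v * (a * lineProjection v * star (a : Matrix ι ι K))).trace •
        (a * lineProjection v * star (a : Matrix ι ι K)) := by
  have htr : (lineProjection v * (star (a : Matrix ι ι K) * lineProjection v * a)).trace =
      (lineProjection v * (a * lineProjection v * star (a : Matrix ι ι K))).trace := by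
    simpa only [mul_assoc] using
      Matrix.trace_mul_comm (lineProjection v * star (a : Matrix ι ι K)) (lineProjection v * a)
  calc _ = a * (lineProjection v * (star (a : Matrix ι ι K) * lineProjection v * a) *
        lineProjection v) * star (a : Matrix ι ι K) := by noncomm_ring
    _ = _ := by rw [lineProjection_mul_mul_self, mul_smul_comm, smul_mul_assoc, htr]

theorem coe_commutator_coordUnitary_neg_one (i : ι) (a : Matrix.unitaryGroup ι K) :
    ((⁅coordUnitary i (-1 : unitary K), a⁆ : Matrix.unitaryGroup ι K) : Matrix ι ι K) =
      (1 - 2 * lineProjection (Pi.single i (1 : K))) *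
        (1 - 2 * (a * lineProjection (Pi.single i (1 : K)) * star (a : Matrix ι ι K))) := by
  have hinv : (coordUnitary i (-1) : Matrix.unitaryGroup ι K)⁻¹ = coordUnitary i (-1) := by
    rw [← map_inv, inv_neg_one]
  have hconj (p : Matrix ι ι K) : a * (1 - 2 * p) * star (a : Matrix ι ι K) =
      1 - 2 * (a * p * star (a : Matrix ι ι K)) := by
    calc _ = a * star (a : Matrix ι ι K) - 2 * (a * p * star (a : Matrix ι ι K)) := by
          noncomm_ring
      _ = _ := by rw [Matrix.mem_unitaryGroup_iff.mp a.2]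
  rw [commutatorElement_def, hinv]
  simp only [Matrix.UnitaryGroup.mul_val, Matrix.UnitaryGroup.inv_val]
  rw [coe_coordUnitary_neg_one, two_smul, ← two_mul, ← hconj]
  noncomm_ring

end UnitaryConj

theorem map_mem_centralizer {R : Type*} [Mul R] (e : R ≃* R) {S : Set R}
    (hS : ∀ a ∈ S, e.symm a ∈ S) {X : R} (hX : X ∈ S.centralizer) : e X ∈ S.centralizer := by
  intro a ha
  simpa using congrArg e (hX _ (hS a ha))

variable {K : Type*} [Field K] [StarRing K] {ι : Type*} [Fintype ι] [DecidableEq ι]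

theorem isStarProjection_diagonal_ite (s : ι → Prop) [DecidablePred s] :
    IsStarProjection (Matrix.diagonal fun j => if s j then (1 : K) else 0) := by
  refine ⟨by simp [IsIdempotentElem], ?_⟩
  rw [IsSelfAdjoint, Matrix.star_eq_conjTranspose, Matrix.diagonal_conjTranspose]
  congr 1
  ext j
  simp [apply_ite star]

omit [StarRing K] in
theorem diagonal_ite_mul_comm [DecidableEq K] {c : ι → K} {X : Matrix ι ι K}
    (h : Matrix.diagonal c * X = X * Matrix.diagonal c) (t : K) :
    Matrix.diagonal (fun j => if c j = t then (1 : K) else 0) * X =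
      X * Matrix.diagonal fun j => if c j = t then (1 : K) else 0 := by
  ext j k
  have hjk := congrFun (congrFun h j) k
  simp only [Matrix.diagonal_mul, Matrix.mul_diagonal] at hjk ⊢
  by_cases hX0 : X j k = 0
  · simp [hX0]
  · have hc : c j = c k := mul_left_cancel₀ hX0 (by rw [mul_comm, hjk])
    rw [hc, mul_comm]

/-- A set of commuting orthogonal projections which `G` permutes by conjugation. Such families
encode the orthogonal decompositions of the space preserved by `G`. -/
structure IsInvariantProjectionFamily (G : Subgroup (Matrix.unitaryGroup ι K))
    (T : Set (Matrix ι ι K)) : Prop where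
  isStarProjection : ∀ t ∈ T, IsStarProjection t
  commute : ∀ t ∈ T, ∀ u ∈ T, Commute t u
  conj_mem : ∀ g ∈ G, ∀ t ∈ T, (g * t * star (g : Matrix ι ι K) : Matrix ι ι K) ∈ T

/-- A group of unitary matrices over a field of characteristic other than two, all of whose elements
have finite order prime to the characteristic, which contains the coordinate reflections. -/
structure IsReflectionGroup (G : Subgroup (Matrix.unitaryGroup ι K)) : Prop where
  two_ne_zero : (2 : K) ≠ 0
  exists_pow_eq_one : ∀ g ∈ G, ∃ N : ℕ, (N : K) ≠ 0 ∧ g ^ N = 1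
  coordUnitary_neg_one_mem : ∀ i, coordUnitary i (-1) ∈ G

/-- A reflection group which is primitive: it preserves no nontrivial orthogonal decomposition of
the space. -/
structure IsPrimitiveReflectionGroup (G : Subgroup (Matrix.unitaryGroup ι K)) : Prop
    extends IsReflectionGroup G where
  eq_zero_or_eq_one : ∀ T, IsInvariantProjectionFamily G T → ∀ t ∈ T, t = 0 ∨ t = 1

namespace IsPrimitiveReflectionGroup

variable {G N : Subgroup (Matrix.unitaryGroup ι K)}

theorem eq_zero_or_eq_one_of_mem_centralizer (hG : IsPrimitiveReflectionGroup G)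
    {S : Set (Matrix ι ι K)} (hcomm : ∀ a ∈ S, ∀ b ∈ S, a * b = b * a)
    (hconj : ∀ g ∈ G, ∀ a ∈ S, (g * a * star (g : Matrix ι ι K) : Matrix ι ι K) ∈ S)
    {X : Matrix ι ι K} (hX : IsStarProjection X) (hXS : X ∈ S.centralizer.centralizer) :
    X = 0 ∨ X = 1 := by
  have hmap : ∀ g ∈ G, ∀ (U : Set (Matrix ι ι K)),
      (∀ g ∈ G, ∀ a ∈ U, (g * a * star (g : Matrix ι ι K) : Matrix ι ι K) ∈ U) →
      ∀ a ∈ U.centralizer, (g * a * star (g : Matrix ι ι K) : Matrix ι ι K) ∈ U.centralizer := by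
    intro g hg U hU a ha
    refine map_mem_centralizer (Unitary.conjStarAlgAut K (Matrix ι ι K) g : _ ≃* _) ?_ ha
    intro b hb
    change (star (g : Matrix ι ι K) * b * g : Matrix ι ι K) ∈ U
    simpa using hU g⁻¹ (G.inv_mem hg) b hb
  refine hG.eq_zero_or_eq_one {Y | IsStarProjection Y ∧ Y ∈ S.centralizer.centralizer}
    ⟨fun _ ht => ht.1, fun t ht u hu => ?_, fun g hg t ht => ⟨?_, ?_⟩⟩ X ⟨hX, hXS⟩
  · exact Set.centralizer_centralizer_comm_of_comm hcomm t ht.2 u hu.2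
  · exact ht.1.map (Unitary.conjStarAlgAut K (Matrix ι ι K) g)
  · exact hmap g hg _ (fun g hg => hmap g hg S hconj) t ht.2

theorem eq_zero_or_eq_one_of_image (hG : IsPrimitiveReflectionGroup G)
    (hconj : ∀ g ∈ G, ∀ a ∈ N, g * a * g⁻¹ ∈ N) (hcomm : ∀ a ∈ N, ∀ b ∈ N, a * b = b * a)
    {X : Matrix ι ι K} (hX : IsStarProjection X)
    (hXN : X ∈ ((↑) '' (N : Set (Matrix.unitaryGroup ι K)) :
      Set (Matrix ι ι K)).centralizer.centralizer) :
    X = 0 ∨ X = 1 := by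
  refine hG.eq_zero_or_eq_one_of_mem_centralizer ?_ ?_ hX hXN
  · rintro _ ⟨a, ha, rfl⟩ _ ⟨b, hb, rfl⟩
    exact congrArg Subtype.val (hcomm a ha b hb)
  · rintro g hg _ ⟨a, ha, rfl⟩
    exact ⟨g * a * g⁻¹, hconj g hg a ha, rfl⟩

theorem eq_one_of_isNilpotent_sub_one (hG : IsPrimitiveReflectionGroup G)
    {b : Matrix.unitaryGroup ι K} (hb : b ∈ G) (hnil : IsNilpotent (b - 1 : Matrix ι ι K)) :
    b = 1 := by
  obtain ⟨m, hm, hbm⟩ := hG.exists_pow_eq_one b hb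
  refine coe_eq_one_iff.mp (eq_one_of_pow_eq_one_of_isNilpotent_sub_one (N := m) ?_ ?_ hnil)
  · simpa using (IsUnit.mk0 _ hm).map (algebraMap K (Matrix ι ι K))
  · simpa using congrArg Subtype.val hbm

theorem sub_sq_mul_self_eq_zero (hG : IsPrimitiveReflectionGroup G)
    (hconj : ∀ g ∈ G, ∀ a ∈ N, g * a * g⁻¹ ∈ N) (hcomm : ∀ a ∈ N, ∀ b ∈ N, a * b = b * a)
    {p q : Matrix ι ι K} (hp : IsStarProjection p) (hq : IsStarProjection q) {z : K}
    (hpqp : p * q * p = z • p) (hqpq : q * p * q = z • q) (hz : star z = z)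
    (hrank : p.rank + q.rank < Fintype.card ι)
    (hmem : (p - q) ^ 2 ∈ ((↑) '' (N : Set (Matrix.unitaryGroup ι K)) :
      Set (Matrix ι ι K)).centralizer.centralizer) :
    (p - q) ^ 2 * (p - q) ^ 2 = 0 := by
  have hQ := sub_sq_mul_self_of_mul_mul_eq_smul hp.isIdempotentElem hq.isIdempotentElem hpqp hqpq
  by_cases hz1 : 1 - z = 0
  · rw [hQ, hz1, zero_smul]
  have hE := isStarProjection_smul_sub_sq hp hq hpqp hqpq hz1 hz
  have hEmem := (Subalgebra.centralizer K ((↑) '' (N : Set (Matrix.unitaryGroup ι K)) :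
    Set (Matrix ι ι K)).centralizer).smul_mem hmem (1 - z)⁻¹
  rcases hG.eq_zero_or_eq_one_of_image hconj hcomm hE hEmem with h0 | h1
  · rw [smul_eq_zero_iff_right (inv_ne_zero hz1)] at h0
    rw [h0, mul_zero]
  · have hle : ((1 - z)⁻¹ • (p - q) ^ 2).rank ≤ p.rank + q.rank := by
      refine (rank_smul_le _ _).trans ((sq (p - q)).symm ▸ (Matrix.rank_mul_le_left _ _).trans ?_)
      rw [sub_eq_add_neg, ← neg_one_smul K q]
      exact (rank_add_le_add_rank _ _).trans (Nat.add_le_add_left (rank_smul_le _ _) _)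
    rw [h1, Matrix.rank_one] at hle
    omega

-- The square of the difference of the projections onto the axis and onto its image under `a` is in
-- the bicommutant of `N`, so primitivity and its small rank force it to be nilpotent. Hence the
-- commutator of the reflection with `a` is unipotent.
theorem commute_coordUnitary_neg_one (hG : IsPrimitiveReflectionGroup G) (hι : 3 ≤ Fintype.card ι)
    (hNG : N ≤ G) (hconj : ∀ g ∈ G, ∀ a ∈ N, g * a * g⁻¹ ∈ N)
    (hcomm : ∀ a ∈ N, ∀ b ∈ N, a * b = b * a) (i : ι) {a : Matrix.unitaryGroup ι K} (ha : a ∈ N) :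
    Commute (coordUnitary i (-1)) a := by
  set r : Matrix.unitaryGroup ι K := coordUnitary i (-1)
  set p := lineProjection (Pi.single i (1 : K))
  set q : Matrix ι ι K := a * p * star (a : Matrix ι ι K)
  set b := ⁅r, a⁆
  have hbN : b ∈ N := by
    rw [show b = r * a * r⁻¹ * a⁻¹ from rfl]
    exact N.mul_mem (hconj r (hG.coordUnitary_neg_one_mem i) a ha) (N.inv_mem ha)
  have hp : IsStarProjection p := isStarProjection_lineProjection (by simp)
  have hq : IsStarProjection q := hp.map (Unitary.conjStarAlgAut K (Matrix ι ι K) a)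
  have hQ : 4 * (p - q) ^ 2 = 2 - b - star (b : Matrix ι ι K) := by
    rw [show (b : Matrix ι ι K) = _ from coe_commutator_coordUnitary_neg_one i a,
      four_mul_sub_sq hp.isIdempotentElem hq.isIdempotentElem]
    simp [hp.isSelfAdjoint.star_eq, hq.isSelfAdjoint.star_eq, q, p, two_mul]
  have hmem : (p - q) ^ 2 ∈ ((↑) '' (N : Set (Matrix.unitaryGroup ι K)) :
      Set (Matrix ι ι K)).centralizer.centralizer :=
    mem_centralizer_centralizer_of_four_mul_eq hG.two_ne_zero ⟨b, hbN, rfl⟩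
      ⟨b⁻¹, N.inv_mem hbN, rfl⟩ hQ
  have hQQ0 : (p - q) ^ 2 * (p - q) ^ 2 = 0 := by
    refine hG.sub_sq_mul_self_eq_zero hconj hcomm hp hq (lineProjection_mul_mul_self _ q)
      (conj_lineProjection_mul_mul_self _ a) ?_ ?_ hmem
    · rw [← Matrix.trace_conjTranspose, ← Matrix.star_eq_conjTranspose, star_mul,
        hp.isSelfAdjoint.star_eq, hq.isSelfAdjoint.star_eq, Matrix.trace_mul_comm]
    · have hprank : p.rank ≤ 1 := rank_lineProjection_le _
      have hqrank : q.rank ≤ p.rank :=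
        (Matrix.rank_mul_le_left _ _).trans (Matrix.rank_mul_le_right _ _)
      omega
  have hnil : (b - 1 : Matrix ι ι K) ^ 4 = 0 := by
    refine sub_one_pow_four_eq_zero (Matrix.mem_unitaryGroup_iff.mp b.2)
      (Matrix.mem_unitaryGroup_iff'.mp b.2) ?_
    calc _ = 16 * ((p - q) ^ 2 * (p - q) ^ 2) := by rw [← hQ]; noncomm_ring
      _ = 0 := by rw [hQQ0, mul_zero]
  exact commutatorElement_eq_one_iff_commute.mp
    (hG.eq_one_of_isNilpotent_sub_one (hNG hbN) ⟨4, hnil⟩)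

theorem le_scalarUnitary_of_commute (hG : IsPrimitiveReflectionGroup G) (hι : 3 ≤ Fintype.card ι)
    (hNG : N ≤ G) (hconj : ∀ g ∈ G, ∀ a ∈ N, g * a * g⁻¹ ∈ N)
    (hcomm : ∀ a ∈ N, ∀ b ∈ N, a * b = b * a) : N ≤ scalarUnitary ι K := by
  classical
  intro a ha
  have hι0 : 0 < Fintype.card ι := by omega
  obtain ⟨i₀⟩ := Fintype.card_pos_iff.mp hι0
  have hoff : ∀ i j, j ≠ i → (a : Matrix ι ι K) i j = 0 := fun i j hj =>
    apply_eq_zero_of_commute_coordUnitary (neg_one_ne_one_unitary hG.two_ne_zero)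
      (commute_coe (hG.commute_coordUnitary_neg_one hι hNG hconj hcomm i ha)).symm hj
  have hdiag : (a : Matrix ι ι K) = Matrix.diagonal fun i => (a : Matrix ι ι K) i i := by
    ext i j
    rcases eq_or_ne j i with rfl | hj
    · simp
    · rw [hoff i j hj, Matrix.diagonal_apply_ne _ hj.symm]
  set c : ι → K := fun j => (a : Matrix ι ι K) j j
  set E : Matrix ι ι K := Matrix.diagonal fun j => if c j = c i₀ then 1 else 0
  have hES : E ∈ ((↑) '' (N : Set (Matrix.unitaryGroup ι K)) :
      Set (Matrix ι ι K)).centralizer.centralizer := fun X hX =>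
    (diagonal_ite_mul_comm (hdiag ▸ hX _ ⟨a, ha, rfl⟩) (c i₀)).symm
  have hE1 : E = 1 := by
    refine (hG.eq_zero_or_eq_one_of_image hconj hcomm
      (isStarProjection_diagonal_ite _) hES).resolve_left fun h0 => ?_
    have hentry := congrFun (congrFun h0 i₀) i₀
    simp at hentry
  refine ⟨c i₀, ?_⟩
  rw [hdiag, Matrix.smul_one_eq_diagonal]
  congr 1
  ext j
  have hentry := congrFun (congrFun hE1 j) j
  simpa [E] using hentry

end IsPrimitiveReflectionGroup

end Primitive

section ClassTwo

theorem conj_mem_map_subtype {M : Type*} [Group M] {G : Subgroup M} {N : Subgroup G} [N.Normal]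
    {g a : M} (hg : g ∈ G) (ha : a ∈ N.map G.subtype) : g * a * g⁻¹ ∈ N.map G.subtype := by
  obtain ⟨a, ha, rfl⟩ := ha
  exact ⟨⟨g, hg⟩ * a * ⟨g, hg⟩⁻¹, Subgroup.Normal.conj_mem ‹_› a ha ⟨g, hg⟩, rfl⟩

variable {K : Type*} [Field K] [StarRing K] {ι : Type*} [Fintype ι] [DecidableEq ι]

/-- `A` is a nonabelian subgroup of the unitary group, normalised by `G`, whose commutators and
whose central elements are scalar. In a solvable primitive group it plays the role of a minimal
nonscalar normal subgroup. -/
structure IsScalarClassTwo (G A : Subgroup (Matrix.unitaryGroup ι K)) : Prop where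
  conj_mem : ∀ g ∈ G, ∀ a ∈ A, g * a * g⁻¹ ∈ A
  commutator_mem : ∀ a ∈ A, ∀ d ∈ A, ⁅a, d⁆ ∈ scalarUnitary ι K
  mem_scalarUnitary : ∀ a ∈ A, (∀ d ∈ A, Commute a d) → a ∈ scalarUnitary ι K
  exists_not_commute : ∃ a ∈ A, ∃ d ∈ A, ¬ Commute a d

variable {G A : Subgroup (Matrix.unitaryGroup ι K)}

theorem coordUnitary_neg_one_notMem_scalarUnitary (h2 : (2 : K) ≠ 0) {i j : ι} (hij : j ≠ i) :
    coordUnitary i (-1 : unitary K) ∉ scalarUnitary ι K := by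
  rintro ⟨c, hc⟩
  have hi := congrFun (congrFun hc i) i
  have hj := congrFun (congrFun hc j) j
  rw [coe_coordUnitary_neg_one, lineProjection_single] at hi hj
  replace hi : 1 - 2 = c := by simpa using hi
  replace hj : 1 = c := by simpa [hij.symm] using hj
  exact h2 (by linear_combination hj - hi)

theorem IsPrimitiveReflectionGroup.exists_isScalarClassTwo (hG : IsPrimitiveReflectionGroup G)
    (hι : 3 ≤ Fintype.card ι) (hsolv : Group.IsSolvable G) : ∃ A, IsScalarClassTwo G A := by
  classical
  obtain ⟨m, hm⟩ := hsolv.solvable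
  set D : ℕ → Subgroup (Matrix.unitaryGroup ι K) := fun k => (derivedSeries G k).map G.subtype
  have hex : ∃ k, D k ≤ scalarUnitary ι K := ⟨m, by simp [D, hm]⟩
  have hD0 : ¬ D 0 ≤ scalarUnitary ι K := by
    obtain ⟨i, j, hij⟩ := Fintype.exists_pair_of_one_lt_card (α := ι) (by omega)
    intro h
    exact coordUnitary_neg_one_notMem_scalarUnitary hG.two_ne_zero hij.symm
      (h (by simpa [D] using hG.coordUnitary_neg_one_mem i))
  obtain ⟨k, hk⟩ : ∃ k, Nat.find hex = k + 1 :=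
    Nat.exists_eq_succ_of_ne_zero fun h0 => hD0 (h0 ▸ Nat.find_spec hex)
  have hnot : ¬ D k ≤ scalarUnitary ι K := Nat.find_min hex (by omega)
  have hDG : D k ≤ G := Subgroup.map_subtype_le _
  have hconj : ∀ g ∈ G, ∀ a ∈ D k, g * a * g⁻¹ ∈ D k := fun g hg a ha =>
    conj_mem_map_subtype hg ha
  refine ⟨D k, hconj, ?_, ?_, ?_⟩
  · rintro _ ⟨a, ha, rfl⟩ _ ⟨d, hd, rfl⟩
    have hspec := Nat.find_spec hex
    rw [hk] at hspec
    exact hspec ⟨⁅a, d⁆, Subgroup.commutator_mem_commutator ha hd, rfl⟩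
  · intro a ha hcomm
    refine hG.le_scalarUnitary_of_commute (N := D k ⊓ Subgroup.centralizer (D k)) hι
      (inf_le_left.trans hDG) ?_ (fun b hb c hc => (hb.2 c hc.1).symm)
      ⟨ha, fun d hd => (hcomm d hd).symm⟩
    intro g hg b hb
    refine ⟨hconj g hg b hb.1, fun d hd => ?_⟩
    have hbd := hb.2 _ (hconj g⁻¹ (G.inv_mem hg) d hd)
    calc d * (g * b * g⁻¹) = g * ((g⁻¹ * d * g⁻¹⁻¹) * b) * g⁻¹ := by group
      _ = g * b * g⁻¹ * d := by rw [hbd]; group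
  · by_contra! hcomm
    exact hnot (hG.le_scalarUnitary_of_commute hι hDG hconj fun a ha b hb => hcomm a ha b hb)

end ClassTwo

section ClassTwoDimension

variable {K : Type*} [Field K] [StarRing K] {ι : Type*} [Fintype ι] [DecidableEq ι]
  {G A : Subgroup (Matrix.unitaryGroup ι K)}

theorem card_le_of_mul_eq_smul_mul {b d : Matrix.unitaryGroup ι K} {ν : K} (hν : ν ≠ 1)
    (h : (b * d : Matrix ι ι K) = ν • (d * b)) :
    Fintype.card ι ≤ 2 * (b - 1 : Matrix ι ι K).rank := by
  have hunit : (b - 1 : Matrix ι ι K) * d + (-d : Matrix ι ι K) * (b - 1) =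
      ((ν - 1) • (1 : Matrix ι ι K)) * (d * b : Matrix.unitaryGroup ι K) := by
    calc _ = (b * d : Matrix ι ι K) - d * b := by noncomm_ring
      _ = _ := by rw [h, Matrix.UnitaryGroup.mul_val, smul_one_mul, sub_smul, one_smul]
  have hrank : (((ν - 1) • (1 : Matrix ι ι K)) * (d * b : Matrix.unitaryGroup ι K) :
      Matrix ι ι K).rank = Fintype.card ι := by
    rw [Matrix.rank_mul_eq_left_of_isUnit_det _ _ (Matrix.UnitaryGroup.det_isUnit _),
      rank_smul_one (sub_ne_zero.mpr hν)]
  rw [← hrank, ← hunit, two_mul]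
  exact (rank_add_le_add_rank _ _).trans
    (add_le_add (Matrix.rank_mul_le_left _ _) (Matrix.rank_mul_le_right _ _))

theorem commute_of_commutator_mem_scalarUnitary {g a : Matrix.unitaryGroup ι K}
    (hg : 2 * (g - 1 : Matrix ι ι K).rank < Fintype.card ι) (h : ⁅g, a⁆ ∈ scalarUnitary ι K) :
    Commute g a := by
  obtain ⟨c, hc⟩ := h
  have hc1 : c = 1 := smul_one_eq_one_of_rank_sub_one_lt
    (hc ▸ (rank_commutator_sub_one_le g a).trans_lt hg)
  rw [hc1, one_smul, coe_eq_one_iff] at hc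
  exact commutatorElement_eq_one_iff_commute.mp hc

namespace IsScalarClassTwo

theorem commutator_mem_of_mem (hA : IsScalarClassTwo G A) {g a : Matrix.unitaryGroup ι K}
    (hg : g ∈ G) (ha : a ∈ A) : ⁅g, a⁆ ∈ A := by
  rw [commutatorElement_def]
  exact A.mul_mem (hA.conj_mem g hg a ha) (A.inv_mem ha)

theorem exists_mul_eq_smul_mul (hA : IsScalarClassTwo G A) {a : Matrix.unitaryGroup ι K}
    (ha : a ∈ A) (hns : a ∉ scalarUnitary ι K) :
    ∃ d ∈ A, ∃ ν : K, ν ≠ 1 ∧ (a * d : Matrix ι ι K) = ν • (d * a) := by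
  by_contra! hcomm
  refine hns (hA.mem_scalarUnitary a ha fun d hd => Subtype.ext ?_)
  obtain ⟨ν, hν⟩ := _root_.exists_mul_eq_smul_mul (hA.commutator_mem a ha d hd)
  have hν1 : ν = 1 := by
    by_contra h1
    exact hcomm d hd ν h1 hν
  simpa [hν1] using hν

theorem trace_eq_zero (hA : IsScalarClassTwo G A) {a : Matrix.unitaryGroup ι K}
    (ha : a ∈ A) (hns : a ∉ scalarUnitary ι K) : (a : Matrix ι ι K).trace = 0 := by
  obtain ⟨d, -, ν, hν, h⟩ := hA.exists_mul_eq_smul_mul ha hns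
  exact trace_eq_zero_of_mul_eq_smul_mul hν h

theorem exists_apply_ne_zero (hA : IsScalarClassTwo G A) (i : ι) :
    ∃ a ∈ A, ∃ j, j ≠ i ∧ (a : Matrix ι ι K) i j ≠ 0 := by
  by_contra! hrow
  obtain ⟨a, ha, d, hd, had⟩ := hA.exists_not_commute
  obtain ⟨ν, hν⟩ := _root_.exists_mul_eq_smul_mul (hA.commutator_mem a ha d hd)
  rw [eq_one_of_mul_eq_smul_mul_of_row (hrow a ha) (hrow d hd) hν, one_smul] at hν
  exact had (Subtype.ext hν)

theorem exists_not_commute_coordUnitary (hA : IsScalarClassTwo G A) (h2 : (2 : K) ≠ 0) (i : ι) :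
    ∃ a ∈ A, ¬ Commute (coordUnitary i (-1)) a := by
  obtain ⟨a, ha, j, hj, hne⟩ := hA.exists_apply_ne_zero i
  exact ⟨a, ha, fun h =>
    hne (apply_eq_zero_of_commute_coordUnitary (neg_one_ne_one_unitary h2) (commute_coe h.symm) hj)⟩

theorem trace_commutator_eq_zero_or_commute (hA : IsScalarClassTwo G A)
    {g a : Matrix.unitaryGroup ι K} (hg : g ∈ G) (ha : a ∈ A)
    (hrank : 2 * (g - 1 : Matrix ι ι K).rank < Fintype.card ι) :
    ((⁅g, a⁆ : Matrix.unitaryGroup ι K) : Matrix ι ι K).trace = 0 ∨ Commute g a :=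
  or_iff_not_imp_right.mpr fun hne => hA.trace_eq_zero (hA.commutator_mem_of_mem hg ha) fun hs =>
    hne (commute_of_commutator_mem_scalarUnitary hrank hs)

theorem card_le_four (hA : IsScalarClassTwo G A) (hG : IsPrimitiveReflectionGroup G) :
    Fintype.card ι ≤ 4 := by
  by_contra! hcard
  have hι : 0 < Fintype.card ι := by omega
  obtain ⟨i⟩ := Fintype.card_pos_iff.mp hι
  obtain ⟨a, ha, hne⟩ := hA.exists_not_commute_coordUnitary hG.two_ne_zero i
  have hrank := rank_coordUnitary_sub_one_le (K := K) i (-1)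
  have hnot := fun hs => hne (commute_of_commutator_mem_scalarUnitary (by omega) hs)
  have hb := hA.commutator_mem_of_mem (hG.coordUnitary_neg_one_mem i) ha
  obtain ⟨d, -, ν, hν, h⟩ := hA.exists_mul_eq_smul_mul hb hnot
  have hle := card_le_of_mul_eq_smul_mul hν h
  have hle' := rank_commutator_sub_one_le (coordUnitary i (-1)) a
  omega

end IsScalarClassTwo

end ClassTwoDimension

section DimensionThree

theorem conj_commutator_eq_inv_of_mul_self {M : Type*} [Group M] {g a : M} (hg : g * g = 1) :
    g * ⁅g, a⁆ * g⁻¹ = ⁅g, a⁆⁻¹ := by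
  have hinv : g⁻¹ = g := inv_eq_iff_mul_eq_one.mpr hg
  calc g * ⁅g, a⁆ * g⁻¹ = g * g * (a * g⁻¹ * a⁻¹ * g⁻¹) := by rw [commutatorElement_def]; group
    _ = ⁅g, a⁆⁻¹ := by rw [hg, one_mul, hinv, commutatorElement_inv, commutatorElement_def, hinv]

variable {K : Type*} [Field K] [StarRing K] {ι : Type*} [Fintype ι] [DecidableEq ι]
  {G A : Subgroup (Matrix.unitaryGroup ι K)}

theorem coordUnitary_neg_one_inv (i : ι) :
    (coordUnitary i (-1 : unitary K))⁻¹ = coordUnitary i (-1) := by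
  rw [← map_inv, inv_neg_one]

theorem commutator_eq_one_of_mul_self (hι : Odd (Fintype.card ι)) {a d : Matrix.unitaryGroup ι K}
    (h : ⁅a, d⁆ ∈ scalarUnitary ι K) (hsq : ⁅a, d⁆ * ⁅a, d⁆ = 1) : ⁅a, d⁆ = 1 := by
  have hpow := pow_card_eq_one_of_mem_scalarUnitary h (det_commutator a d)
  obtain ⟨k, hk⟩ := hι
  rwa [hk, pow_succ, pow_mul, sq, hsq, one_pow, one_mul] at hpow

namespace IsScalarClassTwo

theorem commute_conj_coordUnitary (hA : IsScalarClassTwo G A) (hG : IsPrimitiveReflectionGroup G)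
    (hι : Odd (Fintype.card ι)) (i : ι) {a : Matrix.unitaryGroup ι K} (ha : a ∈ A) :
    Commute (coordUnitary i (-1) * a * coordUnitary i (-1)) a := by
  set r : Matrix.unitaryGroup ι K := coordUnitary i (-1)
  have hr : r⁻¹ = r := coordUnitary_neg_one_inv i
  have hrr : r * r = 1 := inv_eq_iff_mul_eq_one.mp hr
  have hx : r * a * r ∈ A := by
    simpa only [hr] using hA.conj_mem r (hG.coordUnitary_neg_one_mem i) a ha
  have hs := hA.commutator_mem _ hx a ha
  have hconj : r * ⁅r * a * r, a⁆ * r⁻¹ = ⁅r * a * r, a⁆⁻¹ := by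
    calc r * ⁅r * a * r, a⁆ * r⁻¹ = ⁅r * r * a * (r * r⁻¹), r * a * r⁻¹⁆ := by
          simp only [commutatorElement_def]; group
      _ = _ := by
          rw [hrr, mul_inv_cancel, hr, one_mul, mul_one, commutatorElement_inv]
  refine commutatorElement_eq_one_iff_commute.mp (commutator_eq_one_of_mul_self hι hs ?_)
  rw [(commute_of_mem_scalarUnitary hs r).symm.eq, mul_inv_cancel_right] at hconj
  rw [eq_inv_iff_mul_eq_one.mp hconj]

theorem mul_conj_coordUnitary_mem_scalarUnitary (hA : IsScalarClassTwo G A)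
    (hG : IsPrimitiveReflectionGroup G) (hι : Odd (Fintype.card ι)) (i : ι)
    {a : Matrix.unitaryGroup ι K} (ha : a ∈ A) :
    a * (coordUnitary i (-1) * a * coordUnitary i (-1)) ∈ scalarUnitary ι K := by
  set r : Matrix.unitaryGroup ι K := coordUnitary i (-1)
  have hr : r⁻¹ = r := coordUnitary_neg_one_inv i
  have hrr : r * r = 1 := inv_eq_iff_mul_eq_one.mp hr
  have hmem : ∀ d ∈ A, r * d * r ∈ A := fun d hd => by
    simpa only [hr] using hA.conj_mem r (hG.coordUnitary_neg_one_mem i) d hd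
  have hfix : ∀ d ∈ A, Commute (d * (r * d * r)) r := fun d hd => by
    calc d * (r * d * r) * r = d * r * d * (r * r) := by group
      _ = r * r * (d * r * d) := by rw [hrr, mul_one, one_mul]
      _ = r * (r * d * r * d) := by group
      _ = r * (d * (r * d * r)) := by rw [(hA.commute_conj_coordUnitary hG hι i hd).eq]
  set c := a * (r * a * r)
  have hc : c ∈ A := A.mul_mem ha (hmem a ha)
  refine hA.mem_scalarUnitary c hc fun d hd => ?_
  have ht := hA.commutator_mem c hc d hd
  have hcd : Commute c (d * (r * d * r)) := by
    have hrow := fun e he j (hj : j ≠ i) => apply_eq_zero_of_commute_coordUnitary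
      (neg_one_ne_one_unitary hG.two_ne_zero) (commute_coe (hfix e he)) hj
    obtain ⟨ν, hν⟩ := _root_.exists_mul_eq_smul_mul
      (hA.commutator_mem c hc _ (A.mul_mem hd (hmem d hd)))
    rw [eq_one_of_mul_eq_smul_mul_of_row (hrow a ha) (hrow d hd) hν, one_smul] at hν
    exact Subtype.ext hν
  have hmul : ⁅c, d * (r * d * r)⁆ = ⁅c, d⁆ * (d * (r * ⁅c, d⁆ * r⁻¹) * d⁻¹) := by
    have hrc : r * c * r⁻¹ = c := by rw [← (hfix a ha).eq, mul_inv_cancel_right]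
    calc _ = ⁅c, d⁆ * (d * ⁅c, r * d * r⁆ * d⁻¹) := by simp only [commutatorElement_def]; group
      _ = ⁅c, d⁆ * (d * ⁅r * c * r⁻¹, r * d * r⁻¹⁆ * d⁻¹) := by rw [hrc, hr]
      _ = _ := by simp only [commutatorElement_def]; group
  refine commutatorElement_eq_one_iff_commute.mp (commutator_eq_one_of_mul_self hι ht ?_)
  rwa [commutatorElement_eq_one_iff_commute.mpr hcd, (commute_of_mem_scalarUnitary ht r).symm.eq,
    mul_inv_cancel_right, (commute_of_mem_scalarUnitary ht d).symm.eq, mul_inv_cancel_right,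
    eq_comm] at hmul

theorem commute_coordUnitary_mul_coordUnitary (hA : IsScalarClassTwo G A)
    (hG : IsPrimitiveReflectionGroup G) (hι : Odd (Fintype.card ι)) (i j : ι)
    {a : Matrix.unitaryGroup ι K} (ha : a ∈ A) :
    Commute (coordUnitary i (-1) * coordUnitary j (-1)) a := by
  set r : Matrix.unitaryGroup ι K := coordUnitary i (-1)
  set r' : Matrix.unitaryGroup ι K := coordUnitary j (-1)
  have hr : r⁻¹ = r := coordUnitary_neg_one_inv i
  have hr' : r'⁻¹ = r' := coordUnitary_neg_one_inv j
  have hz := hA.mul_conj_coordUnitary_mem_scalarUnitary hG hι j ha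
  have hw := hA.mul_conj_coordUnitary_mem_scalarUnitary hG hι i (A.inv_mem ha)
  set z := a * (r' * a * r')
  set w := a⁻¹ * (r * a⁻¹ * r)
  have hg : r * r' * (r * r') = 1 := by
    have hswap : r * r' = r' * r := Subtype.ext (Matrix.commute_diagonal _ _).eq
    calc r * r' * (r * r') = r * (r' * r') * r := by nth_rw 2 [hswap]; group
      _ = 1 := by
        rw [inv_eq_iff_mul_eq_one.mp hr', mul_one, inv_eq_iff_mul_eq_one.mp hr]
  have hcomm : ⁅r * r', a⁆ = w * z := by
    calc ⁅r * r', a⁆ = r * (r' * a * r'⁻¹) * r⁻¹ * a⁻¹ := by rw [commutatorElement_def]; group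
      _ = r * (a⁻¹ * z) * r * a⁻¹ := by rw [hr, hr']; simp only [z]; group
      _ = r * a⁻¹ * r * a⁻¹ * z := by
          simp only [mul_assoc, (commute_of_mem_scalarUnitary hz _).eq]
      _ = a * w * a⁻¹ * z := by simp only [w]; group
      _ = w * z := by rw [← (commute_of_mem_scalarUnitary hw a).eq, mul_inv_cancel_right]
  have hs : ⁅r * r', a⁆ ∈ scalarUnitary ι K := hcomm ▸ (scalarUnitary ι K).mul_mem hw hz
  refine commutatorElement_eq_one_iff_commute.mp (commutator_eq_one_of_mul_self hι hs ?_)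
  have hinv := conj_commutator_eq_inv_of_mul_self hg (a := a)
  rw [(commute_of_mem_scalarUnitary hs _).symm.eq, mul_inv_cancel_right] at hinv
  exact eq_inv_iff_mul_eq_one.mp hinv

theorem card_ne_three (hA : IsScalarClassTwo G A) (hG : IsPrimitiveReflectionGroup G) :
    Fintype.card ι ≠ 3 := by
  intro h3
  have hι : 0 < Fintype.card ι := by omega
  obtain ⟨i⟩ := Fintype.card_pos_iff.mp hι
  obtain ⟨a, ha, j, hj, hne⟩ := hA.exists_apply_ne_zero i
  obtain ⟨k, -, hk⟩ : ∃ k ∈ Finset.univ, k ∉ ({i, j} : Finset ι) :=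
    Finset.exists_mem_notMem_of_card_lt_card
      ((Finset.card_le_two (a := i) (b := j)).trans_lt (by rw [Finset.card_univ]; omega))
  simp only [Finset.mem_insert, Finset.mem_singleton, not_or] at hk
  have hcomm := hA.commute_coordUnitary_mul_coordUnitary hG ⟨1, h3⟩ j k ha
  refine hne (apply_eq_zero_of_commute_diagonalUnitary
    (d := Pi.mulSingle j (-1) * Pi.mulSingle k (-1))
    (by simpa [coordUnitary] using commute_coe hcomm.symm) ?_)
  simp [Ne.symm hj, Ne.symm hk.1, Ne.symm hk.2,
    (neg_one_ne_one_unitary hG.two_ne_zero).symm]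

end IsScalarClassTwo

end DimensionThree

section DimensionFour

variable {K : Type*} [Field K] [StarRing K] {ι : Type*} [Fintype ι] [DecidableEq ι]
  {G A : Subgroup (Matrix.unitaryGroup ι K)}

theorem trace_commutator_of_coe_eq {v : ι → K} (hv : star v ⬝ᵥ v ≠ 0) {c : unitary K}
    {g : Matrix.unitaryGroup ι K} (hg : (g : Matrix ι ι K) = 1 + ((c : K) - 1) • lineProjection v)
    (a : Matrix.unitaryGroup ι K) :
    ((⁅g, a⁆ : Matrix.unitaryGroup ι K) : Matrix ι ι K).trace =
      Fintype.card ι + ((c : K) + star (c : K) - 2) *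
        (1 - (lineProjection v * a).trace * star (lineProjection v * a).trace) := by
  set p := lineProjection v
  set t := (p * a).trace
  have hc : (c : K) * star (c : K) = 1 := Unitary.mul_star_self_of_mem c.2
  have haa : (a * star (a : Matrix ι ι K) : Matrix ι ι K) = 1 := Matrix.mem_unitaryGroup_iff.mp a.2
  have haa' : (star (a : Matrix ι ι K) * a : Matrix ι ι K) = 1 :=
    Matrix.mem_unitaryGroup_iff'.mp a.2
  have hginv : star (g : Matrix ι ι K) = 1 + (star (c : K) - 1) • p := by
    rw [hg, star_add, star_one, star_smul, star_lineProjection, star_sub, star_one]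
  have htp : p.trace = 1 := trace_lineProjection hv
  have htap : (a * p * star (a : Matrix ι ι K)).trace = 1 := by
    rw [Matrix.trace_mul_comm, ← mul_assoc, haa', one_mul, htp]
  have hstar : (p * star (a : Matrix ι ι K)).trace = star t := by
    rw [← Matrix.trace_conjTranspose, ← Matrix.star_eq_conjTranspose, star_mul,
      star_lineProjection, Matrix.trace_mul_comm]
  have hpap : (p * a * p * star (a : Matrix ι ι K)).trace = t * star t := by
    rw [lineProjection_mul_mul_self, smul_mul_assoc, Matrix.trace_smul, hstar, smul_eq_mul]
  have hexp : ((⁅g, a⁆ : Matrix.unitaryGroup ι K) : Matrix ι ι K) =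
      1 + ((c : K) - 1) • p + (star (c : K) - 1) • (a * p * star (a : Matrix ι ι K)) +
        (((c : K) - 1) * (star (c : K) - 1)) • (p * a * p * star (a : Matrix ι ι K)) := by
    rw [commutatorElement_def]
    simp only [Matrix.UnitaryGroup.mul_val, Matrix.UnitaryGroup.inv_val, hginv]
    rw [hg]
    simp only [add_mul, mul_add, one_mul, mul_one, smul_mul_assoc, mul_smul_comm, haa,
      mul_assoc p (a : Matrix ι ι K) (star (a : Matrix ι ι K))]
    module
  rw [hexp, Matrix.trace_add, Matrix.trace_add, Matrix.trace_add, Matrix.trace_one,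
    Matrix.trace_smul, Matrix.trace_smul, Matrix.trace_smul, htp, htap, hpap]
  simp only [smul_eq_mul]
  linear_combination (t * star t) * hc

namespace IsScalarClassTwo

theorem trace_lineProjection_mul_eq_zero_or_commute (hA : IsScalarClassTwo G A)
    (h2 : (2 : K) ≠ 0) (hι : Fintype.card ι = 4) {v : ι → K} (hv : star v ⬝ᵥ v ≠ 0)
    {g : Matrix.unitaryGroup ι K} (hgG : g ∈ G)
    (hg : (g : Matrix ι ι K) = 1 - (2 : K) • lineProjection v)
    {a : Matrix.unitaryGroup ι K} (ha : a ∈ A) :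
    (lineProjection v * a).trace = 0 ∨ lineProjection v * a = a * lineProjection v := by
  have hrank : 2 * (g - 1 : Matrix ι ι K).rank < Fintype.card ι := by
    have hle : (g - 1 : Matrix ι ι K).rank ≤ 1 := by
      rw [hg, sub_sub_cancel_left, ← neg_smul]
      exact (rank_smul_le _ _).trans (rank_lineProjection_le v)
    omega
  refine (hA.trace_commutator_eq_zero_or_commute hgG ha hrank).imp (fun htr => ?_) fun hcomm => ?_
  · have hg' : (g : Matrix ι ι K) = 1 + (((-1 : unitary K) : K) - 1) • lineProjection v := by
      rw [hg, Unitary.coe_neg, OneMemClass.coe_one]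
      module
    rw [trace_commutator_of_coe_eq hv hg', hι, Unitary.coe_neg, OneMemClass.coe_one, star_neg,
      star_one] at htr
    have h4 : (2 * 2 : K) *
        ((lineProjection v * a).trace * star (lineProjection v * a).trace) = 0 := by
      push_cast at htr
      linear_combination htr
    simpa [h2] using h4
  · have hmat : (g * a : Matrix ι ι K) = a * g := congrArg Subtype.val hcomm.eq
    rw [hg] at hmat
    have hsmul : (2 : K) • (lineProjection v * a) = (2 : K) • (a * lineProjection v) := by
      simpa [sub_mul, mul_sub] using hmat
    exact smul_right_injective _ h2 hsmul

theorem card_ne_four_of_mul_self_eq_neg_one (hA : IsScalarClassTwo G A) (h2 : (2 : K) ≠ 0)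
    {i : ι} (hi : coordUnitary i (-1) ∈ G) {I : unitary K} (hI : (I : K) * I = -1)
    (hiI : coordUnitary i I ∈ G) : Fintype.card ι ≠ 4 := by
  intro hι
  obtain ⟨a, ha, j, hj, hne⟩ := hA.exists_apply_ne_zero i
  have htrace : ∀ c : unitary K, c ≠ 1 → coordUnitary i c ∈ G →
      (4 : K) + ((c : K) + star (c : K) - 2) *
        (1 - (lineProjection (Pi.single i (1 : K)) * a).trace *
          star (lineProjection (Pi.single i (1 : K)) * a).trace) = 0 := by
    intro c hc hcG
    have hrank := rank_coordUnitary_sub_one_le i c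
    have htr := (hA.trace_commutator_eq_zero_or_commute hcG ha (by omega)).resolve_right fun h =>
      hne (apply_eq_zero_of_commute_coordUnitary hc (commute_coe h.symm) hj)
    rw [trace_commutator_of_coe_eq (by simp) (coe_coordUnitary i c), hι] at htr
    exact_mod_cast htr
  have hstarI : star (I : K) = -I := by
    linear_combination (star (I : K)) * hI - (I : K) * Unitary.mul_star_self_of_mem I.2
  have hI1 : I ≠ 1 := by
    rintro rfl
    exact h2 (by simpa [one_add_one_eq_two, eq_neg_iff_add_eq_zero] using hI)
  have hminus := htrace (-1) (neg_one_ne_one_unitary h2) hi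
  have hplus := htrace I hI1 hiI
  rw [Unitary.coe_neg, OneMemClass.coe_one, star_neg, star_one] at hminus
  rw [hstarI] at hplus
  have h4 : (2 * 2 : K) = 0 := by linear_combination 2 * hplus - hminus
  simp [h2] at h4

end IsScalarClassTwo

end DimensionFour

section PlaneRotation

variable {K : Type*} [Field K] {ι : Type*} [DecidableEq ι] {i j : ι}

/-- The matrix acting on the coordinate plane `(i, j)` as `!![u, v; -v, u]` and as zero on the other
coordinates; in particular `planeMatrix i j 1 0` is the projection onto that plane. -/
def planeMatrix (i j : ι) (u v : K) : Matrix ι ι K :=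
  u • (Matrix.single i i 1 + Matrix.single j j 1) + v • (Matrix.single i j 1 - Matrix.single j i 1)

/-- The matrix acting on the coordinate plane `(i, j)` as `!![x, y; -y, x]` and as the identity on
the other coordinates. -/
def planeRotation (i j : ι) (x y : K) : Matrix ι ι K :=
  1 + planeMatrix i j (x - 1) y

theorem planeMatrix_eq_zero : planeMatrix i j (0 : K) 0 = 0 := by
  simp [planeMatrix]

theorem planeMatrix_add (u v u' v' : K) :
    planeMatrix i j u v + planeMatrix i j u' v' = planeMatrix i j (u + u') (v + v') := by
  simp only [planeMatrix]
  module

theorem smul_planeMatrix (c u v : K) :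
    c • planeMatrix i j u v = planeMatrix i j (c * u) (c * v) := by
  simp only [planeMatrix]
  module

theorem planeMatrix_apply (hij : i ≠ j) (u v : K) :
    planeMatrix i j u v i i = u ∧ planeMatrix i j u v i j = v := by
  simp [planeMatrix, hij, hij.symm]

theorem star_planeMatrix [StarRing K] (u v : K) :
    star (planeMatrix i j u v) = planeMatrix i j (star u) (-star v) := by
  have hstar (k l : ι) : star (Matrix.single k l (1 : K)) = Matrix.single l k 1 := by
    rw [Matrix.star_eq_conjTranspose, Matrix.conjTranspose_single, star_one]
  simp only [planeMatrix, star_add, star_sub, star_smul, hstar]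
  module

theorem star_planeRotation [StarRing K] (x y : K) :
    star (planeRotation i j x y) = planeRotation i j (star x) (-star y) := by
  have hone : star (1 : Matrix ι ι K) = 1 := Matrix.conjTranspose_one
  rw [planeRotation, star_add, hone, star_planeMatrix, star_sub, star_one, planeRotation]

variable [Fintype ι]

theorem trace_planeMatrix (hij : i ≠ j) (u v : K) : (planeMatrix i j u v).trace = 2 * u := by
  simp [planeMatrix, Matrix.trace_single_eq_of_ne, hij, hij.symm, two_mul]

theorem planeMatrix_mul (hij : i ≠ j) (u v u' v' : K) :
    planeMatrix i j u v * planeMatrix i j u' v' =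
      planeMatrix i j (u * u' - v * v') (u * v' + v * u') := by
  simp only [planeMatrix, add_mul, mul_add, sub_mul, mul_sub, smul_mul_assoc, mul_smul_comm,
    Matrix.single_mul_single_same, Matrix.single_mul_single_of_ne _ _ _ _ hij,
    Matrix.single_mul_single_of_ne _ _ _ _ hij.symm, mul_one]
  module

theorem planeMatrix_mul_planeRotation (hij : i ≠ j) (u v x y : K) :
    planeMatrix i j u v * planeRotation i j x y =
      planeMatrix i j (u * x - v * y) (u * y + v * x) := by
  rw [planeRotation, mul_one_add, planeMatrix_mul hij, planeMatrix_add]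
  congr 1 <;> ring

theorem planeRotation_mul_planeMatrix (hij : i ≠ j) (u v x y : K) :
    planeRotation i j x y * planeMatrix i j u v =
      planeMatrix i j (x * u - y * v) (x * v + y * u) := by
  rw [planeRotation, one_add_mul, planeMatrix_mul hij, planeMatrix_add]
  congr 1 <;> ring

theorem planeMatrix_mul_mul_planeMatrix (a : Matrix ι ι K) :
    planeMatrix i j 1 0 * a * planeMatrix i j 1 0 =
      Matrix.single i i (a i i) + Matrix.single i j (a i j) +
        (Matrix.single j i (a j i) + Matrix.single j j (a j j)) := by
  simp only [planeMatrix, one_smul, zero_smul, add_zero, add_mul, mul_add,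
    Matrix.single_mul_mul_single, one_mul, mul_one]
  abel

theorem commute_planeMatrix_of_commute_planeRotation (hij : i ≠ j) {x y : K}
    (hne : (x - 1) ^ 2 + y ^ 2 ≠ 0) {a : Matrix ι ι K} (h : Commute (planeRotation i j x y) a)
    {s : K} (ha : planeMatrix i j 1 0 * a * planeMatrix i j 1 0 = planeMatrix i j 0 s) :
    Commute (planeMatrix i j 1 0) a := by
  set P := planeMatrix i j (1 : K) 0 with hP
  set X := planeMatrix i j (x - 1) y with hX
  set Z := planeMatrix i j (x - 1) (-y) with hZ
  have haX : X * a = a * X := by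
    have heq := h.eq
    rwa [planeRotation, one_add_mul, mul_one_add, add_right_inj] at heq
  have hXP : X * P = X := by simp [hX, hP, planeMatrix_mul hij]
  have hPX : P * X = X := by simp [hX, hP, planeMatrix_mul hij]
  have hZP : Z * P = Z := by simp [hZ, hP, planeMatrix_mul hij]
  have hPZ : P * Z = Z := by simp [hZ, hP, planeMatrix_mul hij]
  have hXZ : X * Z = ((x - 1) ^ 2 + y ^ 2) • P := by
    rw [planeMatrix_mul hij, smul_planeMatrix]
    congr 1 <;> ring
  have hZX : Z * X = ((x - 1) ^ 2 + y ^ 2) • P := by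
    rw [planeMatrix_mul hij, smul_planeMatrix]
    congr 1 <;> ring
  refine smul_right_injective _ hne ?_
  change ((x - 1) ^ 2 + y ^ 2) • (P * a) = ((x - 1) ^ 2 + y ^ 2) • (a * P)
  calc ((x - 1) ^ 2 + y ^ 2) • (P * a) = Z * P * a * (P * X) := by
        rw [← smul_mul_assoc, ← hZX, hZP, hPX, mul_assoc, haX, mul_assoc]
    _ = Z * (P * a * P) * X := by noncomm_ring
    _ = X * (P * a * P) * Z := by
        rw [ha, planeMatrix_mul hij, planeMatrix_mul hij, planeMatrix_mul hij, planeMatrix_mul hij]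
        congr 1 <;> ring
    _ = X * P * a * (P * Z) := by noncomm_ring
    _ = ((x - 1) ^ 2 + y ^ 2) • (a * P) := by
        rw [hXP, hPZ, ← mul_smul_comm, ← hXZ, haX, mul_assoc]

end PlaneRotation

section PlaneSymmetry

variable {K : Type*} [Field K] {ι : Type*} [DecidableEq ι] {i j : ι}

/-- The orthogonal projection onto the line spanned by `e i + ε • e j`, where `ε = ±1`. -/
def diagonalProjection (i j : ι) (ε : K) : Matrix ι ι K :=
  (2 : K)⁻¹ • (planeMatrix i j 1 0 + ε • (Matrix.single i j 1 + Matrix.single j i 1))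

theorem diagonalProjection_one_add_neg_one (h2 : (2 : K) ≠ 0) (i j : ι) :
    diagonalProjection i j (1 : K) + diagonalProjection i j (-1) = planeMatrix i j 1 0 := by
  have hhalf : (2 : K)⁻¹ + 2⁻¹ = 1 := by rw [← two_mul, mul_inv_cancel₀ h2]
  calc _ = ((2 : K)⁻¹ + 2⁻¹) • planeMatrix i j (1 : K) 0 := by
        rw [diagonalProjection, diagonalProjection]
        module
    _ = _ := by rw [hhalf, one_smul]

variable [Fintype ι]

theorem trace_diagonalProjection_mul (i j : ι) (ε : K) (a : Matrix ι ι K) :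
    (diagonalProjection i j ε * a).trace = 2⁻¹ * (a i i + a j j + ε * (a j i + a i j)) := by
  simp only [diagonalProjection, planeMatrix, smul_add, one_smul, zero_smul, add_zero, smul_single,
    smul_eq_mul, mul_one, add_mul, trace_add, trace_single_mul]
  ring

theorem apply_eq_of_commute_diagonalProjection (hij : i ≠ j) (h2 : (2 : K) ≠ 0) {ε : K}
    (hε : ε * ε = 1) {a : Matrix ι ι K} (h : Commute (diagonalProjection i j ε) a) :
    a i i = a j j ∧ a i j = a j i := by
  have hS : (planeMatrix i j 1 0 + ε • (Matrix.single i j 1 + Matrix.single j i 1)) * a =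
      a * (planeMatrix i j 1 0 + ε • (Matrix.single i j 1 + Matrix.single j i 1)) := by
    have heq := h.eq
    rw [diagonalProjection, smul_mul_assoc, mul_smul_comm] at heq
    exact smul_right_injective _ (inv_ne_zero h2) heq
  have hii : ε * a j i = a i j * ε := by
    simpa [planeMatrix, add_mul, mul_add, hij, hij.symm] using congrFun (congrFun hS i) i
  have hij' : ε * a j j = a i i * ε := by
    simpa [planeMatrix, add_mul, mul_add, hij, hij.symm] using congrFun (congrFun hS i) j
  have hε0 : ε ≠ 0 := left_ne_zero_of_mul_eq_one hε
  exact ⟨mul_left_cancel₀ hε0 (by rw [hij', mul_comm]),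
    mul_left_cancel₀ hε0 (by rw [hii, mul_comm])⟩

theorem planeMatrix_mul_mul_planeMatrix_of_skew {a : Matrix ι ι K} (hi : a i i = 0) (hj : a j j = 0)
    (ho : a j i = -a i j) :
    planeMatrix i j 1 0 * a * planeMatrix i j 1 0 = planeMatrix i j 0 (a i j) := by
  rw [planeMatrix_mul_mul_planeMatrix, hi, hj, ho]
  simp [planeMatrix, sub_eq_add_neg, ← Matrix.single_neg]

theorem commute_planeMatrix_or_mul_mul_eq (hij : i ≠ j) (h2 : (2 : K) ≠ 0)
    {a : Matrix ι ι K} (hi : a i i = 0 ∨ Commute (Matrix.single i i (1 : K)) a)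
    (hj : a j j = 0 ∨ Commute (Matrix.single j j (1 : K)) a)
    (hε : ∀ ε : K, ε * ε = 1 →
      (diagonalProjection i j ε * a).trace = 0 ∨ Commute (diagonalProjection i j ε) a) :
    Commute (planeMatrix i j (1 : K) 0) a ∨
      planeMatrix i j 1 0 * a * planeMatrix i j 1 0 = planeMatrix i j 0 (a i j) := by
  by_cases hdiag : a i i = 0 ∨ a j j = 0
  swap
  · rw [not_or] at hdiag
    refine .inl ?_
    rw [planeMatrix, one_smul, zero_smul, add_zero]
    exact ((hi.resolve_left hdiag.1).add_left (hj.resolve_left hdiag.2))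
  have htr (ε : K) (h : (diagonalProjection i j ε * a).trace = 0) :
      a i i + a j j + ε * (a j i + a i j) = 0 := by
    simpa [trace_diagonalProjection_mul, h2] using h
  have hskew (hd : a i i + a j j = 0) (ho : a j i + a i j = 0) :
      planeMatrix i j 1 0 * a * planeMatrix i j 1 0 = planeMatrix i j 0 (a i j) := by
    have hii : a i i = 0 := hdiag.elim id fun h => by rwa [h, add_zero] at hd
    exact planeMatrix_mul_mul_planeMatrix_of_skew hii (by rwa [hii, zero_add] at hd)
      (eq_neg_of_add_eq_zero_left ho)
  have hmixed {ε δ : K} (hε : ε * ε = 1) (h : (diagonalProjection i j ε * a).trace = 0)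
      (h' : Commute (diagonalProjection i j δ) a) (hδ : δ * δ = 1) :
      planeMatrix i j 1 0 * a * planeMatrix i j 1 0 = planeMatrix i j 0 (a i j) := by
    have hd := (apply_eq_of_commute_diagonalProjection hij h2 hδ h').1
    have hd0 : a i i + a j j = 0 := by
      rcases hdiag with h0 | h0 <;> simp [h0, hd, hd ▸ h0]
    refine hskew hd0 ?_
    have h := htr ε h
    rw [hd0, zero_add] at h
    exact (mul_eq_zero.mp h).resolve_left (left_ne_zero_of_mul_eq_one hε)
  have hone : (1 : K) * 1 = 1 := one_mul 1
  have hneg : (-1 : K) * -1 = 1 := by ring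
  rcases hε 1 hone with hplus | hplus <;> rcases hε (-1) hneg with hminus | hminus
  · have hp := htr _ hplus
    have hm := htr _ hminus
    refine .inr (hskew (mul_left_cancel₀ h2 ?_) (mul_left_cancel₀ h2 ?_))
    · linear_combination hp + hm
    · linear_combination hp - hm
  · exact .inr (hmixed hone hplus hminus hneg)
  · exact .inr (hmixed hneg hminus hplus hone)
  · exact .inl (diagonalProjection_one_add_neg_one h2 i j ▸ hplus.add_left hminus)

theorem reflection_left_mul_planeRotation (hij : i ≠ j) (h2 : (2 : K) ≠ 0) :
    (1 - (2 : K) • Matrix.single i i (1 : K)) * planeRotation i j 0 1 =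
      1 - (2 : K) • diagonalProjection i j 1 := by
  rw [diagonalProjection, smul_inv_smul₀ h2, planeRotation]
  simp only [planeMatrix, zero_sub, smul_add, neg_smul, one_smul, mul_add, mul_one, mul_neg,
    sub_mul, one_mul, Algebra.smul_mul_assoc, single_mul_single_same, neg_sub, ne_eq, hij,
    not_false_eq_true, single_mul_single_of_ne, smul_zero, sub_zero, mul_sub, zero_smul, add_zero]
  module

theorem reflection_right_mul_planeRotation (hij : i ≠ j) (h2 : (2 : K) ≠ 0) :
    (1 - (2 : K) • Matrix.single j j (1 : K)) * planeRotation i j 0 1 =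
      1 - (2 : K) • diagonalProjection i j (-1) := by
  rw [diagonalProjection, smul_inv_smul₀ h2, planeRotation]
  simp only [planeMatrix, zero_sub, smul_add, neg_smul, one_smul, mul_add, mul_one, mul_neg,
    sub_mul, one_mul, Algebra.smul_mul_assoc, ne_eq, hij.symm, not_false_eq_true,
    single_mul_single_of_ne, smul_zero, sub_zero, single_mul_single_same, neg_sub, mul_sub,
    zero_smul, add_zero]
  module

variable [StarRing K]

theorem lineProjection_single_add_single (hij : i ≠ j) {ε : K} (hε : ε * ε = 1)
    (hstar : star ε = ε) :
    lineProjection (Pi.single i (1 : K) + Pi.single j ε) = diagonalProjection i j ε := by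
  have hnorm : star (Pi.single i (1 : K) + Pi.single j ε : ι → K) ⬝ᵥ
      (Pi.single i 1 + Pi.single j ε) = 2 := by
    simp [hij, hij.symm, hstar, hε, one_add_one_eq_two]
  rw [lineProjection, hnorm, diagonalProjection, planeMatrix]
  have hvec (k l : ι) (s t : K) :
      vecMulVec (Pi.single k s) (Pi.single l t) = Matrix.single k l (s * t) := by
    ext k' l'
    simp only [vecMulVec_apply, Pi.single_apply, eq_comm, mul_ite, ite_mul, zero_mul, mul_zero,
      single_apply, ite_and]
    split_ifs <;> rfl
  simp only [star_add, Pi.star_single, star_one, hstar, vecMulVec_add, add_vecMulVec, hvec,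
    mul_one, one_mul, hε, smul_add, smul_single, smul_eq_mul, one_smul, zero_smul, add_zero]
  abel

end PlaneSymmetry

section RotationDimensionFour

variable {K : Type*} [Field K] {ι : Type*} [Fintype ι] [DecidableEq ι]

omit [DecidableEq ι] in
theorem mul_eq_smul_mul_of_mul_eq {P M N a b : Matrix ι ι K} {c : K} (h : a * b = c • (b * a))
    (ha : a * P = M) (hb : b * P = N) (hM : P * M = M) (hN : P * N = N) :
    M * N = c • (N * M) := by
  calc M * N = a * b * P := by rw [← ha, mul_assoc, hN, ← hb, mul_assoc]
    _ = c • (N * M) := by rw [h, smul_mul_assoc, mul_assoc, ha, ← hb, mul_assoc b P, hM]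

variable [StarRing K] {G A : Subgroup (Matrix.unitaryGroup ι K)} {i j : ι}

theorem coe_commutator_of_coe_eq_one_add {g : Matrix.unitaryGroup ι K} {X Y : Matrix ι ι K}
    (hX : (g : Matrix ι ι K) = 1 + X) (hY : star (g : Matrix ι ι K) = 1 + Y)
    (a : Matrix.unitaryGroup ι K) :
    ((⁅g, a⁆ : Matrix.unitaryGroup ι K) : Matrix ι ι K) =
      1 + X + a * Y * star (a : Matrix ι ι K) + X * a * Y * star (a : Matrix ι ι K) := by
  rw [commutatorElement_def]
  simp only [Matrix.UnitaryGroup.mul_val, Matrix.UnitaryGroup.inv_val]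
  rw [hY, hX]
  calc (1 + X) * a * (1 + Y) * star (a : Matrix ι ι K) =
        (1 + X) * (a * star (a : Matrix ι ι K)) + a * Y * star (a : Matrix ι ι K) +
          X * a * Y * star (a : Matrix ι ι K) := by noncomm_ring
    _ = _ := by rw [Matrix.mem_unitaryGroup_iff.mp a.2, mul_one]

theorem trace_planeMatrix_mul_mul_mul_star (hij : i ≠ j) (u v u' v' : K) {b : Matrix ι ι K} {s : K}
    (hb : planeMatrix i j (1 : K) 0 * b * planeMatrix i j (1 : K) 0 = planeMatrix i j 0 s) :
    (planeMatrix i j u v * b * planeMatrix i j u' v' * star b).trace =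
      2 * (u * u' - v * v') * (s * star s) := by
  set P := planeMatrix i j (1 : K) 0 with hP
  have hstar : P * star b * P = planeMatrix i j 0 (-star s) := by
    have h := congrArg star hb
    simpa [hP, star_planeMatrix, mul_assoc] using h
  have hPmul (u v : K) : P * planeMatrix i j u v = planeMatrix i j u v := by
    simp [hP, planeMatrix_mul hij]
  have hmulP (u v : K) : planeMatrix i j u v * P = planeMatrix i j u v := by
    simp [hP, planeMatrix_mul hij]
  calc (planeMatrix i j u v * b * planeMatrix i j u' v' * star b).trace =
        (planeMatrix i j u v * (P * b * P) * planeMatrix i j u' v' * star b).trace := by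
        rw [mul_assoc P, ← mul_assoc (planeMatrix i j u v) P, hmulP, mul_assoc _ (b * P),
          mul_assoc b P, hPmul, ← mul_assoc]
    _ = (planeMatrix i j u v * planeMatrix i j 0 s * planeMatrix i j u' v' *
          (P * star b * P)).trace := by
        rw [hb, ← mul_assoc _ (P * star b) P, Matrix.trace_mul_comm _ P]
        simp only [planeMatrix_mul hij, ← mul_assoc, hPmul, hmulP]
    _ = 2 * (u * u' - v * v') * (s * star s) := by
        rw [hstar]
        simp only [planeMatrix_mul hij, trace_planeMatrix hij]
        ring

theorem trace_commutator_of_coe_eq_planeRotation (hij : i ≠ j) {x y : K} (hx : star x = -x)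
    (hy : star y = -y) (hxy : x * x + y * y = -1) {g a : Matrix.unitaryGroup ι K}
    (hg : (g : Matrix ι ι K) = planeRotation i j x y) {s : K}
    (ha : planeMatrix i j (1 : K) 0 * a * planeMatrix i j (1 : K) 0 = planeMatrix i j 0 s) :
    ((⁅g, a⁆ : Matrix.unitaryGroup ι K) : Matrix ι ι K).trace =
      Fintype.card ι - 4 + 4 * (s * star s) := by
  have hstar : star (g : Matrix ι ι K) = 1 + planeMatrix i j (-x - 1) y := by
    rw [hg, star_planeRotation, hx, hy, neg_neg, planeRotation]
  rw [coe_commutator_of_coe_eq_one_add hg hstar, Matrix.trace_add, Matrix.trace_add,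
    Matrix.trace_add, Matrix.trace_one, Matrix.trace_mul_cycle,
    trace_planeMatrix_mul_mul_mul_star hij _ _ _ _ ha, Matrix.mem_unitaryGroup_iff'.mp a.2, one_mul,
    trace_planeMatrix hij, trace_planeMatrix hij]
  linear_combination (-2 * (s * star s)) * hxy

theorem commutator_mul_of_mul_star_mul_eq_zero {g d : Matrix.unitaryGroup ι K} {P : Matrix ι ι K}
    (hg : star (g : Matrix ι ι K) - 1 = (star (g : Matrix ι ι K) - 1) * P)
    (hd : P * star (d : Matrix ι ι K) * P = 0) :
    (⁅g, d⁆ : Matrix.unitaryGroup ι K) * P = (g : Matrix ι ι K) * P := by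
  rw [commutatorElement_def]
  simp only [Matrix.UnitaryGroup.mul_val, Matrix.UnitaryGroup.inv_val]
  calc (g * d * star (g : Matrix ι ι K) * star (d : Matrix ι ι K) * P : Matrix ι ι K) =
        g * (d * star (d : Matrix ι ι K)) * P +
          g * d * ((star (g : Matrix ι ι K) - 1) * star (d : Matrix ι ι K) * P) := by noncomm_ring
    _ = _ := by
        rw [hg, mul_assoc _ P, mul_assoc _ (P * _), hd, Matrix.mem_unitaryGroup_iff.mp d.2]
        simp

theorem commutator_mul_eq_self {g a : Matrix.unitaryGroup ι K} {Q : Matrix ι ι K}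
    (hg : (g : Matrix ι ι K) * Q = Q) (ha : Commute Q (a : Matrix ι ι K)) :
    (⁅g, a⁆ : Matrix.unitaryGroup ι K) * Q = Q := by
  have hg' : star (g : Matrix ι ι K) * Q = Q := by
    rw [← hg, ← mul_assoc, Matrix.mem_unitaryGroup_iff'.mp g.2, one_mul, hg]
  have hQa : (a : Matrix ι ι K) * Q * star (a : Matrix ι ι K) = Q := by
    rw [← ha.eq, mul_assoc, Matrix.mem_unitaryGroup_iff.mp a.2, mul_one]
  have ha' : star (a : Matrix ι ι K) * Q = Q * star (a : Matrix ι ι K) := by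
    rw [← hQa, ← mul_assoc, ← mul_assoc, Matrix.mem_unitaryGroup_iff'.mp a.2, one_mul, hQa]
  rw [commutatorElement_def]
  simp only [Matrix.UnitaryGroup.mul_val, Matrix.UnitaryGroup.inv_val]
  rw [mul_assoc _ _ Q, ha', ← mul_assoc, mul_assoc _ _ Q, hg', mul_assoc _ _ Q, mul_assoc, hQa, hg]

omit [StarRing K] in
theorem eq_one_of_planeRotation_mul_eq_smul_mul (hij : i ≠ j) {x y s c : K} (hx : x ≠ 0)
    (hs : s ≠ 0) {a : Matrix ι ι K}
    (has : planeMatrix i j (1 : K) 0 * a * planeMatrix i j (1 : K) 0 = planeMatrix i j 0 s)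
    (hc : planeRotation i j x y * a = c • (a * planeRotation i j x y)) : c = 1 := by
  set P := planeMatrix i j (1 : K) 0 with hP
  set g := planeRotation i j x y
  have hPg : P * g = planeMatrix i j x y * P := by
    simp [hP, g, planeMatrix_mul hij, planeMatrix_mul_planeRotation hij]
  have hgP : g * P = P * planeMatrix i j x y := by
    simp [hP, g, planeMatrix_mul hij, planeRotation_mul_planeMatrix hij]
  have hplane : planeMatrix i j x y * planeMatrix i j 0 s =
      c • (planeMatrix i j 0 s * planeMatrix i j x y) := by
    calc planeMatrix i j x y * planeMatrix i j 0 s = P * (g * a) * P := by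
          rw [← has, ← mul_assoc P, hPg]
          simp only [mul_assoc]
      _ = c • (P * (a * (g * P))) := by
          rw [hc, mul_smul_comm, smul_mul_assoc]
          simp only [mul_assoc]
      _ = _ := by
          rw [hgP, ← has]
          simp only [mul_assoc]
  rw [planeMatrix_mul hij, planeMatrix_mul hij, smul_planeMatrix] at hplane
  have hentry := congrFun (congrFun hplane i) j
  rw [(planeMatrix_apply hij _ _).2, (planeMatrix_apply hij _ _).2] at hentry
  have hcxs : (c - 1) * (x * s) = 0 := by linear_combination -hentry
  simpa [hx, hs, sub_eq_zero] using hcxs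

namespace IsScalarClassTwo

theorem commute_planeMatrix_or_mul_mul_eq (hA : IsScalarClassTwo G A) (h2 : (2 : K) ≠ 0)
    (hι : Fintype.card ι = 4) (hij : i ≠ j) (hi : coordUnitary i (-1) ∈ G)
    (hj : coordUnitary j (-1) ∈ G) {g : Matrix.unitaryGroup ι K} (hgG : g ∈ G)
    (hg : (g : Matrix ι ι K) = planeRotation i j 0 1) {a : Matrix.unitaryGroup ι K} (ha : a ∈ A) :
    Commute (planeMatrix i j (1 : K) 0) (a : Matrix ι ι K) ∨
      planeMatrix i j (1 : K) 0 * a * planeMatrix i j (1 : K) 0 =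
        planeMatrix i j 0 ((a : Matrix ι ι K) i j) := by
  have hcoord {k : ι} (hk : coordUnitary k (-1) ∈ G) :
      (a : Matrix ι ι K) k k = 0 ∨ Commute (Matrix.single k k (1 : K)) (a : Matrix ι ι K) := by
    have h := hA.trace_lineProjection_mul_eq_zero_or_commute h2 hι (by simp) hk
      (coe_coordUnitary_neg_one k) ha
    rwa [lineProjection_single, Matrix.trace_single_mul, one_smul] at h
  refine _root_.commute_planeMatrix_or_mul_mul_eq hij h2 (hcoord hi) (hcoord hj) ?_
  intro ε hε
  have hε' : ε = 1 ∨ ε = -1 := mul_self_eq_one_iff.mp hε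
  have hstar : star ε = ε := by rcases hε' with rfl | rfl <;> simp
  have hv : star (Pi.single i (1 : K) + Pi.single j ε : ι → K) ⬝ᵥ
      (Pi.single i 1 + Pi.single j ε) ≠ 0 := by
    simp [hij, hij.symm, hstar, hε, one_add_one_eq_two, h2]
  obtain ⟨r, hr, hrε⟩ : ∃ r : Matrix.unitaryGroup ι K, r ∈ G ∧
      (r : Matrix ι ι K) = 1 - (2 : K) • diagonalProjection i j ε := by
    rcases hε' with rfl | rfl
    · exact ⟨_, G.mul_mem hi hgG, by
        rw [Matrix.UnitaryGroup.mul_val, hg, coe_coordUnitary_neg_one, lineProjection_single,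
          reflection_left_mul_planeRotation hij h2]⟩
    · exact ⟨_, G.mul_mem hj hgG, by
        rw [Matrix.UnitaryGroup.mul_val, hg, coe_coordUnitary_neg_one, lineProjection_single,
          reflection_right_mul_planeRotation hij h2]⟩
  rw [← lineProjection_single_add_single hij hε hstar] at hrε ⊢
  exact hA.trace_lineProjection_mul_eq_zero_or_commute h2 hι hv hr hrε ha

theorem planeMatrix_mul_mul_eq_zero_or_commute (hA : IsScalarClassTwo G A) (h2 : (2 : K) ≠ 0)
    (hι : Fintype.card ι = 4) (hij : i ≠ j) {x y : K} (hx : star x = -x) (hy : star y = -y)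
    (hxy : x * x + y * y = -1) (hx0 : x ≠ 0) {g : Matrix.unitaryGroup ι K} (hgG : g ∈ G)
    (hg : (g : Matrix ι ι K) = planeRotation i j x y) {a : Matrix.unitaryGroup ι K} (ha : a ∈ A)
    {s : K}
    (has : planeMatrix i j (1 : K) 0 * a * planeMatrix i j (1 : K) 0 = planeMatrix i j 0 s) :
    planeMatrix i j (1 : K) 0 * a * planeMatrix i j (1 : K) 0 = 0 ∨
      Commute (planeMatrix i j (1 : K) 0) (a : Matrix ι ι K) := by
  rw [or_iff_not_imp_left]
  intro hne
  have hs : s ≠ 0 := fun h => hne (by rw [has, h, planeMatrix_eq_zero])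
  have htr : ((⁅g, a⁆ : Matrix.unitaryGroup ι K) : Matrix ι ι K).trace ≠ 0 := by
    rw [trace_commutator_of_coe_eq_planeRotation hij hx hy hxy hg has, hι]
    have h4 : (4 : K) * (s * star s) = 2 * 2 * (s * star s) := by ring
    push_cast
    rw [sub_self, zero_add, h4]
    simp [h2, hs]
  have hscalar : ⁅g, a⁆ ∈ scalarUnitary ι K := by
    by_contra h
    exact htr (hA.trace_eq_zero (hA.commutator_mem_of_mem hgG ha) h)
  obtain ⟨c, hc⟩ := _root_.exists_mul_eq_smul_mul hscalar
  have hc1 : c = 1 := eq_one_of_planeRotation_mul_eq_smul_mul hij hx0 hs has (hg ▸ hc)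
  rw [hc1, one_smul, hg] at hc
  refine commute_planeMatrix_of_commute_planeRotation hij ?_ hc has
  intro h
  have h2x : 2 * x = 0 := by linear_combination hxy - h
  simp [h2, hx0] at h2x

theorem planeMatrix_mul_mul_ne_zero (hA : IsScalarClassTwo G A) (h2 : (2 : K) ≠ 0)
    (hij : i ≠ j) (hi : coordUnitary i (-1) ∈ G) {x y : K} (hx0 : x ≠ 0) (hy0 : y ≠ 0)
    {g : Matrix.unitaryGroup ι K} (hgG : g ∈ G)
    (hg : (g : Matrix ι ι K) = planeRotation i j x y) {d : Matrix.unitaryGroup ι K} (hd : d ∈ A) :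
    planeMatrix i j (1 : K) 0 * d * planeMatrix i j (1 : K) 0 ≠ 0 := by
  intro hzero
  set P := planeMatrix i j (1 : K) 0 with hP
  set r : Matrix.unitaryGroup ι K := coordUnitary i (-1)
  set N : Matrix ι ι K := Matrix.single j j 1 - Matrix.single i i 1 with hN
  have hr : (r : Matrix ι ι K) = 1 - (2 : K) • Matrix.single i i (1 : K) := by
    rw [coe_coordUnitary_neg_one, lineProjection_single]
  have hstar : P * star (d : Matrix ι ι K) * P = 0 := by
    have h := congrArg star hzero
    simpa [hP, star_planeMatrix, mul_assoc] using h
  have hgP : (⁅g, d⁆ : Matrix.unitaryGroup ι K) * P = planeMatrix i j x y := by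
    rw [commutator_mul_of_mul_star_mul_eq_zero _ hstar]
    · simp [hg, hP, planeRotation_mul_planeMatrix hij]
    · rw [hg, star_planeRotation, planeRotation, add_sub_cancel_left, hP, planeMatrix_mul hij]
      simp
  have hrP : (⁅r, d⁆ : Matrix.unitaryGroup ι K) * P = N := by
    rw [commutator_mul_of_mul_star_mul_eq_zero _ hstar]
    · rw [hr, hP, hN]
      simp only [planeMatrix, smul_add, one_smul, zero_smul, add_zero, mul_add, sub_mul, one_mul,
        Algebra.smul_mul_assoc, single_mul_single_same, mul_one, ne_eq, hij, not_false_eq_true,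
        single_mul_single_of_ne, smul_zero, sub_zero]
      module
    · rw [hr, hP]
      simp [planeMatrix, mul_add, hij, Matrix.star_eq_conjTranspose, -Matrix.smul_single]
  obtain ⟨ν, hν⟩ := _root_.exists_mul_eq_smul_mul (hA.commutator_mem _
    (hA.commutator_mem_of_mem hgG hd) _ (hA.commutator_mem_of_mem hi hd))
  have hplane : planeMatrix i j x y * N = ν • (N * planeMatrix i j x y) :=
    mul_eq_smul_mul_of_mul_eq hν hgP hrP (by simp [hP, planeMatrix_mul hij])
      (by simp [hP, hN, planeMatrix, mul_sub, add_mul, hij, hij.symm])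
  have hii : x = ν * x := by
    simpa [planeMatrix, hN, mul_sub, sub_mul, add_mul, mul_add, hij, hij.symm] using
      congrFun (congrFun hplane i) i
  have hij' : y = -(ν * y) := by
    simpa [planeMatrix, hN, mul_sub, sub_mul, add_mul, mul_add, hij, hij.symm] using
      congrFun (congrFun hplane i) j
  have hν1 : ν = 1 := mul_right_cancel₀ hx0 (by rw [one_mul, ← hii])
  rw [hν1, one_mul, eq_neg_iff_add_eq_zero, ← two_mul] at hij'
  exact mul_ne_zero h2 hy0 hij'

theorem eq_one_of_mul_eq_self (hA : IsScalarClassTwo G A) {Q : Matrix ι ι K} (hQ0 : Q ≠ 0)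
    (hQ : ∀ a ∈ A, Commute Q (a : Matrix ι ι K)) {b : Matrix.unitaryGroup ι K} (hb : b ∈ A)
    (hbQ : (b : Matrix ι ι K) * Q = Q) : b = 1 := by
  have hscalar : b ∈ scalarUnitary ι K := by
    by_contra hns
    obtain ⟨d, hd, ν, hν, hbd⟩ := hA.exists_mul_eq_smul_mul hb hns
    have hdQ : (d : Matrix ι ι K) * Q = ν • ((d : Matrix ι ι K) * Q) := by
      calc (d : Matrix ι ι K) * Q = b * d * Q := by
            rw [mul_assoc, ← (hQ d hd).eq, ← mul_assoc, hbQ]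
        _ = ν • ((d : Matrix ι ι K) * Q) := by rw [hbd, smul_mul_assoc, mul_assoc, hbQ]
    have hdQ0 : (1 - ν) • ((d : Matrix ι ι K) * Q) = 0 := by
      rw [sub_smul, one_smul, ← hdQ, sub_self]
    have hdQ0' := (smul_eq_zero.mp hdQ0).resolve_left (sub_ne_zero.mpr hν.symm)
    refine hQ0 ?_
    rw [← one_mul Q, ← Matrix.mem_unitaryGroup_iff'.mp d.2, mul_assoc, hdQ0', mul_zero]
  obtain ⟨c, hc⟩ := hscalar
  have hcQ : (c - 1) • Q = 0 := by
    rw [hc, smul_one_mul] at hbQ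
    rw [sub_smul, one_smul, hbQ, sub_self]
  have hc1 : c = 1 := sub_eq_zero.mp ((smul_eq_zero.mp hcQ).resolve_right hQ0)
  rw [← coe_eq_one_iff, hc, hc1, one_smul]

theorem exists_not_commute_planeMatrix (hA : IsScalarClassTwo G A) (h2 : (2 : K) ≠ 0)
    (hι : 2 < Fintype.card ι) (hi : coordUnitary i (-1) ∈ G) (hij : i ≠ j) :
    ∃ a ∈ A, ¬ Commute (planeMatrix i j (1 : K) 0) (a : Matrix ι ι K) := by
  by_contra! hcomm
  set Q : Matrix ι ι K := 1 - planeMatrix i j (1 : K) 0 with hQ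
  have hcommQ {a : Matrix.unitaryGroup ι K} (ha : a ∈ A) : Commute Q (a : Matrix ι ι K) :=
    (Commute.one_left _).sub_left (hcomm a ha)
  have hQ0 : Q ≠ 0 := by
    obtain ⟨k, hk⟩ : ∃ k, k ∉ ({i, j} : Finset ι) :=
      Finset.exists_mem_notMem_of_card_lt_card (s := {i, j}) (t := Finset.univ)
        (Finset.card_le_two.trans_lt hι) |>.imp fun _ h => h.2
    simp only [Finset.mem_insert, Finset.mem_singleton, not_or] at hk
    intro h
    have hentry := congrFun (congrFun h k) k
    simp [hQ, planeMatrix, Ne.symm hk.1, Ne.symm hk.2] at hentry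
  obtain ⟨a, ha, hra⟩ := hA.exists_not_commute_coordUnitary h2 i
  set r : Matrix.unitaryGroup ι K := coordUnitary i (-1) with hr
  have hrQ : (r : Matrix ι ι K) * Q = Q := by
    rw [hr, coe_coordUnitary_neg_one, lineProjection_single, hQ]
    simp only [planeMatrix, smul_add, one_smul, zero_smul, add_zero, mul_sub, mul_one, mul_add,
      sub_mul, one_mul, Algebra.smul_mul_assoc, single_mul_single_same, ne_eq, hij,
      not_false_eq_true, single_mul_single_of_ne, smul_zero, sub_zero]
    abel
  have hb := hA.eq_one_of_mul_eq_self hQ0 (fun a ha => hcommQ ha) (hA.commutator_mem_of_mem hi ha)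
    (commutator_mul_eq_self hrQ (hcommQ ha))
  exact hra (commutatorElement_eq_one_iff_commute.mp hb)

theorem card_ne_four_of_planeRotation_mem (hA : IsScalarClassTwo G A) (h2 : (2 : K) ≠ 0)
    (hij : i ≠ j) (hi : coordUnitary i (-1) ∈ G) (hj : coordUnitary j (-1) ∈ G)
    {r : Matrix.unitaryGroup ι K} (hrG : r ∈ G) (hr : (r : Matrix ι ι K) = planeRotation i j 0 1)
    {x y : K} (hx : star x = -x) (hy : star y = -y) (hxy : x * x + y * y = -1) (hx0 : x ≠ 0)
    (hy0 : y ≠ 0) {g : Matrix.unitaryGroup ι K} (hgG : g ∈ G)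
    (hg : (g : Matrix ι ι K) = planeRotation i j x y) : Fintype.card ι ≠ 4 := by
  intro hι
  obtain ⟨a, ha, hPa⟩ := hA.exists_not_commute_planeMatrix h2 (by omega) hi hij
  have hskew := (hA.commute_planeMatrix_or_mul_mul_eq h2 hι hij hi hj hrG hr ha).resolve_left hPa
  exact hA.planeMatrix_mul_mul_ne_zero h2 hij hi hx0 hy0 hgG hg ha
    ((hA.planeMatrix_mul_mul_eq_zero_or_commute h2 hι hij hx hy hxy hx0 hgG hg ha
      hskew).resolve_right hPa)

end IsScalarClassTwo

end RotationDimensionFour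

section ExtraSymmetry

variable {K : Type*} [Field K] [StarRing K] {ι : Type*} [Fintype ι] [DecidableEq ι]

/-- `G` contains enough unitary matrices acting only on one or two coordinates, one of which is `i`,
to rule out that `G` is primitive in dimension four: either a coordinate matrix of order four, or
two rotations of a coordinate plane. -/
def HasExtraSymmetry (G : Subgroup (Matrix.unitaryGroup ι K)) (i : ι) : Prop :=
  (∃ c : unitary K, (c : K) * c = -1 ∧ coordUnitary i c ∈ G) ∨
    ∃ j, i ≠ j ∧ ∃ x y : K, star x = -x ∧ star y = -y ∧ x * x + y * y = -1 ∧ x ≠ 0 ∧ y ≠ 0 ∧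
      (∃ g ∈ G, (g : Matrix ι ι K) = planeRotation i j 0 1) ∧
      ∃ g ∈ G, (g : Matrix ι ι K) = planeRotation i j x y

theorem IsPrimitiveReflectionGroup.card_le_two {G : Subgroup (Matrix.unitaryGroup ι K)}
    (hG : IsPrimitiveReflectionGroup G) (hsolv : Group.IsSolvable G) {i : ι}
    (hi : HasExtraSymmetry G i) : Fintype.card ι ≤ 2 := by
  by_contra! hι
  obtain ⟨A, hA⟩ := hG.exists_isScalarClassTwo hι hsolv
  have hle := hA.card_le_four hG
  have h3 := hA.card_ne_three hG
  have h4 : Fintype.card ι ≠ 4 := by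
    rcases hi with ⟨c, hc, hcG⟩ | ⟨j, hij, x, y, hx, hy, hxy, hx0, hy0, ⟨r, hrG, hr⟩, g, hgG, hg⟩
    · exact hA.card_ne_four_of_mul_self_eq_neg_one hG.two_ne_zero (hG.coordUnitary_neg_one_mem i)
        hc hcG
    · exact hA.card_ne_four_of_planeRotation_mem hG.two_ne_zero hij (hG.coordUnitary_neg_one_mem i)
        (hG.coordUnitary_neg_one_mem j) hrG hr hx hy hxy hx0 hy0 hgG hg
  omega

end ExtraSymmetry

section MaximalFamily

variable {K : Type*} [Field K] [StarRing K] {ι : Type*} [Fintype ι] [DecidableEq ι]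
variable {G : Subgroup (Matrix.unitaryGroup ι K)} {S T : Set (Matrix ι ι K)} {w w' : Matrix ι ι K}

theorem star_mul_conj_mul (g : Matrix.unitaryGroup ι K) (x : Matrix ι ι K) :
    star (g : Matrix ι ι K) * (g * x * star (g : Matrix ι ι K)) * g = x := by
  have hg := Matrix.mem_unitaryGroup_iff'.mp g.2
  calc _ = star (g : Matrix ι ι K) * g * x * (star (g : Matrix ι ι K) * g) := by noncomm_ring
    _ = x := by rw [hg, one_mul, mul_one]

theorem mul_star_mul_conj (g : Matrix.unitaryGroup ι K) (x : Matrix ι ι K) :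
    g * (star (g : Matrix ι ι K) * x * g) * star (g : Matrix ι ι K) = x := by
  simpa using star_mul_conj_mul g⁻¹ x

theorem conj_mul_conj (g : Matrix.unitaryGroup ι K) (x y : Matrix ι ι K) :
    (g * x * star (g : Matrix ι ι K)) * (g * y * star (g : Matrix ι ι K)) =
      g * (x * y) * star (g : Matrix ι ι K) :=
  (map_mul (Unitary.conjStarAlgAut K (Matrix ι ι K) g) x y).symm

theorem conj_eq_zero_iff (g : Matrix.unitaryGroup ι K) {x : Matrix ι ι K} :
    g * x * star (g : Matrix ι ι K) = 0 ↔ x = 0 :=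
  map_eq_zero_iff (Unitary.conjStarAlgAut K (Matrix ι ι K) g)
    (Unitary.conjStarAlgAut K (Matrix ι ι K) g).injective

theorem conj_eq_self_iff_commute (g : Matrix.unitaryGroup ι K) {x : Matrix ι ι K} :
    g * x * star (g : Matrix ι ι K) = x ↔ Commute (g : Matrix ι ι K) x := by
  refine ⟨fun h => ?_, fun h => ?_⟩
  · rw [Commute, SemiconjBy]
    conv_rhs => rw [← h]
    rw [mul_assoc, Matrix.mem_unitaryGroup_iff'.mp g.2, mul_one]
  · rw [h.eq, mul_assoc, Matrix.mem_unitaryGroup_iff.mp g.2, mul_one]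

namespace IsInvariantProjectionFamily

theorem empty (G : Subgroup (Matrix.unitaryGroup ι K)) : IsInvariantProjectionFamily G ∅ :=
  ⟨by simp, by simp, by simp⟩

theorem union (hS : IsInvariantProjectionFamily G S) (hT : IsInvariantProjectionFamily G T)
    (hST : ∀ s ∈ S, ∀ t ∈ T, Commute s t) : IsInvariantProjectionFamily G (S ∪ T) where
  isStarProjection t ht := ht.elim (hS.isStarProjection t) (hT.isStarProjection t)
  commute := by
    rintro s (hs | hs) t (ht | ht)
    · exact hS.commute s hs t ht
    · exact hST s hs t ht
    · exact (hST t ht s hs).symm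
    · exact hT.commute s hs t ht
  conj_mem g hg t ht := ht.imp (hS.conj_mem g hg t) (hT.conj_mem g hg t)

theorem star_conj_mem (hS : IsInvariantProjectionFamily G S) {g : Matrix.unitaryGroup ι K}
    (hg : g ∈ G) {t : Matrix ι ι K} (ht : t ∈ S) : (star (g : Matrix ι ι K) * t * g) ∈ S := by
  simpa using hS.conj_mem g⁻¹ (G.inv_mem hg) t ht

end IsInvariantProjectionFamily

/-- An invariant family of projections maximal under inclusion: the orthogonal decomposition of the
space that it encodes cannot be refined further. -/
def IsMaximalProjectionFamily (G : Subgroup (Matrix.unitaryGroup ι K))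
    (S : Set (Matrix ι ι K)) : Prop :=
  Maximal (IsInvariantProjectionFamily G) S

/-- A minimal nonzero projection of the family `S`, that is, the projection onto one summand of the
orthogonal decomposition encoded by `S`. -/
structure IsAtomOf (S : Set (Matrix ι ι K)) (w : Matrix ι ι K) : Prop where
  mem : w ∈ S
  ne_zero : w ≠ 0
  mul_eq : ∀ u ∈ S, u * w = 0 ∨ u * w = w

theorem exists_isMaximalProjectionFamily [Finite K] (G : Subgroup (Matrix.unitaryGroup ι K)) :
    ∃ S, IsMaximalProjectionFamily G S :=
  Set.Finite.exists_maximal (Set.toFinite {S | IsInvariantProjectionFamily G S})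
    ⟨∅, IsInvariantProjectionFamily.empty G⟩

namespace IsMaximalProjectionFamily

variable (hS : IsMaximalProjectionFamily G S)
include hS

theorem subset_of_commute (hT : IsInvariantProjectionFamily G T)
    (hST : ∀ s ∈ S, ∀ t ∈ T, Commute s t) : T ⊆ S :=
  Set.subset_union_right.trans (hS.le_of_ge (hS.prop.union hT hST) Set.subset_union_left)

theorem one_sub_mem (hw : w ∈ S) : 1 - w ∈ S := by
  refine hS.subset_of_commute (T := (1 - ·) '' S) ⟨?_, ?_, ?_⟩ ?_ ⟨w, hw, rfl⟩
  · rintro _ ⟨t, ht, rfl⟩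
    exact (hS.prop.isStarProjection t ht).one_sub
  · rintro _ ⟨t, ht, rfl⟩ _ ⟨u, hu, rfl⟩
    have htu := hS.prop.commute t ht u hu
    exact ((Commute.one_left _).sub_left ((Commute.one_right t).sub_right htu))
  · rintro g hg _ ⟨t, ht, rfl⟩
    exact ⟨_, hS.prop.conj_mem g hg t ht,
      by simp [mul_sub, sub_mul, Matrix.mem_unitaryGroup_iff.mp g.2]⟩
  · rintro s hs _ ⟨t, ht, rfl⟩
    exact (Commute.one_right s).sub_right (hS.prop.commute s hs t ht)

theorem mul_mem (hw : w ∈ S) (hw' : w' ∈ S) : w * w' ∈ S := by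
  refine hS.subset_of_commute (T := {x | ∃ s ∈ S, ∃ t ∈ S, x = s * t}) ⟨?_, ?_, ?_⟩ ?_
    ⟨w, hw, w', hw', rfl⟩
  · rintro _ ⟨s, hs, t, ht, rfl⟩
    exact (hS.prop.isStarProjection s hs).mul (hS.prop.isStarProjection t ht)
      (hS.prop.commute s hs t ht)
  · rintro _ ⟨s, hs, t, ht, rfl⟩ _ ⟨s', hs', t', ht', rfl⟩
    have hc := hS.prop.commute
    exact ((hc s hs s' hs').mul_right (hc s hs t' ht')).mul_left
      ((hc t ht s' hs').mul_right (hc t ht t' ht'))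
  · rintro g hg _ ⟨s, hs, t, ht, rfl⟩
    exact ⟨_, hS.prop.conj_mem g hg s hs, _, hS.prop.conj_mem g hg t ht, (conj_mul_conj g s t).symm⟩
  · rintro x hx _ ⟨s, hs, t, ht, rfl⟩
    exact (hS.prop.commute x hx s hs).mul_right (hS.prop.commute x hx t ht)

theorem zero_mem : 0 ∈ S :=
  hS.subset_of_commute (T := {0}) ⟨by simp, by simp, by simp⟩ (by simp) rfl

theorem sum_mem (F : Finset (Matrix ι ι K)) (hF : ∀ w ∈ F, w ∈ S)
    (horth : ∀ w ∈ F, ∀ w' ∈ F, w ≠ w' → w * w' = 0) : ∑ w ∈ F, w ∈ S := by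
  classical
  induction F using Finset.induction_on with
  | empty => exact hS.zero_mem
  | insert w F hwF ih =>
    simp only [Finset.mem_insert, forall_eq_or_imp] at hF horth
    have hmul : w * ∑ w' ∈ F, w' = 0 := by
      rw [Finset.mul_sum]
      exact Finset.sum_eq_zero fun w' hw' => horth.1.2 w' hw' (ne_of_mem_of_not_mem hw' hwF).symm
    have hadd : ∑ w' ∈ insert w F, w' = 1 - (1 - w) * (1 - ∑ w' ∈ F, w') := by
      simp only [Finset.sum_insert hwF, sub_mul, mul_sub, hmul, one_mul, mul_one]
      abel
    rw [hadd]
    exact hS.one_sub_mem (hS.mul_mem (hS.one_sub_mem hF.1)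
      (hS.one_sub_mem (ih hF.2 fun w hw w' hw' => (horth.2 w hw).2 w' hw')))

theorem exists_isAtomOf [Finite K] {x : Matrix ι ι K} (hx : x ∈ S) (hx0 : x ≠ 0) :
    ∃ w, IsAtomOf S w ∧ x * w = w := by
  obtain ⟨w, ⟨hwS, hw0, hxw⟩, hmin⟩ := Set.Finite.exists_minimalFor
    (fun w => {v ∈ S | v * w = v}) {w ∈ S | w ≠ 0 ∧ x * w = w} (Set.toFinite _)
    ⟨x, hx, hx0, (hS.prop.isStarProjection x hx).isIdempotentElem⟩
  have hww : w * w = w := (hS.prop.isStarProjection w hwS).isIdempotentElem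
  refine ⟨w, ⟨hwS, hw0, fun u hu => or_iff_not_imp_left.mpr fun huw => ?_⟩, hxw⟩
  have hcomm := (hS.prop.commute u hu w hwS).eq
  have hle := hmin (j := u * w) ⟨hS.mul_mem hu hwS, huw, by
      rw [← mul_assoc, (hS.prop.commute x hx u hu).eq, mul_assoc, hxw]⟩ fun v ⟨hvS, hv⟩ => ⟨hvS, by
      calc v * w = v * (u * w) * w := by rw [hv]
        _ = v * (u * (w * w)) := by noncomm_ring
        _ = v := by rw [hww, hv]⟩
  calc u * w = w * (u * w) := by rw [← mul_assoc, ← hcomm, mul_assoc, hww]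
    _ = w := (hle ⟨hwS, hww⟩).2

end IsMaximalProjectionFamily

namespace IsAtomOf

theorem isStarProjection (hS : IsInvariantProjectionFamily G S) (hw : IsAtomOf S w) :
    IsStarProjection w :=
  hS.isStarProjection w hw.mem

theorem mul_eq_zero_of_ne (hS : IsInvariantProjectionFamily G S) (hw : IsAtomOf S w)
    (hw' : IsAtomOf S w') (hne : w ≠ w') : w * w' = 0 := by
  refine (hw'.mul_eq w hw.mem).resolve_right fun h => hne ?_
  have hcomm := (hS.commute w hw.mem w' hw'.mem).eq
  have hw0 : w' * w ≠ 0 := fun h0 => hw'.ne_zero (by rw [← h, hcomm, h0])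
  rw [← (hw.mul_eq w' hw'.mem).resolve_left hw0, ← hcomm, h]

theorem conj (hS : IsInvariantProjectionFamily G S) (hw : IsAtomOf S w)
    {g : Matrix.unitaryGroup ι K} (hg : g ∈ G) :
    IsAtomOf S (g * w * star (g : Matrix ι ι K)) where
  mem := hS.conj_mem g hg w hw.mem
  ne_zero := (conj_eq_zero_iff g).not.mpr hw.ne_zero
  mul_eq u hu := by
    have h := hw.mul_eq _ (hS.star_conj_mem hg hu)
    rw [← mul_star_mul_conj g u, conj_mul_conj, conj_eq_zero_iff]
    exact h.imp_right fun h => by rw [h]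

theorem conj_eq_of_mul_mul_ne_zero (hS : IsInvariantProjectionFamily G S) (hw : IsAtomOf S w)
    (hw' : IsAtomOf S w') {g : Matrix.unitaryGroup ι K} (hg : g ∈ G)
    (h : w * g * w' ≠ 0) : w = g * w' * star (g : Matrix ι ι K) := by
  by_contra hne
  refine h ?_
  have hmul := hw.mul_eq_zero_of_ne hS (hw'.conj hS hg) hne
  calc w * g * w' = w * (g * w' * star (g : Matrix ι ι K)) * g := by
        simp [mul_assoc, Matrix.mem_unitaryGroup_iff'.mp g.2]
    _ = 0 := by rw [hmul, zero_mul]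

theorem sum_eq_one [Finite K] (hS : IsMaximalProjectionFamily G S) (A : Finset (Matrix ι ι K))
    (hA : ∀ w, w ∈ A ↔ IsAtomOf S w) : ∑ w ∈ A, w = 1 := by
  have horth : ∀ w ∈ A, ∀ w' ∈ A, w ≠ w' → w * w' = 0 := fun w hw w' hw' =>
    ((hA w).mp hw).mul_eq_zero_of_ne hS.prop ((hA w').mp hw')
  by_contra hne
  obtain ⟨w, hw, hsub⟩ := hS.exists_isAtomOf
    (hS.one_sub_mem (hS.sum_mem A (fun w hw => ((hA w).mp hw).mem) horth))
    (sub_ne_zero.mpr (Ne.symm hne))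
  refine hw.ne_zero ?_
  have hwA := (hA w).mpr hw
  have hsum : (∑ w' ∈ A, w') * w = w := by
    rw [Finset.sum_mul, Finset.sum_eq_single w (fun w' hw' h => horth w' hw' w hwA h)
      (fun h => (h hwA).elim), (hw.isStarProjection hS.prop).isIdempotentElem]
  rwa [sub_mul, hsum, one_mul, sub_self, eq_comm] at hsub

end IsAtomOf

end MaximalFamily

section BlockGroup

variable {K : Type*} [Field K] [StarRing K] {ι κ : Type*} [Fintype ι] [DecidableEq ι]
variable {G : Subgroup (Matrix.unitaryGroup ι K)} {S T : Set (Matrix ι ι K)} {w : Matrix ι ι K}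

section StabilizerInvariant

variable (hS : IsMaximalProjectionFamily G S) (hw : IsAtomOf S w)
  (hproj : ∀ t ∈ T, IsStarProjection t) (hle : ∀ t ∈ T, t * w = t)
include hS hw hproj hle

theorem IsMaximalProjectionFamily.commute_of_mul_atom_eq {s t : Matrix ι ι K} (hs : s ∈ S)
    (ht : t ∈ T) : Commute s t := by
  have hwt : w * t = t := by
    simpa [(hw.isStarProjection hS.prop).isSelfAdjoint.star_eq,
      (hproj t ht).isSelfAdjoint.star_eq] using congrArg star (hle t ht)
  have hsw := (hS.prop.commute s hs w hw.mem).eq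
  rw [Commute, SemiconjBy, ← hwt, ← mul_assoc, hwt]
  conv_rhs => rw [← hle t ht, mul_assoc, ← hsw]
  rcases hw.mul_eq s hs with h | h <;> simp [h, hle t ht, hwt]

theorem IsMaximalProjectionFamily.commute_conj
    (hcomm : ∀ t ∈ T, ∀ u ∈ T, Commute t u)
    (hconj : ∀ g ∈ G, Commute (g : Matrix ι ι K) w → ∀ t ∈ T,
      g * t * star (g : Matrix ι ι K) ∈ T)
    {g : Matrix.unitaryGroup ι K} (hg : g ∈ G) {t u : Matrix ι ι K} (ht : t ∈ T) (hu : u ∈ T) :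
    Commute t (g * u * star (g : Matrix ι ι K)) := by
  have hstar : ∀ t ∈ T, w * t = t := fun t ht => by
    simpa [(hw.isStarProjection hS.prop).isSelfAdjoint.star_eq,
      (hproj t ht).isSelfAdjoint.star_eq] using congrArg star (hle t ht)
  by_cases h : w * g * w = 0
  · have h' : w * star (g : Matrix ι ι K) * w = 0 := by
      simpa [(hw.isStarProjection hS.prop).isSelfAdjoint.star_eq, mul_assoc] using congrArg star h
    have hl : t * (g * u * star (g : Matrix ι ι K)) = 0 := by
      calc _ = t * (w * g * w) * u * star (g : Matrix ι ι K) := by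
            nth_rw 1 [← hle t ht, ← hstar u hu]; noncomm_ring
        _ = 0 := by rw [h, mul_zero, zero_mul, zero_mul]
    have hr : (g * u * star (g : Matrix ι ι K)) * t = 0 := by
      calc _ = g * u * (w * star (g : Matrix ι ι K) * w) * t := by
            nth_rw 1 [← hle u hu, ← hstar t ht]; noncomm_ring
        _ = 0 := by rw [h', mul_zero, zero_mul]
    rw [Commute, SemiconjBy, hl, hr]
  · have hgw := hw.conj_eq_of_mul_mul_ne_zero hS.prop hw hg h
    exact hcomm t ht _ (hconj g hg ((conj_eq_self_iff_commute g).mp hgw.symm) u hu)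

theorem IsAtomOf.eq_zero_or_eq (hcomm : ∀ t ∈ T, ∀ u ∈ T, Commute t u)
    (hconj : ∀ g ∈ G, Commute (g : Matrix ι ι K) w → ∀ t ∈ T,
      g * t * star (g : Matrix ι ι K) ∈ T) {t : Matrix ι ι K} (ht : t ∈ T) : t = 0 ∨ t = w := by
  have hconj_comm : ∀ (g : Matrix.unitaryGroup ι K) (x y : Matrix ι ι K), Commute x y →
      Commute (g * x * star (g : Matrix ι ι K)) (g * y * star (g : Matrix ι ι K)) :=
    fun g x y h => h.map (Unitary.conjStarAlgAut K (Matrix ι ι K) g)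
  have hsub : {x : Matrix ι ι K | ∃ g ∈ G, ∃ t ∈ T, x = g * t * star (g : Matrix ι ι K)} ⊆ S := by
    refine hS.subset_of_commute ⟨?_, ?_, ?_⟩ ?_
    · rintro _ ⟨g, -, t, ht, rfl⟩
      exact (hproj t ht).map (Unitary.conjStarAlgAut K (Matrix ι ι K) g)
    · rintro _ ⟨g, hg, t, ht, rfl⟩ _ ⟨h, hh, u, hu, rfl⟩
      obtain ⟨k, rfl⟩ : ∃ k, h = g * k := ⟨g⁻¹ * h, by group⟩
      have hk := (G.mul_mem_cancel_left hg).mp hh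
      simpa [mul_assoc] using
        hconj_comm g _ _ (hS.commute_conj hw hproj hle hcomm hconj hk ht hu)
    · rintro g hg _ ⟨h, hh, t, ht, rfl⟩
      exact ⟨g * h, G.mul_mem hg hh, t, ht, by simp [mul_assoc]⟩
    · rintro s hs _ ⟨g, hg, t, ht, rfl⟩
      have := hconj_comm g _ _ (hS.commute_of_mul_atom_eq hw hproj hle
        (hS.prop.star_conj_mem hg hs) ht)
      rwa [mul_star_mul_conj] at this
  have htS : t ∈ S := hsub ⟨1, G.one_mem, t, ht, by simp⟩
  rw [← hle t ht]
  exact hw.mul_eq t htS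

end StabilizerInvariant

section Compression

/-- The subgroup of the unitary matrices commuting with the matrix `w`. -/
def unitaryCentralizer (w : Matrix ι ι K) : Subgroup (Matrix.unitaryGroup ι K) where
  carrier := {g | Commute (g : Matrix ι ι K) w}
  one_mem' := Commute.one_left w
  mul_mem' hg hh := Commute.mul_left hg hh
  inv_mem' {g} hg := by
    have hg := (conj_eq_self_iff_commute g).mpr hg
    refine (conj_eq_self_iff_commute g⁻¹).mp ?_
    conv_lhs => rw [← hg]
    simpa using star_mul_conj_mul g w

variable [Fintype κ] [DecidableEq κ] {J : Matrix ι κ K}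

omit [DecidableEq ι] in
theorem mul_compression_mul (hJ : Jᴴ * J = 1) {g : Matrix ι ι K}
    (hg : Commute g (J * Jᴴ)) (h : Matrix ι ι K) :
    Jᴴ * g * J * (Jᴴ * h * J) = Jᴴ * (g * h) * J := by
  calc _ = Jᴴ * (g * (J * Jᴴ)) * h * J := by simp only [Matrix.mul_assoc]
    _ = Jᴴ * J * Jᴴ * (g * h) * J := by rw [hg.eq]; simp only [Matrix.mul_assoc]
    _ = _ := by rw [hJ, Matrix.one_mul]

/-- When the columns of `J` are orthonormal, the action of the unitary matrices preserving the span
of these columns on that span, written in the basis of these columns. -/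
def compression (hJ : Jᴴ * J = 1) : unitaryCentralizer (J * Jᴴ) →* Matrix.unitaryGroup κ K where
  toFun g := ⟨Jᴴ * ((g : Matrix.unitaryGroup ι K) : Matrix ι ι K) * J, by
    have hg := mul_compression_mul hJ g.2 (star ((g : Matrix.unitaryGroup ι K) : Matrix ι ι K))
    rw [Matrix.mem_unitaryGroup_iff.mp g.1.2, Matrix.mul_one, hJ] at hg
    rw [Matrix.mem_unitaryGroup_iff, ← hg]
    simp only [Matrix.star_eq_conjTranspose, Matrix.conjTranspose_mul,
      Matrix.conjTranspose_conjTranspose, Matrix.mul_assoc]⟩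
  map_one' := Subtype.ext (by simpa using hJ)
  map_mul' g h := Subtype.ext (mul_compression_mul hJ g.2 h).symm

/-- The group of unitary matrices induced on the span of the columns of `J` by the elements of `G`
which preserve it. -/
def blockGroup (G : Subgroup (Matrix.unitaryGroup ι K)) (hJ : Jᴴ * J = 1) :
    Subgroup (Matrix.unitaryGroup κ K) :=
  (G.subgroupOf (unitaryCentralizer (J * Jᴴ))).map (compression hJ)

theorem isSolvable_blockGroup (hJ : Jᴴ * J = 1) (hG : Group.IsSolvable G) :
    Group.IsSolvable (blockGroup G hJ) := by
  have : Group.IsSolvable (G.subgroupOf (unitaryCentralizer (J * Jᴴ))) :=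
    Group.isSolvable_of_isSolvable_injective
      (f := (unitaryCentralizer (J * Jᴴ)).subtype.subgroupComap G)
      fun _ _ h =>
        Subtype.ext (Subtype.ext (congrArg (fun g : G => (g : Matrix.unitaryGroup ι K)) h))
  exact Group.isSolvable_of_surjective
    ((compression hJ).subgroupMap_surjective (G.subgroupOf (unitaryCentralizer (J * Jᴴ))))

theorem exists_mem_blockGroup (hJ : Jᴴ * J = 1) {g : Matrix.unitaryGroup ι K} (hg : g ∈ G)
    {X : Matrix κ κ K} (hgX : (g : Matrix ι ι K) = 1 + J * X * Jᴴ) :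
    ∃ u ∈ blockGroup G hJ, (u : Matrix κ κ K) = 1 + X := by
  have hcomm : Commute (g : Matrix ι ι K) (J * Jᴴ) := by
    rw [hgX, Commute, SemiconjBy, Matrix.add_mul, Matrix.mul_add, Matrix.one_mul, Matrix.mul_one]
    congr 1
    calc J * X * Jᴴ * (J * Jᴴ) = J * X * (Jᴴ * J) * Jᴴ := by simp only [Matrix.mul_assoc]
      _ = J * (Jᴴ * J) * X * Jᴴ := by rw [hJ, Matrix.mul_one, Matrix.mul_one]
      _ = _ := by simp only [Matrix.mul_assoc]
  refine ⟨compression hJ ⟨g, hcomm⟩, ⟨⟨g, hcomm⟩, hg, rfl⟩, ?_⟩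
  calc Jᴴ * (g : Matrix ι ι K) * J = Jᴴ * J + Jᴴ * J * X * (Jᴴ * J) := by
        rw [hgX, Matrix.mul_add, Matrix.add_mul, Matrix.mul_one]; simp only [Matrix.mul_assoc]
    _ = 1 + X := by rw [hJ, Matrix.one_mul, Matrix.mul_one]

theorem exists_pow_eq_one_of_mem_blockGroup {hJ : Jᴴ * J = 1}
    (hG : ∀ g ∈ G, ∃ N : ℕ, (N : K) ≠ 0 ∧ g ^ N = 1) :
    ∀ u ∈ blockGroup G hJ, ∃ N : ℕ, (N : K) ≠ 0 ∧ u ^ N = 1 := by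
  rintro _ ⟨g, hg, rfl⟩
  obtain ⟨N, hN, hgN⟩ := hG g hg
  refine ⟨N, hN, ?_⟩
  rw [← map_pow, show g ^ N = 1 from Subtype.ext hgN, map_one]

theorem blockGroup_eq_zero_or_eq_one (hS : IsMaximalProjectionFamily G S) {hJ : Jᴴ * J = 1}
    (hw : IsAtomOf S (J * Jᴴ)) {T : Set (Matrix κ κ K)}
    (hT : IsInvariantProjectionFamily (blockGroup G hJ) T) {t : Matrix κ κ K} (ht : t ∈ T) :
    t = 0 ∨ t = 1 := by
  have hmul (s u : Matrix κ κ K) : J * s * Jᴴ * (J * u * Jᴴ) = J * (s * u) * Jᴴ := by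
    calc _ = J * s * (Jᴴ * J) * u * Jᴴ := by simp only [Matrix.mul_assoc]
      _ = _ := by rw [hJ, Matrix.mul_one, Matrix.mul_assoc J]
  have hcancel (s : Matrix κ κ K) : Jᴴ * (J * s * Jᴴ) * J = s := by
    calc _ = Jᴴ * J * s * (Jᴴ * J) := by simp only [Matrix.mul_assoc]
      _ = _ := by rw [hJ, Matrix.one_mul, Matrix.mul_one]
  have key : J * t * Jᴴ = 0 ∨ J * t * Jᴴ = J * Jᴴ := by
    refine hw.eq_zero_or_eq (T := (fun t => J * t * Jᴴ) '' T) hS ?_ ?_ ?_ ?_ ⟨t, ht, rfl⟩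
    · rintro _ ⟨s, hs, rfl⟩
      have hs := hT.isStarProjection s hs
      refine ⟨(hmul s s).trans (by rw [hs.isIdempotentElem]), ?_⟩
      have hsH : sᴴ = s := hs.isSelfAdjoint
      simp [IsSelfAdjoint, Matrix.star_eq_conjTranspose, Matrix.mul_assoc, hsH]
    · rintro _ ⟨s, -, rfl⟩
      simpa using hmul s 1
    · rintro _ ⟨s, hs, rfl⟩ _ ⟨u, hu, rfl⟩
      rw [Commute, SemiconjBy, hmul, hmul, (hT.commute s hs u hu).eq]
    · rintro g hg hgJ _ ⟨s, hs, rfl⟩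
      refine ⟨_, hT.conj_mem (compression hJ ⟨g, hgJ⟩) ⟨⟨g, hgJ⟩, hg, rfl⟩ s hs, ?_⟩
      obtain ⟨a, ha⟩ := g
      change J * (Jᴴ * a * J * s * (Jᴴ * a * J)ᴴ) * Jᴴ = a * (J * s * Jᴴ) * aᴴ
      calc _ = J * Jᴴ * a * (J * s * Jᴴ) * (J * Jᴴ * a)ᴴ := by simp [Matrix.mul_assoc]
        _ = a * (J * (Jᴴ * J) * s * (Jᴴ * J) * Jᴴ) * aᴴ := by
            rw [← hgJ.eq]
            simp [Matrix.mul_assoc]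
        _ = _ := by rw [hJ, Matrix.mul_one, Matrix.mul_one]
  rw [← hcancel t]
  rcases key with h | h
  · exact Or.inl (by rw [h, Matrix.mul_zero, Matrix.zero_mul])
  · exact Or.inr (by rw [h]; simpa using hcancel 1)

end Compression

end BlockGroup

section CoordinateBlock

variable {K : Type*} [Field K] [StarRing K] {ι : Type*} [Fintype ι] [DecidableEq ι]

/-- The matrix whose columns are the coordinate vectors with index in `p`. -/
def coordIsometry (K : Type*) [Field K] (p : ι → Prop) : Matrix ι {i // p i} K :=
  (1 : Matrix ι ι K).submatrix id Subtype.val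

variable {p : ι → Prop}

omit [Fintype ι] in
theorem conjTranspose_coordIsometry :
    (coordIsometry K p)ᴴ = (1 : Matrix ι ι K).submatrix Subtype.val id := by
  rw [coordIsometry, Matrix.conjTranspose_submatrix, Matrix.conjTranspose_one]

theorem conjTranspose_mul_coordIsometry : (coordIsometry K p)ᴴ * coordIsometry K p = 1 := by
  rw [conjTranspose_coordIsometry, coordIsometry,
    ← Matrix.submatrix_mul _ _ _ _ _ Function.bijective_id, Matrix.mul_one,
    Matrix.submatrix_one _ Subtype.val_injective]

variable [DecidablePred p]

theorem coordIsometry_mul_conjTranspose :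
    coordIsometry K p * (coordIsometry K p)ᴴ =
      Matrix.diagonal fun i => if p i then (1 : K) else 0 := by
  ext i j
  rw [conjTranspose_coordIsometry, coordIsometry, Matrix.mul_apply, Matrix.diagonal_apply]
  simp only [Matrix.submatrix_apply, id_eq, Matrix.one_apply, mul_ite, mul_one, mul_zero]
  by_cases hi : p i
  · rw [Finset.sum_eq_single ⟨i, hi⟩]
    · simp [hi]
    · rintro k - hk
      simp [show i ≠ k from fun h => hk (Subtype.ext h.symm)]
    · simp
  · rw [Finset.sum_eq_zero]
    · simp [hi]
    · rintro k -
      simp [show i ≠ k from fun h => hi (h ▸ k.2)]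

theorem coordIsometry_mul_single_mul (i j : {i // p i}) (c : K) :
    coordIsometry K p * Matrix.single i j c * (coordIsometry K p)ᴴ =
      Matrix.single (i : ι) (j : ι) c := by
  ext a b
  rw [Matrix.mul_apply, Finset.sum_eq_single j]
  · by_cases hb : b = j <;>
      simp [coordIsometry, Matrix.mul_apply, Matrix.single_apply, Matrix.one_apply, hb, eq_comm]
  · intro x _ hx
    simp [Matrix.mul_apply, hx.symm]
  · simp

theorem coordIsometry_mul_planeMatrix_mul (i j : {i // p i}) (u v : K) :
    coordIsometry K p * planeMatrix i j u v * (coordIsometry K p)ᴴ =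
      planeMatrix (i : ι) (j : ι) u v := by
  simp only [planeMatrix, Matrix.mul_add, Matrix.add_mul, Matrix.mul_sub, Matrix.sub_mul,
    Matrix.mul_smul, Matrix.smul_mul, coordIsometry_mul_single_mul]

variable {G : Subgroup (Matrix.unitaryGroup ι K)} {S : Set (Matrix ι ι K)}

theorem coordUnitary_mem_blockGroup (i : {i // p i}) {c : unitary K}
    (hc : coordUnitary (i : ι) c ∈ G) :
    coordUnitary i c ∈ blockGroup G (conjTranspose_mul_coordIsometry (p := p)) := by
  obtain ⟨u, hu, hval⟩ := exists_mem_blockGroup (conjTranspose_mul_coordIsometry (p := p)) hc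
    (X := ((c : K) - 1) • Matrix.single i i 1) (by
      rw [coe_coordUnitary, lineProjection_single, Matrix.mul_smul, Matrix.smul_mul,
        coordIsometry_mul_single_mul])
  rwa [show coordUnitary i c = u from Subtype.ext (by
    rw [coe_coordUnitary, lineProjection_single, hval])]

theorem exists_planeRotation_mem_blockGroup {i j : {i // p i}} {x y : K}
    (h : ∃ g ∈ G, (g : Matrix ι ι K) = planeRotation (i : ι) (j : ι) x y) :
    ∃ u ∈ blockGroup G (conjTranspose_mul_coordIsometry (p := p)),
      (u : Matrix {i // p i} {i // p i} K) = planeRotation i j x y := by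
  obtain ⟨g, hg, hval⟩ := h
  exact exists_mem_blockGroup _ hg (by rw [hval, planeRotation, coordIsometry_mul_planeMatrix_mul])

theorem isPrimitiveReflectionGroup_blockGroup (hS : IsMaximalProjectionFamily G S)
    (hG : IsReflectionGroup G)
    (hw : IsAtomOf S (coordIsometry K p * (coordIsometry K p)ᴴ)) :
    IsPrimitiveReflectionGroup (blockGroup G (conjTranspose_mul_coordIsometry (p := p))) where
  two_ne_zero := hG.two_ne_zero
  exists_pow_eq_one := exists_pow_eq_one_of_mem_blockGroup hG.exists_pow_eq_one
  coordUnitary_neg_one_mem i := coordUnitary_mem_blockGroup i (hG.coordUnitary_neg_one_mem i)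
  eq_zero_or_eq_one _ hT _ ht := blockGroup_eq_zero_or_eq_one hS hw hT ht

theorem IsAtomOf.mem_support_of_planeRotation_mem (hS : IsInvariantProjectionFamily G S)
    (hw : IsAtomOf S (Matrix.diagonal fun i => if p i then (1 : K) else 0)) {i j k : ι}
    (hij : i ≠ j) (hi : p i) (hk : p k) (hki : k ≠ i)
    (h : ∃ g ∈ G, (g : Matrix ι ι K) = planeRotation i j 0 1) : p j := by
  obtain ⟨g, hg, hval⟩ := h
  by_contra hj
  have hkj : k ≠ j := fun h => hj (h ▸ hk)
  have hcomm := (conj_eq_self_iff_commute g).mp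
    (hw.conj_eq_of_mul_mul_ne_zero hS hw hg fun h0 => by
      have hkk := congrFun (congrFun h0 k) k
      simp [hval, planeRotation, planeMatrix, hk, hki.symm, hkj.symm] at hkk).symm
  have hji := congrFun (congrFun hcomm.eq j) i
  simp [hval, planeRotation, planeMatrix, hi, hj, hij, hij.symm] at hji

theorem HasExtraSymmetry.blockGroup (hS : IsInvariantProjectionFamily G S)
    (hw : IsAtomOf S (Matrix.diagonal fun i => if p i then (1 : K) else 0)) {i k : {i // p i}}
    (hki : k ≠ i) (hi : HasExtraSymmetry G (i : ι)) :
    HasExtraSymmetry (blockGroup G (conjTranspose_mul_coordIsometry (p := p))) i := by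
  rcases hi with ⟨c, hc, hcG⟩ | ⟨j, hij, x, y, hx, hy, hxy, hx0, hy0, hr, hg⟩
  · exact Or.inl ⟨c, hc, coordUnitary_mem_blockGroup i hcG⟩
  · have hj : p j := hw.mem_support_of_planeRotation_mem hS hij i.2 k.2
      (fun h => hki (Subtype.ext h)) hr
    exact Or.inr ⟨⟨j, hj⟩, fun h => hij (congrArg Subtype.val h), x, y, hx, hy, hxy, hx0, hy0,
      exists_planeRotation_mem_blockGroup hr, exists_planeRotation_mem_blockGroup hg⟩

theorem IsAtomOf.card_support_le_two (hS : IsMaximalProjectionFamily G S)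
    (hG : IsReflectionGroup G) (hsolv : Group.IsSolvable G) {o : ι}
    (hext : ∀ i, i ≠ o → HasExtraSymmetry G i)
    (hw : IsAtomOf S (Matrix.diagonal fun i => if p i then (1 : K) else 0)) :
    Fintype.card {i // p i} ≤ 2 := by
  by_contra! hcard
  obtain ⟨i, hi⟩ : ∃ i : {i // p i}, (i : ι) ≠ o := by
    by_contra! h
    have := Fintype.card_le_one_iff.mpr fun a b : {i // p i} => Subtype.ext ((h a).trans (h b).symm)
    omega
  have hcard1 : 1 < Fintype.card {i // p i} := by omega
  obtain ⟨k, hki⟩ := Fintype.exists_ne_of_one_lt_card hcard1 i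
  have hext' := (hext i hi).blockGroup hS.prop hw hki
  rw [← coordIsometry_mul_conjTranspose] at hw
  exact hcard.not_ge ((isPrimitiveReflectionGroup_blockGroup hS hG hw).card_le_two
    (isSolvable_blockGroup _ hsolv) hext')

end CoordinateBlock

section AtomIsometry

variable {K : Type*} [Field K] [StarRing K] {ι : Type*} [Fintype ι] [DecidableEq ι]
  {G : Subgroup (Matrix.unitaryGroup ι K)} {S : Set (Matrix ι ι K)} {w w' : Matrix ι ι K}

omit [DecidableEq ι] in
theorem conjTranspose_mul_self_eq_one {J : Matrix ι (Fin 1) K}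
    (h : IsIdempotentElem (J * Jᴴ)) (h0 : J * Jᴴ ≠ 0) : Jᴴ * J = 1 := by
  obtain ⟨c, hc⟩ : ∃ c : K, Jᴴ * J = c • 1 :=
    ⟨(Jᴴ * J) 0 0, by ext i j; rw [Subsingleton.elim i 0, Subsingleton.elim j 0]; simp⟩
  have hmul : c • (J * Jᴴ) = J * Jᴴ := calc
    c • (J * Jᴴ) = J * (Jᴴ * J) * Jᴴ := by
      rw [hc, Matrix.mul_smul, Matrix.smul_mul, Matrix.mul_one]
    _ = J * Jᴴ := by rw [← h.eq]; simp only [Matrix.mul_assoc]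
  have hzero : (c - 1) • (J * Jᴴ) = 0 := by rw [sub_smul, one_smul, hmul, sub_self]
  rw [hc, sub_eq_zero.mp ((smul_eq_zero.mp hzero).resolve_right h0), one_smul]

theorem IsAtomOf.exists_isometry_of_not_commute (hS : IsInvariantProjectionFamily G S)
    (hw : IsAtomOf S w) {i : ι} (hi : coordUnitary i (-1) ∈ G)
    (hcomm : ¬ Commute (coordUnitary i (-1 : unitary K) : Matrix ι ι K) w) {b : K}
    (hb : b * star b = 2) : ∃ J : Matrix ι (Fin 1) K, Jᴴ * J = 1 ∧ J * Jᴴ = w := by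
  have hproj := hw.isStarProjection hS
  have hw0 : w * (coordUnitary i (-1 : unitary K) : Matrix ι ι K) * w = 0 := by
    by_contra h
    exact hcomm ((conj_eq_self_iff_commute _).mp
      (hw.conj_eq_of_mul_mul_ne_zero hS hw hi h).symm)
  rw [coe_coordUnitary_neg_one, lineProjection_single, mul_sub, mul_one, sub_mul,
    hproj.isIdempotentElem.eq, mul_smul_comm, smul_mul_assoc, sub_eq_zero] at hw0
  have hJ : (Matrix.of fun j (_ : Fin 1) => b * w j i) *
      (Matrix.of fun j (_ : Fin 1) => b * w j i)ᴴ = w := by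
    conv_rhs => rw [hw0]
    ext j l
    have hil : star (w l i) = w i l := congrFun (congrFun hproj.isSelfAdjoint i) l
    simp only [Matrix.mul_apply, Matrix.conjTranspose_apply, Matrix.of_apply, star_mul', hil,
      Finset.univ_unique, Finset.sum_singleton, Matrix.smul_apply, smul_eq_mul, ← hb]
    simp only [single_apply, ite_and, mul_ite, mul_one, mul_zero, Finset.sum_ite_eq,
      Finset.mem_univ, ↓reduceIte, ite_mul, zero_mul]
    ring
  refine ⟨_, conjTranspose_mul_self_eq_one ?_ ?_, hJ⟩
  · rw [hJ]
    exact hproj.isIdempotentElem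
  · rw [hJ]
    exact hw.ne_zero

theorem IsAtomOf.eq_diagonal_of_commute (hS : IsInvariantProjectionFamily G S)
    (hw : IsAtomOf S w) (h2 : (2 : K) ≠ 0) [DecidablePred fun i => w i i ≠ 0]
    (hcomm : ∀ i : ι, Commute (coordUnitary i (-1 : unitary K) : Matrix ι ι K) w) :
    w = Matrix.diagonal fun i => if w i i ≠ 0 then 1 else 0 := by
  have hoff : ∀ i j, j ≠ i → w i j = 0 := fun i j hj =>
    apply_eq_zero_of_commute_coordUnitary (neg_one_ne_one_unitary h2) (hcomm i).symm hj
  ext i j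
  rcases eq_or_ne j i with rfl | hj
  · have hjj := congrFun (congrFun (hw.isStarProjection hS).isIdempotentElem.eq j) j
    rw [mul_apply_of_row (hoff j)] at hjj
    rw [Matrix.diagonal_apply_eq]
    split_ifs with h
    · exact mul_left_cancel₀ h (by rw [hjj, mul_one])
    · exact not_not.mp h
  · rw [hoff i j hj, Matrix.diagonal_apply_ne _ hj.symm]

theorem IsAtomOf.exists_isometry (hS : IsMaximalProjectionFamily G S) (hG : IsReflectionGroup G)
    (hsolv : Group.IsSolvable G) {o : ι} (hext : ∀ i, i ≠ o → HasExtraSymmetry G i)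
    {b : K} (hb : b * star b = 2) (hw : IsAtomOf S w) :
    ∃ k ≤ 2, ∃ J : Matrix ι (Fin k) K, Jᴴ * J = 1 ∧ J * Jᴴ = w := by
  classical
  by_cases hcomm : ∀ i : ι, Commute (coordUnitary i (-1 : unitary K) : Matrix ι ι K) w
  · have hdiag := hw.eq_diagonal_of_commute hS.prop hG.two_ne_zero hcomm
    have e := Fintype.equivFin {i // w i i ≠ 0}
    refine ⟨_, (hdiag ▸ hw : IsAtomOf S _).card_support_le_two hS hG hsolv hext,
      (coordIsometry K _).submatrix id e.symm, ?_, ?_⟩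
    · rw [Matrix.conjTranspose_submatrix, ← Matrix.submatrix_mul _ _ _ _ _ Function.bijective_id,
        conjTranspose_mul_coordIsometry, Matrix.submatrix_one_equiv]
    · rw [Matrix.conjTranspose_submatrix, Matrix.submatrix_mul_equiv,
        coordIsometry_mul_conjTranspose, ← hdiag, Matrix.submatrix_id_id]
  · push Not at hcomm
    obtain ⟨i, hi⟩ := hcomm
    exact ⟨1, one_le_two,
      hw.exists_isometry_of_not_commute hS.prop (hG.coordUnitary_neg_one_mem i) hi hb⟩

end AtomIsometry

section PairMonomial

variable {K : Type*} [Field K] {ι : Type*}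

/-- For an involution `τ` of the index set, `IsPairMonomial τ M` says that `M` induces a bijection
between the coordinate subspaces spanned by the `τ`-orbits, expressed through the nonzero
entries of `M`. -/
def IsPairMonomial (τ : ι → ι) (M : Matrix ι ι K) : Prop :=
  ∀ ⦃a b a' b'⦄, M a b ≠ 0 → M a' b' ≠ 0 → ((b' = b ∨ b' = τ b) ↔ (a' = a ∨ a' = τ a))

theorem eq_or_eq_rev_iff {α : Type*} {k : α → ℕ} (hk : ∀ w, k w ≤ 2) (x y : Σ w, Fin (k w)) :
    (y = x ∨ y = ⟨x.1, x.2.rev⟩) ↔ y.1 = x.1 := by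
  constructor
  · rintro (rfl | rfl) <;> rfl
  · obtain ⟨w, i, hi⟩ := x
    obtain ⟨w', j, hj⟩ := y
    rintro (rfl : w' = w)
    have := hk w'
    simp only [Sigma.mk.injEq, heq_eq_eq, true_and, Fin.ext_iff, Fin.val_rev]
    omega

variable [StarRing K] [Fintype ι] [DecidableEq ι]
  {G : Subgroup (Matrix.unitaryGroup ι K)} {S : Set (Matrix ι ι K)} {w w' : Matrix ι ι K}

theorem IsAtomOf.conjTranspose_mul_eq_zero {k k' : ℕ} (hS : IsInvariantProjectionFamily G S)
    {J : Matrix ι (Fin k) K} {J' : Matrix ι (Fin k') K} (hJ : Jᴴ * J = 1) (hJ' : J'ᴴ * J' = 1)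
    (hw : IsAtomOf S (J * Jᴴ)) (hw' : IsAtomOf S (J' * J'ᴴ)) (hne : J * Jᴴ ≠ J' * J'ᴴ) :
    Jᴴ * J' = 0 := calc
  Jᴴ * J' = Jᴴ * J * Jᴴ * J' * (J'ᴴ * J') := by rw [hJ, hJ', Matrix.one_mul, Matrix.mul_one]
  _ = Jᴴ * (J * Jᴴ * (J' * J'ᴴ)) * J' := by simp only [Matrix.mul_assoc]
  _ = 0 := by rw [hw.mul_eq_zero_of_ne hS hw' hne, Matrix.mul_zero, Matrix.zero_mul]

theorem IsAtomOf.eq_conj_of_apply_ne_zero {k k' : ℕ} (hS : IsInvariantProjectionFamily G S)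
    {J : Matrix ι (Fin k) K} {J' : Matrix ι (Fin k') K} (hJ : Jᴴ * J = 1) (hJ' : J'ᴴ * J' = 1)
    (hw : IsAtomOf S (J * Jᴴ)) (hw' : IsAtomOf S (J' * J'ᴴ)) {g : Matrix.unitaryGroup ι K}
    (hg : g ∈ G) {i : Fin k} {j : Fin k'} (h : (Jᴴ * (g : Matrix ι ι K) * J') i j ≠ 0) :
    J * Jᴴ = (g : Matrix ι ι K) * (J' * J'ᴴ) * star (g : Matrix ι ι K) := by
  refine hw.conj_eq_of_mul_mul_ne_zero hS hw' hg fun h0 => h ?_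
  have hzero : Jᴴ * (g : Matrix ι ι K) * J' = 0 := calc
    _ = Jᴴ * J * Jᴴ * (g : Matrix ι ι K) * J' * (J'ᴴ * J') := by
      rw [hJ, hJ', Matrix.one_mul, Matrix.mul_one]
    _ = Jᴴ * (J * Jᴴ * (g : Matrix ι ι K) * (J' * J'ᴴ)) * J' := by simp only [Matrix.mul_assoc]
    _ = 0 := by rw [h0, Matrix.mul_zero, Matrix.zero_mul]
  rw [hzero, Matrix.zero_apply]

theorem IsMaximalProjectionFamily.exists_sigma_isometry [Finite K]
    (hS : IsMaximalProjectionFamily G S) {k : {w // IsAtomOf S w} → ℕ}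
    {J : ∀ w, Matrix ι (Fin (k w)) K} (hJ : ∀ w, (J w)ᴴ * J w = 1)
    (hJw : ∀ w, J w * (J w)ᴴ = (w : Matrix ι ι K)) :
    ∃ (B : Matrix.unitaryGroup ι K) (e : ι ≃ Σ w, Fin (k w)),
      ∀ i j, (B : Matrix ι ι K) i j = J (e j).1 i (e j).2 := by
  classical
  have := Fintype.ofFinite {w // IsAtomOf S w}
  let B : Matrix ι (Σ w, Fin (k w)) K := Matrix.of fun i x => J x.1 i x.2
  have hBB : Bᴴ * B = 1 := by
    ext ⟨w, i⟩ ⟨w', j⟩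
    change ((J w)ᴴ * J w') i j = _
    rcases eq_or_ne w w' with rfl | hne
    · rw [hJ, Matrix.one_apply, Matrix.one_apply]
      simp
    · rw [IsAtomOf.conjTranspose_mul_eq_zero hS.prop (hJ w) (hJ w') (hJw w ▸ w.2) (hJw w' ▸ w'.2)
        (by rw [hJw, hJw]; exact fun h => hne (Subtype.ext h))]
      simp [hne]
  have hsum : B * Bᴴ = 1 := by
    rw [← IsAtomOf.sum_eq_one hS (Finset.univ.map (Function.Embedding.subtype (IsAtomOf S)))
      (by simp)]
    ext i j
    rw [Finset.sum_map, Matrix.sum_apply, Matrix.mul_apply, Fintype.sum_sigma]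
    refine Finset.sum_congr rfl fun w _ => ?_
    exact congrFun (congrFun (hJw w) i) j
  obtain ⟨e⟩ := Fintype.card_eq.mp (Matrix.square_of_invertible B Bᴴ hsum hBB)
  refine ⟨⟨B.submatrix id e, Matrix.mem_unitaryGroup_iff.mpr ?_⟩, e, fun i j => rfl⟩
  rw [Matrix.star_eq_conjTranspose, Matrix.conjTranspose_submatrix, Matrix.submatrix_mul_equiv,
    hsum, Matrix.submatrix_id_id]

theorem IsReflectionGroup.exists_isPairMonomial [Finite K] (hG : IsReflectionGroup G)
    (hsolv : Group.IsSolvable G) {o : ι} (hext : ∀ i, i ≠ o → HasExtraSymmetry G i)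
    {b : K} (hb : b * star b = 2) :
    ∃ (B : Matrix.unitaryGroup ι K) (τ : ι → ι), Function.Involutive τ ∧
      ∀ g ∈ G, IsPairMonomial τ ((B⁻¹ * g * B : Matrix.unitaryGroup ι K) : Matrix ι ι K) := by
  obtain ⟨S, hS⟩ := exists_isMaximalProjectionFamily G
  choose k hk J hJ hJw using fun w : {w // IsAtomOf S w} =>
    w.2.exists_isometry hS hG hsolv hext hb
  obtain ⟨B, e, hB⟩ := hS.exists_sigma_isometry hJ hJw
  refine ⟨B, fun i => e.symm ⟨(e i).1, (e i).2.rev⟩,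
    fun i => by rw [e.symm_apply_eq, e.apply_symm_apply, Fin.rev_rev], ?_⟩
  intro g hg a b a' b' hab hab'
  have hconj {a b : ι} (h : ((B⁻¹ * g * B : Matrix.unitaryGroup ι K) : Matrix ι ι K) a b ≠ 0) :
      ((e a).1 : Matrix ι ι K) = (g : Matrix ι ι K) * (e b).1 * star (g : Matrix ι ι K) := by
    rw [← hJw, ← hJw]
    refine IsAtomOf.eq_conj_of_apply_ne_zero hS.prop (hJ _) (hJ _) (hJw _ ▸ (e a).1.2)
      (hJw _ ▸ (e b).1.2) hg (i := (e a).2) (j := (e b).2) ?_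
    convert h using 1
    simp only [Matrix.UnitaryGroup.mul_val, Matrix.UnitaryGroup.inv_val, Matrix.mul_apply,
      Matrix.star_apply, Matrix.conjTranspose_apply, hB]
  have hiff (i j : ι) : (j = i ∨ j = e.symm ⟨(e i).1, (e i).2.rev⟩) ↔ (e j).1 = (e i).1 := by
    rw [← eq_or_eq_rev_iff hk, e.injective.eq_iff, ← e.eq_symm_apply]
  rw [hiff, hiff, Subtype.ext_iff, Subtype.ext_iff, hconj hab, hconj hab']
  refine ⟨fun h => by rw [h], fun h => ?_⟩
  rw [← star_mul_conj_mul g (e b').1, h, star_mul_conj_mul]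

end PairMonomial

section CoordinateFrames

variable {K : Type*} [Field K] [StarRing K] {ι : Type*} [Fintype ι] [DecidableEq ι]

/-- The matrix of `g` in the orthonormal basis formed by the columns of `h`. -/
def matrixWrt (h g : Matrix.unitaryGroup ι K) : Matrix ι ι K :=
  ((h⁻¹ * g * h : Matrix.unitaryGroup ι K) : Matrix ι ι K)

/-- The `j`-th coordinate vector is an eigenvector of `g`, with eigenvalue `g j j`. -/
def IsDiagonalAt (g : Matrix.unitaryGroup ι K) (j : ι) : Prop :=
  ∀ i, i ≠ j → (g : Matrix ι ι K) i j = 0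

theorem exists_apply_ne_zero (g : Matrix.unitaryGroup ι K) (b : ι) :
    ∃ a, (g : Matrix ι ι K) a b ≠ 0 := by
  by_contra! hzero
  have hb := congrFun (congrFun (Matrix.mem_unitaryGroup_iff'.mp g.2) b) b
  simp [Matrix.mul_apply, hzero] at hb

theorem eq_of_forall_apply_eq_zero {g : Matrix.unitaryGroup ι K} {a b b' : ι}
    (hb : ∀ i, i ≠ a → (g : Matrix ι ι K) i b = 0) (hb' : (g : Matrix ι ι K) a b' ≠ 0) :
    b' = b := by
  by_contra hne
  have horth := congrFun (congrFun (Matrix.mem_unitaryGroup_iff'.mp g.2) b) b'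
  rw [Matrix.mul_apply, Finset.sum_eq_single a (fun i _ hi => by simp [Matrix.star_apply, hb i hi])
    (by simp), Matrix.one_apply_ne (Ne.symm hne), Matrix.star_apply] at horth
  obtain ⟨i, hi⟩ := exists_apply_ne_zero g b
  have hia : i = a := by_contra fun h => hi (hb i h)
  exact mul_ne_zero (star_ne_zero.mpr (hia ▸ hi)) hb' horth

namespace IsDiagonalAt

variable {g : Matrix.unitaryGroup ι K} {j : ι}

theorem apply_eq_zero_of_row (hg : IsDiagonalAt g j) {b : ι} (hb : b ≠ j) :
    (g : Matrix ι ι K) j b = 0 :=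
  by_contra fun h => hb (eq_of_forall_apply_eq_zero hg h)

theorem apply_self_ne_zero (hg : IsDiagonalAt g j) : (g : Matrix ι ι K) j j ≠ 0 :=
  apply_self_ne_zero_of_row fun _ hb => hg.apply_eq_zero_of_row hb

theorem mul_apply (hg : IsDiagonalAt g j) (M : Matrix ι ι K) (b : ι) :
    ((g : Matrix ι ι K) * M) j b = (g : Matrix ι ι K) j j * M j b :=
  mul_apply_of_row (fun _ hb => hg.apply_eq_zero_of_row hb) M b

theorem apply_self_mul_star (hg : IsDiagonalAt g j) :
    (g : Matrix ι ι K) j j * star ((g : Matrix ι ι K) j j) = 1 := by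
  have hjj := congrFun (congrFun (Matrix.mem_unitaryGroup_iff.mp g.2) j) j
  rwa [hg.mul_apply, Matrix.star_apply, Matrix.one_apply_eq] at hjj

end IsDiagonalAt

theorem mem_scalarUnitary_of_isDiagonalAt {g : Matrix.unitaryGroup ι K} {c : K}
    (hg : ∀ j, IsDiagonalAt g j) (hc : ∀ j, (g : Matrix ι ι K) j j = c) :
    g ∈ scalarUnitary ι K := by
  refine ⟨c, Matrix.ext fun i j => ?_⟩
  by_cases h : i = j
  · subst h; simp [hc]
  · simp [hg j i h, h]

theorem mul_eq_mul_matrixWrt (h g : Matrix.unitaryGroup ι K) :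
    (g : Matrix ι ι K) * h = (h : Matrix ι ι K) * matrixWrt h g := by
  rw [matrixWrt, ← Matrix.UnitaryGroup.mul_val, ← Matrix.UnitaryGroup.mul_val]
  congr 1
  group

theorem mul_apply_eq_of_matrixWrt {h g : Matrix.unitaryGroup ι K} {b k : ι}
    (hk : ∀ i, i ≠ k → matrixWrt h g i b = 0) (i : ι) :
    ((g : Matrix ι ι K) * h) i b = matrixWrt h g k b * (h : Matrix ι ι K) i k := by
  rw [mul_eq_mul_matrixWrt, Matrix.mul_apply,
    Finset.sum_eq_single k (fun x _ hx => by rw [hk x hx, mul_zero]) (by simp), mul_comm]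

theorem matrixWrt_apply (h g : Matrix.unitaryGroup ι K) (i b : ι) :
    matrixWrt h g i b = ∑ x, star ((h : Matrix ι ι K) x i) * ((g : Matrix ι ι K) * h) x b := by
  rw [matrixWrt, mul_assoc, Matrix.UnitaryGroup.mul_val, Matrix.mul_apply]
  rfl

namespace IsPairMonomial

variable {τ : ι → ι} {g h : Matrix.unitaryGroup ι K} {a b : ι}

theorem apply_eq_of_apply_ne_zero (hg : IsPairMonomial τ (g : Matrix ι ι K))
    (hab : (g : Matrix ι ι K) a b ≠ 0) (ha : τ a = a) : τ b = b := by
  obtain ⟨a', ha'⟩ := exists_apply_ne_zero g (τ b)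
  have haa' : a' = a := by simpa [ha] using (hg hab ha').mp (.inr rfl)
  refine eq_of_forall_apply_eq_zero (fun i hi => ?_) (haa' ▸ ha')
  by_contra hib
  exact hi (by simpa [ha] using (hg hab hib).mp (.inl rfl))

theorem inv (hg : IsPairMonomial τ (g : Matrix ι ι K)) :
    IsPairMonomial τ ((g⁻¹ : Matrix.unitaryGroup ι K) : Matrix ι ι K) := by
  intro a b a' b' hab hab'
  rw [Matrix.UnitaryGroup.inv_apply, Matrix.star_apply, star_ne_zero] at hab hab'
  exact (hg hab hab').symm

theorem apply_eq_iff (hg : IsPairMonomial τ (g : Matrix ι ι K))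
    (hab : (g : Matrix ι ι K) a b ≠ 0) : τ a = a ↔ τ b = b :=
  ⟨hg.apply_eq_of_apply_ne_zero hab, hg.inv.apply_eq_of_apply_ne_zero
    (by rwa [Matrix.UnitaryGroup.inv_apply, Matrix.star_apply, star_ne_zero])⟩

theorem isDiagonalAt_apply (hg : IsPairMonomial τ (g : Matrix ι ι K)) (hb : IsDiagonalAt g b) :
    IsDiagonalAt g (τ b) := by
  by_cases hτ : τ b = b
  · rwa [hτ]
  intro i hi
  by_contra hne
  rcases (hg hb.apply_self_ne_zero hne).mp (.inr rfl) with rfl | h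
  · exact hne (hb.apply_eq_zero_of_row hτ)
  · exact hi h

theorem exists_column (hg : IsPairMonomial τ (matrixWrt h g)) (hb : τ b = b) :
    ∃ k, τ k = k ∧ ∃ c : K, ∀ i, ((g : Matrix ι ι K) * h) i b = c * (h : Matrix ι ι K) i k := by
  obtain ⟨k, hk⟩ := exists_apply_ne_zero (h⁻¹ * g * h) b
  have hτk : τ k = k := (hg.apply_eq_iff hk).mpr hb
  refine ⟨k, hτk, matrixWrt h g k b, mul_apply_eq_of_matrixWrt fun i hi => ?_⟩
  by_contra hib
  exact hi (by simpa [hτk] using (hg hk hib).mp (.inl rfl))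

theorem exists_column_of_isDiagonalAt (hg : IsPairMonomial τ (matrixWrt h g)) (hb : τ b = b)
    (ha : IsDiagonalAt g a) (hab : (h : Matrix ι ι K) a b ≠ 0) :
    ∃ k, τ k = k ∧ (h : Matrix ι ι K) a k ≠ 0 ∧
      ∃ c : K, ∀ i, ((g : Matrix ι ι K) * h) i b = c * (h : Matrix ι ι K) i k := by
  obtain ⟨k, hk, c, hc⟩ := hg.exists_column hb
  refine ⟨k, hk, fun hak => ?_, c, hc⟩
  have hzero := hc a
  rw [ha.mul_apply, hak, mul_zero] at hzero
  exact mul_ne_zero ha.apply_self_ne_zero hab hzero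

end IsPairMonomial

section Permutation

/-- The permutation matrix of `κ`, sending the `j`-th coordinate vector to the `κ j`-th one. -/
def permUnitary (κ : Equiv.Perm ι) : Matrix.unitaryGroup ι K :=
  ⟨(1 : Matrix ι ι K).submatrix id κ, by
    rw [Matrix.mem_unitaryGroup_iff']
    ext i j
    simp [Matrix.mul_apply, Matrix.one_apply, Matrix.star_apply, apply_ite star, eq_comm]⟩

theorem permUnitary_apply (κ : Equiv.Perm ι) (i j : ι) :
    (permUnitary κ : Matrix.unitaryGroup ι K) i j = if i = κ j then 1 else 0 :=
  Matrix.one_apply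

theorem mul_permUnitary_apply (κ : Equiv.Perm ι) (g : Matrix.unitaryGroup ι K) (i j : ι) :
    ((g : Matrix ι ι K) * (permUnitary κ : Matrix.unitaryGroup ι K)) i j =
      (g : Matrix ι ι K) i (κ j) := by
  simp [Matrix.mul_apply, permUnitary_apply]

theorem matrixWrt_permUnitary (κ : Equiv.Perm ι) (g : Matrix.unitaryGroup ι K) :
    matrixWrt (permUnitary κ) g = (g : Matrix ι ι K).submatrix κ κ := by
  ext i j
  simp [matrixWrt_apply, mul_permUnitary_apply, permUnitary_apply, apply_ite star]

omit [Fintype ι] [DecidableEq ι] [StarRing K] in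
theorem isPairMonomial_submatrix_iff {τ : ι → ι} (κ : Equiv.Perm ι) (M : Matrix ι ι K) :
    IsPairMonomial τ (M.submatrix κ κ) ↔ IsPairMonomial (κ ∘ τ ∘ κ.symm) M := by
  refine ⟨fun h a b a' b' hab hab' => ?_, fun h a b a' b' hab hab' => ?_⟩
  · have := @h (κ.symm a) (κ.symm b) (κ.symm a') (κ.symm b') (by simpa using hab)
      (by simpa using hab')
    simpa [Equiv.symm_apply_eq] using this
  · simpa using h hab hab'

end Permutation

end CoordinateFrames

section RotationAlongInvolution

variable {K : Type*} [Field K] [StarRing K] {ι : Type*} [Fintype ι] [DecidableEq ι]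

/-- `R` is the identity at the fixed points of `ρ` and mixes the coordinates `b` and `ρ b` of every
other `ρ`-orbit. The norms `2` and `-1` of the entries add up to `1`; as they are not proportional
to `-1` and `2` outside characteristic `3`, they tell the two columns of a block apart. -/
structure IsRotationAlong (ρ : ι → ι) (R : Matrix.unitaryGroup ι K) : Prop where
  apply_eq_zero : ∀ ⦃i b⦄, i ≠ b → i ≠ ρ b → (R : Matrix ι ι K) i b = 0
  apply_self_eq_one : ∀ ⦃b⦄, ρ b = b → (R : Matrix ι ι K) b b = 1
  apply_self_mul_star : ∀ ⦃b⦄, ρ b ≠ b →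
    (R : Matrix ι ι K) b b * star ((R : Matrix ι ι K) b b) = 2
  apply_mul_star : ∀ ⦃b⦄, ρ b ≠ b →
    (R : Matrix ι ι K) (ρ b) b * star ((R : Matrix ι ι K) (ρ b) b) = -1

namespace IsRotationAlong

variable {ρ : ι → ι} {R : Matrix.unitaryGroup ι K} {b : ι}

theorem apply_of_fixed (hR : IsRotationAlong ρ R) (hb : ρ b = b) (i : ι) :
    (R : Matrix ι ι K) i b = (1 : Matrix ι ι K) i b := by
  by_cases hi : i = b
  · rw [hi, hR.apply_self_eq_one hb, Matrix.one_apply_eq]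
  · rw [hR.apply_eq_zero hi (hb.symm ▸ hi), Matrix.one_apply_ne hi]

theorem apply_self_ne_zero (hR : IsRotationAlong ρ R) (h2 : (2 : K) ≠ 0) (hb : ρ b ≠ b) :
    (R : Matrix ι ι K) b b ≠ 0 :=
  left_ne_zero_of_mul (hR.apply_self_mul_star hb ▸ h2)

theorem apply_ne_zero (hR : IsRotationAlong ρ R) (hb : ρ b ≠ b) :
    (R : Matrix ι ι K) (ρ b) b ≠ 0 :=
  left_ne_zero_of_mul (hR.apply_mul_star hb ▸ neg_ne_zero.mpr one_ne_zero)

theorem mul_apply (hR : IsRotationAlong ρ R) (M : Matrix ι ι K) (hb : ρ b ≠ b) (i : ι) :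
    (M * (R : Matrix ι ι K)) i b =
      M i b * (R : Matrix ι ι K) b b + M i (ρ b) * (R : Matrix ι ι K) (ρ b) b := by
  rw [Matrix.mul_apply, ← Finset.sum_pair (f := fun x => M i x * (R : Matrix ι ι K) x b) hb.symm]
  refine (Finset.sum_subset (Finset.subset_univ _) fun x _ hx => ?_).symm
  simp only [Finset.mem_insert, Finset.mem_singleton, not_or] at hx
  rw [hR.apply_eq_zero hx.1 hx.2, mul_zero]

theorem eigenvalue_eq (hR : IsRotationAlong ρ R) (hρ : Function.Involutive ρ) (h2 : (2 : K) ≠ 0)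
    (h3 : (3 : K) ≠ 0) {k : ι} (hb : ρ b ≠ b) (hk : k = b ∨ k = ρ b) {t t' c : K}
    (ht : t * star t = 1) (ht' : t' * star t' = 1)
    (htc : t * (R : Matrix ι ι K) b b = c * (R : Matrix ι ι K) b k)
    (htc' : t' * (R : Matrix ι ι K) (ρ b) b = c * (R : Matrix ι ι K) (ρ b) k) : t = t' := by
  rcases hk with rfl | rfl
  · rw [mul_right_cancel₀ (hR.apply_self_ne_zero h2 hb) htc,
      mul_right_cancel₀ (hR.apply_ne_zero hb) htc']
  · have hb' : ρ (ρ b) ≠ ρ b := by rwa [hρ b, ne_comm]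
    have hdiag := hR.apply_self_mul_star hb'
    have hoff := hρ b ▸ hR.apply_mul_star hb'
    have hnorm := congrArg (fun z => z * star z) htc
    have hnorm' := congrArg (fun z => z * star z) htc'
    simp only [star_mul] at hnorm hnorm'
    have htwo : (2 : K) = c * star c * (-1) := by
      rw [← hR.apply_self_mul_star hb, ← hoff]
      linear_combination
        hnorm - (R : Matrix ι ι K) b b * star ((R : Matrix ι ι K) b b) * ht
    have hneg : (-1 : K) = c * star c * 2 := by
      rw [← hR.apply_mul_star hb, ← hdiag]
      linear_combination
        hnorm' - (R : Matrix ι ι K) (ρ b) b * star ((R : Matrix ι ι K) (ρ b) b) * ht'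
    exact absurd (by linear_combination 2 * htwo + hneg) h3

end IsRotationAlong

theorem IsPairMonomial.isDiagonalAt_of_isRotationAlong {τ ρ : ι → ι}
    {g h R : Matrix.unitaryGroup ι K} (hg : IsPairMonomial τ (matrixWrt h g))
    (hR : IsRotationAlong ρ R) (hρ : Function.Involutive ρ) (h2 : (2 : K) ≠ 0) (h3 : (3 : K) ≠ 0)
    {j : ι} (hτ : τ j = j) (hj : ρ j ≠ j)
    (hcol : ∀ i, (h : Matrix ι ι K) i j = (R : Matrix ι ι K) i j)
    (hcols : ∀ k, τ k = k → (h : Matrix ι ι K) j k ≠ 0 →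
      ∀ i, (h : Matrix ι ι K) i k = (R : Matrix ι ι K) i k)
    (hD : IsDiagonalAt g j) :
    IsDiagonalAt g (ρ j) ∧ (g : Matrix ι ι K) (ρ j) (ρ j) = (g : Matrix ι ι K) j j := by
  have hRj := hR.apply_self_ne_zero h2 hj
  obtain ⟨k, hk, hjk, c, hc⟩ := hg.exists_column_of_isDiagonalAt hτ hD (hcol j ▸ hRj)
  have hhk := hcols k hk hjk
  have hkj : k = j ∨ k = ρ j := by
    by_contra! hne
    exact hjk (hhk j ▸ hR.apply_eq_zero hne.1.symm fun h => hne.2 (by rw [h, hρ]))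
  have hgR (i : ι) : ((g : Matrix ι ι K) * R) i j = c * (R : Matrix ι ι K) i k := by
    rw [← hhk, ← hc, Matrix.mul_apply, Matrix.mul_apply]
    simp only [hcol]
  have hD' : IsDiagonalAt g (ρ j) := by
    intro i hi
    by_cases hij : i = j
    · rw [hij, hD.apply_eq_zero_of_row hj]
    have hRik : (R : Matrix ι ι K) i k = 0 := by
      rcases hkj with rfl | rfl
      · exact hR.apply_eq_zero hij hi
      · exact hR.apply_eq_zero hi (by rwa [hρ])
    have hzero := hgR i
    rw [hR.mul_apply _ hj, hD i hij, hRik, zero_mul, zero_add, mul_zero] at hzero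
    exact (mul_eq_zero.mp hzero).resolve_right (hR.apply_ne_zero hj)
  refine ⟨hD', (hR.eigenvalue_eq hρ h2 h3 (c := c) hj hkj hD.apply_self_mul_star
    hD'.apply_self_mul_star ?_ ?_).symm⟩
  · rw [← hD.mul_apply, hgR]
  · rw [← hD'.mul_apply, hgR]

theorem exists_unitary_of_involutive {ρ : ι → ι} (hρ : Function.Involutive ρ) {A B : ι → K}
    (hnorm : ∀ j, star (A j) * A j + star (B j) * B j = 1)
    (horth : ∀ j, star (A (ρ j)) * B j + star (B (ρ j)) * A j = 0) :
    ∃ R : Matrix.unitaryGroup ι K, ∀ i j, (R : Matrix ι ι K) i j =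
      (if i = j then A j else 0) + if i = ρ j then B j else 0 := by
  set R : Matrix ι ι K := Matrix.of fun i j =>
    (if i = j then A j else 0) + if i = ρ j then B j else 0 with hR
  refine ⟨⟨R, Matrix.mem_unitaryGroup_iff'.mpr (Matrix.ext fun j k => ?_)⟩, fun _ _ => rfl⟩
  have hexpand : (star R * R) j k = star (A j) * R j k + star (B j) * R (ρ j) k := by
    simp only [Matrix.mul_apply, Matrix.star_apply]
    simp only [hR, Matrix.of_apply, star_add, apply_ite star, star_zero, add_mul, ite_mul,
      zero_mul, Finset.sum_add_distrib, Finset.sum_ite_eq', Finset.mem_univ, if_true]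
  rw [hexpand]
  simp only [hR, Matrix.of_apply, hρ.injective.eq_iff, hρ.eq_iff (x := j),
    Matrix.one_apply]
  rcases eq_or_ne j k with rfl | hjk
  · by_cases hj : ρ j = j
    · have horthj := horth j
      rw [hj] at horthj
      simp only [hj, if_true]
      linear_combination hnorm j + horthj
    · simp [Ne.symm hj, hnorm]
  · by_cases hjρ : j = ρ k
    · subst hjρ
      simpa [hjk, hρ k] using horth k
    · simp [hjk, hjρ]

theorem exists_isRotationAlong [LinearOrder ι] {ρ : ι → ι} (hρ : Function.Involutive ρ)
    {α β : K} (hα : α * star α = 2) (hβ : β * star β = -1) :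
    ∃ R : Matrix.unitaryGroup ι K, IsRotationAlong ρ R := by
  let A : ι → K := fun j => if j < ρ j then α else if ρ j < j then star α else 1
  let B : ι → K := fun j => if j < ρ j then β else if ρ j < j then -star β else 0
  have hcases (j : ι) : (ρ j ≠ j ∧ A j = α ∧ B j = β ∧ A (ρ j) = star α ∧ B (ρ j) = -star β) ∨
      (ρ j ≠ j ∧ A j = star α ∧ B j = -star β ∧ A (ρ j) = α ∧ B (ρ j) = β) ∨
      (ρ j = j ∧ A j = 1 ∧ B j = 0) := by
    rcases lt_trichotomy j (ρ j) with h | h | h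
    · simp [A, B, h, h.ne', hρ j, h.not_gt]
    · simp [A, B, ← h]
    · simp [A, B, h, h.ne, hρ j, h.not_gt]
  obtain ⟨R, hR⟩ := exists_unitary_of_involutive hρ (A := A) (B := B)
    (fun j => by
      rcases hcases j with ⟨-, hA, hB, -⟩ | ⟨-, hA, hB, -⟩ | ⟨-, hA, hB⟩
      · rw [hA, hB]; linear_combination hα + hβ
      · rw [hA, hB, star_neg, star_star, star_star]; linear_combination hα + hβ
      · simp [hA, hB])
    (fun j => by
      rcases hcases j with ⟨-, hA, hB, hA', hB'⟩ | ⟨-, hA, hB, hA', hB'⟩ | ⟨hj, hA, hB⟩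
      · rw [hA, hB, hA', hB', star_neg, star_star, star_star]; ring
      · rw [hA, hB, hA', hB']; ring
      · simp [hj, hA, hB])
  refine ⟨R, fun i b hi hi' => by simp [hR, hi, hi'], fun b hb => ?_, fun b hb => ?_,
    fun b hb => ?_⟩
  all_goals rcases hcases b with ⟨hne, hA, hB, -⟩ | ⟨hne, hA, hB, -⟩ | ⟨heq, hA, hB⟩
  all_goals first | exact absurd hb hne | exact absurd heq hb | skip
  · simp [hR, hA, hB]
  · simp [hR, hA, Ne.symm hb, hα]
  · simp [hR, hA, Ne.symm hb, mul_comm (star α), hα]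
  · simp [hR, hB, hb, hβ]
  · simp [hR, hB, hb, mul_comm (star β), hβ]

end RotationAlongInvolution

section SpreadColumn

variable {K : Type*} [Field K] [StarRing K] {ι : Type*} [Fintype ι] [DecidableEq ι]

/-- The column `s` of `U` is supported exactly on `S`, and `U` fixes the coordinate vectors
outside `S`. -/
structure IsSpreadOver (S : Finset ι) (s : ι) (U : Matrix.unitaryGroup ι K) : Prop where
  apply_ne_zero_iff : ∀ i, (U : Matrix ι ι K) i s ≠ 0 ↔ i ∈ S
  apply_of_notMem : ∀ ⦃b⦄, b ∉ S → ∀ i, (U : Matrix ι ι K) i b = (1 : Matrix ι ι K) i b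

omit [DecidableEq ι] in
theorem exists_selfAdjoint_weights {S : Finset ι} (hS : 1 < S.card) (h2 : (2 : K) ≠ 0) :
    ∃ w : ι → K, (∀ i, star (w i) = w i) ∧ (∀ i, w i ≠ 0 ↔ i ∈ S) ∧ ∑ i, w i = 1 := by
  classical
  obtain ⟨s, hs, t, ht, hst⟩ := Finset.one_lt_card.mp hS
  set r : K := 1 - (((S.erase s).erase t).card : K) with hr
  obtain ⟨a, ha, ha0, har⟩ : ∃ a : K, star a = a ∧ a ≠ 0 ∧ r - a ≠ 0 := by
    by_cases h : r = 1
    · refine ⟨2, by simp, h2, fun e => one_ne_zero (α := K) ?_⟩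
      rw [h] at e
      linear_combination -e
    · exact ⟨1, by simp, one_ne_zero, sub_ne_zero.mpr h⟩
  refine ⟨fun i => (if i = s then a else 0) + (if i = t then r - a else 0) +
    if i ∈ (S.erase s).erase t then 1 else 0, fun i => ?_, fun i => ?_, ?_⟩
  · simp [apply_ite star, ha, hr]
  · rcases eq_or_ne i s with rfl | his
    · simp [hst, ha0, hs]
    · rcases eq_or_ne i t with rfl | hit
      · simp [hst.symm, har, ht]
      · simp [his, hit]
  · simp [Finset.sum_add_distrib, -Finset.mem_erase, hr]

omit [DecidableEq ι] in
theorem exists_unit_vector {S : Finset ι} (hS : 1 < S.card) (s : ι) (h2 : (2 : K) ≠ 0)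
    (hnorm : ∀ a : K, star a = a → ∃ b, b * star b = a) :
    ∃ u : ι → K, (∀ i, u i ≠ 0 ↔ i ∈ S) ∧ star u ⬝ᵥ u = 1 ∧ u s ≠ 1 := by
  obtain ⟨w, hw, hwS, hsum⟩ := exists_selfAdjoint_weights hS h2
  choose v hv using fun i => hnorm (w i) (hw i)
  have hvS (i : ι) : v i ≠ 0 ↔ i ∈ S := by simp [← hwS, ← hv]
  have hvv : star v ⬝ᵥ v = 1 := by
    simp only [dotProduct, Pi.star_apply, mul_comm (star _), hv, hsum]
  by_cases hvs : v s = 1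
  · refine ⟨-v, by simpa using hvS, by simpa using hvv, fun h => h2 ?_⟩
    rw [Pi.neg_apply, hvs] at h
    linear_combination -h
  · exact ⟨v, hvS, hvv, hvs⟩

theorem exists_unitary_column {u : ι → K} {s : ι} (hu : star u ⬝ᵥ u = 1) (hus : u s ≠ 1) :
    ∃ U : Matrix.unitaryGroup ι K, (∀ i, (U : Matrix ι ι K) i s = u i) ∧
      ∀ b, b ≠ s → u b = 0 → ∀ i, (U : Matrix ι ι K) i b = (1 : Matrix ι ι K) i b := by
  set v : ι → K := Pi.single s 1 - u with hv
  set c : K := 1 - star (u s) with hc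
  have hc0 : c ≠ 0 := by
    rw [hc, sub_ne_zero, ne_comm, ← star_one, star_injective.ne_iff]
    exact hus
  have hvv : star v ⬝ᵥ v = c + star c := by
    rw [hv, star_sub, sub_dotProduct, dotProduct_sub, dotProduct_sub, hu, ← Pi.single_star,
      star_one]
    simp only [dotProduct_single, Pi.single_eq_same, mul_one, single_dotProduct, one_mul,
      Pi.star_apply, hc, star_sub, star_one, star_star]
    ring
  set P : Matrix ι ι K := vecMulVec v (star v) with hP
  have hPP : P * P = (c + star c) • P := by
    rw [hP, Matrix.vecMulVec_mul_vecMulVec, hvv, Matrix.vecMulVec_smul]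
  have hPstar : star P = P := by
    rw [hP, Matrix.star_eq_conjTranspose, Matrix.conjTranspose_vecMulVec, star_star]
  have hunit : star (1 - c⁻¹ • P) * (1 - c⁻¹ • P) = 1 := by
    have hcoef : star c⁻¹ * c⁻¹ * (c + star c) = star c⁻¹ + c⁻¹ := by
      have hcs : star c ≠ 0 := star_ne_zero.mpr hc0
      rw [star_inv₀]
      field_simp
    rw [star_sub, star_one, star_smul, hPstar, sub_mul, mul_sub, mul_sub, one_mul, one_mul,
      mul_one, smul_mul_smul_comm, hPP, smul_smul, hcoef]
    module
  refine ⟨⟨1 - c⁻¹ • P, Matrix.mem_unitaryGroup_iff'.mpr hunit⟩, fun i => ?_, fun b hb hub i => ?_⟩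
  · have hvs : star (v s) = c := by simp [hv, hc]
    change (1 - c⁻¹ • P) i s = u i
    rw [Matrix.sub_apply, Matrix.smul_apply, hP, Matrix.vecMulVec_apply, Pi.star_apply, hvs,
      smul_eq_mul, mul_left_comm, inv_mul_cancel₀ hc0, mul_one, hv, Pi.sub_apply,
      Matrix.one_eq_pi_single, Pi.single_comm]
    simp
  · change (1 - c⁻¹ • P) i b = _
    simp [hP, Matrix.vecMulVec_apply, hv, hb, hub]

theorem exists_isSpreadOver {S : Finset ι} {s : ι} (hs : s ∈ S) (h2 : (2 : K) ≠ 0)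
    (hnorm : ∀ a : K, star a = a → ∃ b, b * star b = a) :
    ∃ U : Matrix.unitaryGroup ι K, IsSpreadOver S s U := by
  rcases (Finset.one_le_card.mpr ⟨s, hs⟩).eq_or_lt with hS | hS
  · obtain ⟨x, rfl⟩ := Finset.card_eq_one.mp hS.symm
    obtain rfl := Finset.mem_singleton.mp hs
    exact ⟨1, fun i => by simp [Matrix.one_apply], fun _ _ _ => rfl⟩
  obtain ⟨u, huS, hu, hus⟩ := exists_unit_vector hS s h2 hnorm
  obtain ⟨U, hU, hU'⟩ := exists_unitary_column hu hus
  exact ⟨U, fun i => by rw [hU, huS], fun b hb i =>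
    hU' b (fun h => hb (h ▸ hs)) (by_contra fun h => hb ((huS b).mp h)) i⟩

namespace IsSpreadOver

variable {S : Finset ι} {s : ι} {U : Matrix.unitaryGroup ι K}

theorem mul_apply_of_notMem (hU : IsSpreadOver S s U) (M : Matrix ι ι K) {b : ι} (hb : b ∉ S)
    (i : ι) : (M * (U : Matrix ι ι K)) i b = M i b := by
  simp [Matrix.mul_apply, hU.apply_of_notMem hb, Matrix.one_apply]

theorem mul_apply_of_forall_mem (hU : IsSpreadOver S s U) {M : Matrix ι ι K} {b : ι}
    (hM : ∀ x ∈ S, M x b = 0) (i : ι) : ((U : Matrix ι ι K) * M) i b = M i b := by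
  have hterm (x : ι) : (U : Matrix ι ι K) i x * M x b = (1 : Matrix ι ι K) i x * M x b := by
    by_cases hx : x ∈ S
    · rw [hM x hx, mul_zero, mul_zero]
    · rw [hU.apply_of_notMem hx]
  simp_rw [Matrix.mul_apply, hterm]
  rw [← Matrix.mul_apply, one_mul]

theorem matrixWrt_apply_of_notMem (hU : IsSpreadOver S s U) (g : Matrix.unitaryGroup ι K) {z : ι}
    (hz : z ∉ S) {j : ι} (hj : ∀ i, i ≠ j → (g : Matrix ι ι K) i z = 0) (b : ι) :
    matrixWrt U g b z = star ((U : Matrix ι ι K) j b) * (g : Matrix ι ι K) j z := by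
  rw [matrixWrt_apply, Finset.sum_eq_single j
    (fun x _ hx => by rw [hU.mul_apply_of_notMem _ hz, hj x hx, mul_zero]) (by simp),
    hU.mul_apply_of_notMem _ hz]

variable {τ : ι → ι} {g : Matrix.unitaryGroup ι K} {z z₁ z₂ : ι}

theorem isDiagonalAt (hU : IsSpreadOver (Finset.univ.erase z) z₁ U)
    (hg : IsPairMonomial τ (matrixWrt U g)) (hτ : τ z₁ = z ∨ τ z₁ = z₁) (h₁ : z₁ ≠ z) (h₂ : z₂ ≠ z)
    (h₁₂ : z₂ ≠ z₁) (hsing : ∀ ⦃a a'⦄, (g : Matrix ι ι K) a z ≠ 0 → (g : Matrix ι ι K) a' z ≠ 0 →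
      a = a') : IsDiagonalAt g z := by
  have hz : z ∉ Finset.univ.erase z := Finset.notMem_erase _ _
  have hU₁ {i : ι} (hi : i ≠ z) : (U : Matrix ι ι K) i z₁ ≠ 0 :=
    (hU.apply_ne_zero_iff i).mpr (by simpa using hi)
  obtain ⟨j, hj⟩ := exists_apply_ne_zero g z
  have hgz (i : ι) (hi : i ≠ j) : (g : Matrix ι ι K) i z = 0 :=
    by_contra fun h => hi (hsing h hj)
  by_cases hjz : j = z
  · exact hjz ▸ hgz
  exfalso
  have hentry := hU.matrixWrt_apply_of_notMem g hz hgz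
  have hM₁ : matrixWrt U g z₁ z ≠ 0 := by
    rw [hentry]
    exact mul_ne_zero (star_ne_zero.mpr (hU₁ hjz)) hj
  have hMz : matrixWrt U g z z = 0 := by
    rw [hentry, hU.apply_of_notMem hz, Matrix.one_apply_ne hjz, star_zero, zero_mul]
  have hcol := mul_apply_eq_of_matrixWrt (h := U) (g := g) (b := z) (k := z₁) fun i hi => by
    by_contra hne
    rcases (hg hM₁ hne).mp (.inl rfl), hτ with ⟨rfl | rfl, hτ | hτ⟩
    · exact hi rfl
    · exact hi rfl
    · exact hne (hτ ▸ hMz)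
    · exact hi hτ
  have hsupp {i : ι} (hi : i ≠ z) : (g : Matrix ι ι K) i z ≠ 0 := by
    rw [← hU.mul_apply_of_notMem (g : Matrix ι ι K) hz, hcol]
    exact mul_ne_zero hM₁ (hU₁ hi)
  exact h₁₂ (hsing (hsupp h₂) (hsupp h₁))

theorem apply_self_eq (hU : IsSpreadOver (Finset.univ.erase z) (τ z) U)
    (hg : IsPairMonomial τ (matrixWrt U g)) (hD : ∀ j, IsDiagonalAt g j) {i i' : ι}
    (hi : i ≠ z) (hi' : i' ≠ z) : (g : Matrix ι ι K) i i = (g : Matrix ι ι K) i' i' := by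
  have hz : z ∉ Finset.univ.erase z := Finset.notMem_erase _ _
  have hU₁ {i : ι} : (U : Matrix ι ι K) i (τ z) ≠ 0 ↔ i ≠ z := by
    simpa using hU.apply_ne_zero_iff i
  have hMzz : matrixWrt U g z z ≠ 0 := by
    rw [hU.matrixWrt_apply_of_notMem g hz (hD z), hU.apply_of_notMem hz, Matrix.one_apply_eq,
      star_one, one_mul]
    exact (hD z).apply_self_ne_zero
  have hMz : matrixWrt U g z (τ z) = 0 := by
    refine (matrixWrt_apply U g z (τ z)).trans (Finset.sum_eq_zero fun x _ => ?_)
    rw [(hD x).mul_apply, hU.apply_of_notMem hz]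
    rcases eq_or_ne x z with rfl | hx
    · rw [not_not.mp (hU₁.not.mpr (not_not.mpr rfl)), mul_zero, mul_zero]
    · rw [Matrix.one_apply_ne hx, star_zero, zero_mul]
  have hcol := mul_apply_eq_of_matrixWrt (h := U) (g := g) (b := τ z) (k := τ z) fun i hi => by
    by_contra hne
    rcases (hg hMzz hne).mp (.inr rfl) with rfl | h
    · exact hne hMz
    · exact hi h
  have heq {i : ι} (hi : i ≠ z) : (g : Matrix ι ι K) i i = matrixWrt U g (τ z) (τ z) :=
    mul_right_cancel₀ (hU₁.mpr hi) (by rw [← (hD i).mul_apply, hcol])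
  rw [heq hi, heq hi']

end IsSpreadOver

end SpreadColumn

section FrameBases

variable {K : Type*} [Field K] [StarRing K] {n : ℕ}

/-- The involution of `Fin n` exchanging `s + 2 * i` and `s + 2 * i + 1` whenever both lie in
`[s, e)`, and fixing every other point. -/
def adjacentPairing (s e : ℕ) (he : e ≤ n) (j : Fin n) : Fin n :=
  ⟨if s ≤ j ∧ (j - s) % 2 = 0 ∧ j + 1 < e then j + 1
    else if s < j ∧ (j - s) % 2 = 1 ∧ j < e then j - 1 else j, by split_ifs <;> omega⟩

theorem val_adjacentPairing (s e : ℕ) (he : e ≤ n) (j : Fin n) :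
    (adjacentPairing s e he j : ℕ) =
      if s ≤ j ∧ (j - s : ℕ) % 2 = 0 ∧ (j : ℕ) + 1 < e then (j : ℕ) + 1
      else if s < j ∧ (j - s : ℕ) % 2 = 1 ∧ (j : ℕ) < e then (j : ℕ) - 1 else j :=
  rfl

theorem adjacentPairing_involutive (s e : ℕ) (he : e ≤ n) :
    Function.Involutive (adjacentPairing s e he) := by
  intro j
  have hj := val_adjacentPairing s e he j
  have hjj := val_adjacentPairing s e he (adjacentPairing s e he j)
  refine Fin.ext ?_
  rw [hjj]
  split_ifs at hj ⊢ <;> omega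

theorem adjacentPairing_eq_succ {s e : ℕ} (he : e ≤ n) {j k : Fin n} (hk : (k : ℕ) = j + 1)
    (hj : s ≤ j) (hpar : (j - s : ℕ) % 2 = 0) (hje : (j : ℕ) + 1 < e) :
    adjacentPairing s e he j = k :=
  Fin.ext <| by rw [val_adjacentPairing, if_pos ⟨hj, hpar, hje⟩, hk]

theorem adjacentPairing_zero_eq_self_iff {s : ℕ} (hs : s % 2 = 0) (hsn : s ≤ n) {j : Fin n} :
    adjacentPairing 0 s hsn j = j ↔ s ≤ j := by
  rw [Fin.ext_iff, val_adjacentPairing]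
  split_ifs <;> omega

theorem adjacentPairing_eq_self_of_lt {s e : ℕ} (he : e ≤ n) {j : Fin n} (hj : (j : ℕ) < s) :
    adjacentPairing s e he j = j := by
  rw [Fin.ext_iff, val_adjacentPairing]
  split_ifs <;> omega

theorem val_cycleRange [NeZero n] (t j : Fin n) : (t.cycleRange j : ℕ) =
    if (j : ℕ) < t then (j : ℕ) + 1 else if (j : ℕ) = t then 0 else j := by
  split_ifs with hlt heq
  · exact Fin.coe_cycleRange_of_lt hlt
  · rw [Fin.cycleRange_of_eq (Fin.ext heq), Fin.val_zero]
  · have hgt : t < j := lt_of_le_of_ne (not_lt.mp hlt) fun h => heq (congrArg Fin.val h.symm)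
    rw [Fin.cycleRange_of_gt hgt]

/-- `K ^ ι` has three further orthonormal bases such that only the scalar unitary matrices are
pair-monomial with respect to `τ` in all of them as well as in the standard basis. -/
def HasThreeFrameBase {ι : Type*} [Fintype ι] [DecidableEq ι] (K : Type*) [Field K] [StarRing K]
    (τ : ι → ι) : Prop :=
  ∃ h : Fin 3 → Matrix.unitaryGroup ι K, ∀ g : Matrix.unitaryGroup ι K,
    IsPairMonomial τ (g : Matrix ι ι K) → (∀ i, IsPairMonomial τ (matrixWrt (h i) g)) →
      g ∈ scalarUnitary ι K

theorem isDiagonalAt_of_le_of_cycleRange [NeZero n] {s : ℕ} (hs : s % 2 = 0) (hsn : s ≤ n)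
    {t : Fin n} (ht : (t : ℕ) ≤ s) {g : Matrix.unitaryGroup (Fin n) K}
    (hg : IsPairMonomial (adjacentPairing 0 s hsn) (g : Matrix (Fin n) (Fin n) K))
    (hgt : IsPairMonomial (adjacentPairing 0 s hsn) (matrixWrt (permUnitary t.cycleRange) g))
    (hD : IsDiagonalAt g 0) {j : Fin n} (hj : j ≤ t) : IsDiagonalAt g j := by
  rw [matrixWrt_permUnitary, isPairMonomial_submatrix_iff] at hgt
  obtain ⟨j, hjn⟩ := j
  induction j with
  | zero => exact hD
  | succ j ih =>
    have hjt : j + 1 ≤ (t : ℕ) := hj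
    have hDj := ih (by omega) (Fin.mk_le_of_le_val (by omega))
    by_cases hpar : j % 2 = 0
    · rw [← adjacentPairing_eq_succ hsn (j := ⟨j, by omega⟩) (k := ⟨j + 1, hjn⟩) rfl
        (Nat.zero_le _) hpar (by grind)]
      exact hg.isDiagonalAt_apply hDj
    · have hsymm : t.cycleRange.symm ⟨j, by omega⟩ = ⟨j - 1, by omega⟩ := by
        rw [Equiv.symm_apply_eq, Fin.ext_iff, val_cycleRange, if_pos] <;> grind
      have hnext : (t.cycleRange ∘ adjacentPairing 0 s hsn ∘ t.cycleRange.symm) ⟨j, by omega⟩ =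
          ⟨j + 1, hjn⟩ := by
        rw [Function.comp_apply, Function.comp_apply, hsymm,
          adjacentPairing_eq_succ (k := ⟨j, by omega⟩) hsn (by grind) (Nat.zero_le _) (by grind)
            (by grind), Fin.ext_iff, val_cycleRange]
        exact if_pos hjt
      exact hnext ▸ hgt.isDiagonalAt_apply hDj

section Tail

variable {s : Fin n} {U R R' : Matrix.unitaryGroup (Fin n) K}

theorem spread_mul_rotation_apply_of_lt (hU : IsSpreadOver (Finset.Iic s) s U)
    (hR : IsRotationAlong (adjacentPairing (s + 1) n le_rfl) R) {b : Fin n} (hb : s < b)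
    (i : Fin n) : ((U * R : Matrix.unitaryGroup (Fin n) K) : Matrix (Fin n) (Fin n) K) i b =
      (R : Matrix (Fin n) (Fin n) K) i b := by
  refine hU.mul_apply_of_forall_mem (fun x hx => ?_) i
  have hxs : (x : ℕ) < s + 1 := Nat.lt_succ_of_le (show x ≤ s from Finset.mem_Iic.mp hx)
  have hxb : x ≠ b := by grind
  refine hR.apply_eq_zero hxb fun h => hxb ?_
  rw [← adjacentPairing_involutive _ _ le_rfl b, ← h, adjacentPairing_eq_self_of_lt _ hxs]

theorem spread_mul_rotation_apply_self
    (hR : IsRotationAlong (adjacentPairing (s + 1) n le_rfl) R) (i : Fin n) :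
    ((U * R : Matrix.unitaryGroup (Fin n) K) : Matrix (Fin n) (Fin n) K) i s =
      (U : Matrix (Fin n) (Fin n) K) i s := by
  have hs := hR.apply_of_fixed (adjacentPairing_eq_self_of_lt le_rfl s.val.lt_succ_self)
  rw [Matrix.UnitaryGroup.mul_val, Matrix.mul_apply]
  simp only [hs, ← Matrix.mul_apply, mul_one]

variable {τ : Fin n → Fin n} {g : Matrix.unitaryGroup (Fin n) K}

theorem isDiagonalAt_succ_of_rotations (hτ : ∀ j, τ j = j ↔ s ≤ j) (h2 : (2 : K) ≠ 0)
    (h3 : (3 : K) ≠ 0) (hU : IsSpreadOver (Finset.Iic s) s U)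
    (hR : IsRotationAlong (adjacentPairing s n le_rfl) R)
    (hR' : IsRotationAlong (adjacentPairing (s + 1) n le_rfl) R')
    (hg : IsPairMonomial τ (matrixWrt R g)) (hg' : IsPairMonomial τ (matrixWrt (U * R') g))
    {j k : Fin n} (hj : s ≤ j) (hjk : (k : ℕ) = j + 1) (hD : IsDiagonalAt g j) :
    IsDiagonalAt g k ∧
      (g : Matrix (Fin n) (Fin n) K) k k = (g : Matrix (Fin n) (Fin n) K) j j := by
  have hkj : k ≠ j := by grind
  by_cases hpar : (j - s : ℕ) % 2 = 0
  · have hk : adjacentPairing s n le_rfl j = k :=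
      adjacentPairing_eq_succ _ hjk hj hpar (hjk ▸ k.isLt)
    simpa only [hk] using hg.isDiagonalAt_of_isRotationAlong hR (adjacentPairing_involutive _ _ _)
      h2 h3 ((hτ j).mpr hj) (hk ▸ hkj) (fun _ => rfl) (fun _ _ _ _ => rfl) hD
  · have hsj : s < j := by grind
    have hk : adjacentPairing (s + 1) n le_rfl j = k :=
      adjacentPairing_eq_succ _ hjk hsj (by grind) (hjk ▸ k.isLt)
    refine hk ▸ hg'.isDiagonalAt_of_isRotationAlong hR' (adjacentPairing_involutive _ _ _)
      h2 h3 ((hτ j).mpr hj) (hk ▸ hkj) (spread_mul_rotation_apply_of_lt hU hR' hsj)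
      (fun b hb hjb => spread_mul_rotation_apply_of_lt hU hR' ?_) hD
    refine lt_of_le_of_ne ((hτ b).mp hb) ?_
    rintro rfl
    rw [spread_mul_rotation_apply_self hR', hU.apply_ne_zero_iff, Finset.mem_Iic] at hjb
    exact hjb.not_gt hsj

theorem mem_scalarUnitary_of_rotations (hτ : ∀ j, τ j = j ↔ s ≤ j) (h2 : (2 : K) ≠ 0)
    (h3 : (3 : K) ≠ 0) (hU : IsSpreadOver (Finset.Iic s) s U)
    (hR : IsRotationAlong (adjacentPairing s n le_rfl) R)
    (hR' : IsRotationAlong (adjacentPairing (s + 1) n le_rfl) R')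
    (hg : IsPairMonomial τ (matrixWrt R g)) (hg' : IsPairMonomial τ (matrixWrt (U * R') g))
    (hD : ∀ j, j ≤ s → IsDiagonalAt g j) : g ∈ scalarUnitary (Fin n) K := by
  have htail (k : ℕ) (hk : s + k < n) : IsDiagonalAt g ⟨s + k, hk⟩ ∧
      (g : Matrix (Fin n) (Fin n) K) ⟨s + k, hk⟩ ⟨s + k, hk⟩ =
        (g : Matrix (Fin n) (Fin n) K) s s := by
    induction k with
    | zero => exact ⟨hD _ le_rfl, rfl⟩
    | succ k ih =>
      obtain ⟨hDk, hk⟩ := ih (by omega)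
      rw [← hk]
      exact isDiagonalAt_succ_of_rotations hτ h2 h3 hU hR hR' hg hg'
        (Nat.le_add_right _ _) rfl hDk
  have htail' {j : Fin n} (hj : s ≤ j) : IsDiagonalAt g j ∧
      (g : Matrix (Fin n) (Fin n) K) j j = (g : Matrix (Fin n) (Fin n) K) s s := by
    simpa only [Nat.add_sub_cancel' (show (s : ℕ) ≤ j from hj)] using htail (j - s) (by omega)
  have hDall (j : Fin n) : IsDiagonalAt g j :=
    (le_total j s).elim (hD j) fun h => (htail' h).1
  have hUs {i : Fin n} (hi : i ≤ s) : (U : Matrix (Fin n) (Fin n) K) i s ≠ 0 :=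
    (hU.apply_ne_zero_iff i).mpr (Finset.mem_Iic.mpr hi)
  obtain ⟨k, hk, hsk, c, hc⟩ := hg'.exists_column_of_isDiagonalAt ((hτ s).mpr le_rfl) (hDall s)
    (by rw [spread_mul_rotation_apply_self hR']; exact hUs le_rfl)
  obtain rfl : s = k := by
    by_contra hne
    have hlt := lt_of_le_of_ne ((hτ k).mp hk) hne
    rw [spread_mul_rotation_apply_of_lt hU hR' hlt] at hsk
    refine hsk (hR'.apply_eq_zero hne fun h => hne ?_)
    rw [← adjacentPairing_involutive _ _ le_rfl k, ← h,
      adjacentPairing_eq_self_of_lt _ s.val.lt_succ_self]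
  have hhead {i : Fin n} (hi : i ≤ s) : (g : Matrix (Fin n) (Fin n) K) i i = c := by
    refine mul_right_cancel₀ (hUs hi) ?_
    rw [← spread_mul_rotation_apply_self hR', ← (hDall i).mul_apply, hc]
  exact mem_scalarUnitary_of_isDiagonalAt hDall fun j =>
    (le_total j s).elim hhead fun h => (htail' h).2.trans (hhead le_rfl)

end Tail

theorem isDiagonalAt_zero_of_cycleRange [NeZero n] {s : Fin n} (hs : (s : ℕ) % 2 = 0) (hs0 : s ≠ 0)
    {g : Matrix.unitaryGroup (Fin n) K}
    (hg : IsPairMonomial (adjacentPairing 0 s s.isLt.le) (g : Matrix (Fin n) (Fin n) K))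
    (hgs : IsPairMonomial (adjacentPairing 0 s s.isLt.le)
      (matrixWrt (permUnitary s.cycleRange) g)) : IsDiagonalAt g 0 := by
  obtain ⟨k, hk, c, hc⟩ :=
    hgs.exists_column ((adjacentPairing_zero_eq_self_iff hs s.isLt.le).mpr le_rfl)
  have hcol (i : Fin n) : (g : Matrix (Fin n) (Fin n) K) i 0 =
      c * if i = s.cycleRange k then 1 else 0 := by
    rw [← permUnitary_apply, ← hc, mul_permUnitary_apply, Fin.cycleRange_self]
  by_cases hk0 : s.cycleRange k = 0
  · intro i hi
    rw [hcol, if_neg (hk0 ▸ hi), mul_zero]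
  · exfalso
    have hks : s < k := by
      refine lt_of_le_of_ne ((adjacentPairing_zero_eq_self_iff hs s.isLt.le).mp hk) ?_
      rintro rfl
      exact hk0 (Fin.cycleRange_self _)
    obtain ⟨i, hi⟩ := exists_apply_ne_zero g 0
    obtain rfl : i = k := by
      by_contra hik
      exact hi (by rw [hcol, Fin.cycleRange_of_gt hks, if_neg hik, mul_zero])
    exact hs0 (nonpos_iff_eq_zero.mp
      ((adjacentPairing_zero_eq_self_iff hs s.isLt.le).mp ((hg.apply_eq_iff hi).mp hk)))

theorem exists_forall_isDiagonalAt_of_le (hn : 3 ≤ n) {s : Fin n} (hs : (s : ℕ) % 2 = 0)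
    (h2 : (2 : K) ≠ 0) (hnorm : ∀ a : K, star a = a → ∃ b, b * star b = a) :
    ∃ h : Matrix.unitaryGroup (Fin n) K, ∀ g : Matrix.unitaryGroup (Fin n) K,
      IsPairMonomial (adjacentPairing 0 s s.isLt.le) (g : Matrix (Fin n) (Fin n) K) →
      IsPairMonomial (adjacentPairing 0 s s.isLt.le) (matrixWrt h g) →
      ∀ j, j ≤ s → IsDiagonalAt g j := by
  have : NeZero n := ⟨by omega⟩
  by_cases hs0 : s = 0
  · subst hs0
    have hfix (j : Fin n) : adjacentPairing 0 _ (0 : Fin n).isLt.le j = j :=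
      (adjacentPairing_zero_eq_self_iff hs _).mpr (Nat.zero_le _)
    obtain ⟨h, hh⟩ := exists_isSpreadOver (K := K) (S := Finset.univ.erase (0 : Fin n))
      (s := ⟨1, by omega⟩) (by simp [Fin.ext_iff]) h2 hnorm
    refine ⟨h, fun g hg hgh j hj => ?_⟩
    rw [nonpos_iff_eq_zero.mp hj]
    exact hh.isDiagonalAt (z₂ := ⟨2, by omega⟩) hgh (.inr (hfix _)) (by simp [Fin.ext_iff])
      (by simp [Fin.ext_iff]) (by simp) fun a a' ha ha' => by
        simpa only [hfix, or_self] using ((hg ha ha').mp (.inl rfl)).imp Eq.symm Eq.symm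
  · exact ⟨permUnitary s.cycleRange, fun g hg hgh j =>
      isDiagonalAt_of_le_of_cycleRange hs s.isLt.le le_rfl hg hgh
        (isDiagonalAt_zero_of_cycleRange hs hs0 hg hgh)⟩

theorem hasThreeFrameBase_adjacentPairing_of_lt (hn : 3 ≤ n) (s : Fin n) (hs : (s : ℕ) % 2 = 0)
    (h2 : (2 : K) ≠ 0) (h3 : (3 : K) ≠ 0)
    (hnorm : ∀ a : K, star a = a → ∃ b, b * star b = a) :
    HasThreeFrameBase K (adjacentPairing 0 s s.isLt.le) := by
  obtain ⟨α, hα⟩ := hnorm 2 (by simp)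
  obtain ⟨β, hβ⟩ := hnorm (-1) (by simp)
  obtain ⟨h, hh⟩ := exists_forall_isDiagonalAt_of_le hn hs h2 hnorm
  obtain ⟨R, hR⟩ := exists_isRotationAlong (adjacentPairing_involutive s n le_rfl) hα hβ
  obtain ⟨R', hR'⟩ := exists_isRotationAlong (adjacentPairing_involutive (s + 1) n le_rfl) hα hβ
  obtain ⟨U, hU⟩ := exists_isSpreadOver (Finset.mem_Iic.mpr (le_refl s)) h2 hnorm
  exact ⟨![h, R, U * R'], fun g hg hgi => mem_scalarUnitary_of_rotations
    (fun j => adjacentPairing_zero_eq_self_iff hs s.isLt.le) h2 h3 hU hR hR' (hgi 1) (hgi 2)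
    (hh g hg (hgi 0))⟩

theorem adjacentPairing_cycleRange_ne [NeZero n] (hn : 4 ≤ n) (hpar : n % 2 = 0) {t : Fin n}
    (ht : (t : ℕ) + 1 = n) (b : Fin n) : adjacentPairing 0 n le_rfl (t.cycleRange b) ≠
      t.cycleRange (adjacentPairing 0 n le_rfl b) := by
  intro h
  have hb := val_cycleRange t b
  have hτb := val_adjacentPairing 0 n le_rfl b
  have hκτb := val_cycleRange t (adjacentPairing 0 n le_rfl b)
  have hτκb := val_adjacentPairing 0 n le_rfl (t.cycleRange b)
  rw [h] at hτκb
  split_ifs at hb hτb hκτb hτκb <;> omega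

theorem hasThreeFrameBase_adjacentPairing_self (hn : 4 ≤ n) (hpar : n % 2 = 0)
    (h2 : (2 : K) ≠ 0) (hnorm : ∀ a : K, star a = a → ∃ b, b * star b = a) :
    HasThreeFrameBase K (adjacentPairing 0 n le_rfl) := by
  have : NeZero n := ⟨by omega⟩
  set τ : Fin n → Fin n := adjacentPairing 0 n le_rfl
  have hinv : Function.Involutive τ := adjacentPairing_involutive 0 n le_rfl
  have hτ₀ : τ 0 = ⟨1, by omega⟩ := adjacentPairing_eq_succ _ (by simp) (by simp) (by simp)
    (by simp; omega)
  let z : Fin n := ⟨2, by omega⟩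
  have hτz : τ z = ⟨3, by omega⟩ :=
    adjacentPairing_eq_succ _ rfl (Nat.zero_le _) (by simp [z]) (show 2 + 1 < n by omega)
  let t : Fin n := ⟨n - 1, by omega⟩
  obtain ⟨U, hU⟩ := exists_isSpreadOver (K := K) (S := Finset.univ.erase 0) (s := τ 0)
    (by simp [hτ₀, Fin.ext_iff]) h2 hnorm
  obtain ⟨U', hU'⟩ := exists_isSpreadOver (K := K) (S := Finset.univ.erase z) (s := τ z)
    (by simp [hτz, z]) h2 hnorm
  refine ⟨![permUnitary t.cycleRange, U, U'], fun g hg hgi => ?_⟩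
  have hsing ⦃a a' : Fin n⦄ (ha : (g : Matrix (Fin n) (Fin n) K) a 0 ≠ 0)
      (ha' : (g : Matrix (Fin n) (Fin n) K) a' 0 ≠ 0) : a = a' := by
    have hgκ : IsPairMonomial (t.cycleRange ∘ τ ∘ t.cycleRange.symm) (g : Matrix _ _ K) := by
      rw [← isPairMonomial_submatrix_iff, ← matrixWrt_permUnitary]
      exact hgi 0
    by_contra hne
    have hτa := ((hg ha ha').mp (.inl rfl)).resolve_left (Ne.symm hne)
    have hκa := ((hgκ ha ha').mp (.inl rfl)).resolve_left (Ne.symm hne)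
    obtain ⟨b, rfl⟩ := t.cycleRange.surjective a
    refine adjacentPairing_cycleRange_ne hn hpar (t := t) (by grind) b ?_
    simpa using hτa.symm.trans hκa
  have hD (j : Fin n) : IsDiagonalAt g j :=
    isDiagonalAt_of_le_of_cycleRange hpar le_rfl (t := t) (by grind) hg (hgi 0)
      (hU.isDiagonalAt (z₂ := z) (hgi 1) (.inl (hinv 0)) (by simp [hτ₀, Fin.ext_iff])
        (by simp [z, Fin.ext_iff]) (by simp [hτ₀, z]) hsing) (Fin.mk_le_of_le_val (by grind))
  refine mem_scalarUnitary_of_isDiagonalAt (c := (g : Matrix (Fin n) (Fin n) K) ⟨1, by omega⟩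
    ⟨1, by omega⟩) hD fun j => ?_
  by_cases hj : j = 0
  · exact hU'.apply_self_eq (hgi 2) hD (i' := ⟨1, by omega⟩) (by simp [hj, z, Fin.ext_iff])
      (by simp [z])
  · exact hU.apply_self_eq (hgi 1) hD hj (by simp [Fin.ext_iff])

theorem HasThreeFrameBase.conj {ι : Type*} [Fintype ι] [DecidableEq ι] {τ : ι → ι}
    (h : HasThreeFrameBase K τ) (κ : Equiv.Perm ι) : HasThreeFrameBase K (κ ∘ τ ∘ κ.symm) := by
  obtain ⟨h, hh⟩ := h
  set P : Matrix.unitaryGroup ι K := permUnitary κ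
  refine ⟨fun i => P * h i * P⁻¹, fun g hg hgi => ?_⟩
  have hscalar : P⁻¹ * g * P ∈ scalarUnitary ι K := by
    refine hh _ ?_ fun i => ?_
    · have hPg := (isPairMonomial_submatrix_iff κ (g : Matrix ι ι K)).mpr hg
      rwa [← matrixWrt_permUnitary] at hPg
    · have hPgi := (isPairMonomial_submatrix_iff κ _).mpr (hgi i)
      rw [matrixWrt, ← matrixWrt_permUnitary] at hPgi
      have hconj : P⁻¹ * ((P * h i * P⁻¹)⁻¹ * g * (P * h i * P⁻¹)) * P =
          (h i)⁻¹ * (P⁻¹ * g * P) * h i := by group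
      rwa [matrixWrt, hconj] at hPgi
  have hg' : P⁻¹ * g * P = g := by
    refine mul_right_cancel (b := P) ?_
    rw [(commute_of_mem_scalarUnitary hscalar P).eq]
    group
  rwa [hg'] at hscalar

theorem cycleType_of_involutive {ι : Type*} [Fintype ι] [DecidableEq ι] {σ : Equiv.Perm ι}
    (hσ : Function.Involutive σ) :
    σ.cycleType = Multiset.replicate (σ.support.card / 2) 2 := by
  have hσ2 : σ ^ 2 = 1 := Equiv.ext fun x => by rw [pow_two]; exact hσ x
  have htwo : ∀ m ∈ σ.cycleType, m = 2 := fun m hm =>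
    le_antisymm (Nat.le_of_dvd two_pos ((Equiv.Perm.dvd_of_mem_cycleType hm).trans
      (orderOf_dvd_of_pow_eq_one hσ2))) (Equiv.Perm.two_le_of_mem_cycleType hm)
  have hrep := Multiset.eq_replicate_card.mpr htwo
  have hsum := σ.sum_cycleType
  rw [hrep, Multiset.sum_replicate, smul_eq_mul] at hsum
  rwa [← hsum, Nat.mul_div_cancel _ two_pos]

theorem exists_eq_conj_adjacentPairing {τ : Fin n → Fin n} (hτ : Function.Involutive τ) :
    ∃ (s : ℕ) (hs : s ≤ n) (κ : Equiv.Perm (Fin n)),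
      s % 2 = 0 ∧ τ = κ ∘ adjacentPairing 0 s hs ∘ κ.symm := by
  set σ := hτ.toPerm τ
  have hσ := cycleType_of_involutive (σ := σ) hτ
  have hsum := σ.sum_cycleType
  rw [hσ, Multiset.sum_replicate, smul_eq_mul] at hsum
  have hpar : σ.support.card % 2 = 0 := by omega
  have hsn : σ.support.card ≤ n := by simpa using Finset.card_le_univ σ.support
  have hinv := adjacentPairing_involutive 0 σ.support.card hsn
  have hsupp : (hinv.toPerm _).support.card = σ.support.card := by
    have hfilter : (hinv.toPerm _).support =
        Finset.univ.filter fun i : Fin n => (i : ℕ) < σ.support.card := by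
      ext i
      simp [Equiv.Perm.mem_support, adjacentPairing_zero_eq_self_iff hpar hsn]
    rw [hfilter, Fin.card_filter_val_lt, min_eq_right hsn]
  obtain ⟨κ, hκ⟩ := isConj_iff.mp (Equiv.Perm.isConj_iff_cycleType_eq.mpr
    ((cycleType_of_involutive (σ := hinv.toPerm _) hinv).trans (by rw [hsupp, hσ])))
  exact ⟨_, hsn, κ, hpar, funext fun x => (congrArg (fun e : Equiv.Perm (Fin n) => e x) hκ).symm⟩

theorem hasThreeFrameBase_of_involutive (hn : 3 ≤ n) {τ : Fin n → Fin n}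
    (hτ : Function.Involutive τ) (h2 : (2 : K) ≠ 0) (h3 : (3 : K) ≠ 0)
    (hnorm : ∀ a : K, star a = a → ∃ b, b * star b = a) : HasThreeFrameBase K τ := by
  obtain ⟨s, hs, κ, hpar, rfl⟩ := exists_eq_conj_adjacentPairing hτ
  refine HasThreeFrameBase.conj ?_ κ
  rcases hs.lt_or_eq with hlt | rfl
  · exact hasThreeFrameBase_adjacentPairing_of_lt hn ⟨s, hlt⟩ hpar h2 h3 hnorm
  · exact hasThreeFrameBase_adjacentPairing_self (by omega) hpar h2 hnorm

end FrameBases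

section ThreeConjugates

theorem exists_forall_mem_conj_of_isPGroup {G : Type*} [Group G] {p : ℕ} [Fact p.Prime]
    {H P : Subgroup G} (hP : IsPGroup p P) (hH : ¬ p ∣ H.index) :
    ∃ u : G, ∀ g ∈ P, u⁻¹ * g * u ∈ H := by
  obtain ⟨x, hx⟩ := hP.nonempty_fixed_point_of_prime_not_dvd_card (G ⧸ H) hH
  induction x using QuotientGroup.induction_on with
  | H u =>
    refine ⟨u, fun g hg => ?_⟩
    have hfix : ((g * u : G) : G ⧸ H) = u := hx ⟨g, hg⟩
    simpa [mul_assoc] using QuotientGroup.eq.mp hfix.symm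

variable {K : Type*} [Field K] [StarRing K] {ι : Type*} [Fintype ι] [DecidableEq ι]

theorem IsPairMonomial.of_matrixWrt_mul_diagonalUnitary {τ : ι → ι}
    {h g : Matrix.unitaryGroup ι K} {d : ι → unitary K}
    (hM : IsPairMonomial τ (matrixWrt (h * diagonalUnitary d) g)) :
    IsPairMonomial τ (matrixWrt h g) := by
  have hconj : matrixWrt (h * diagonalUnitary d) g =
      star (Matrix.diagonal fun i => (d i : K)) * matrixWrt h g *
        Matrix.diagonal fun i => (d i : K) := by
    have hgroup : (h * diagonalUnitary d)⁻¹ * g * (h * diagonalUnitary d) =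
        (diagonalUnitary d)⁻¹ * (h⁻¹ * g * h) * diagonalUnitary d := by group
    rw [matrixWrt, hgroup]
    rfl
  have hd (i : ι) : (d i : K) ≠ 0 := fun h0 =>
    zero_ne_one (α := K) (by simpa [h0] using Unitary.mul_star_self_of_mem (d i).2)
  have hne ⦃a b : ι⦄ (hab : matrixWrt h g a b ≠ 0) :
      matrixWrt (h * diagonalUnitary d) g a b ≠ 0 := by
    rw [hconj, Matrix.star_eq_conjTranspose, Matrix.diagonal_conjTranspose, Matrix.mul_diagonal,
      Matrix.diagonal_mul]
    exact mul_ne_zero (mul_ne_zero (star_ne_zero.mpr (hd a)) hab) (hd b)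
  exact fun a b a' b' hab hab' => hM (hne hab) (hne hab')

theorem exists_det_mul_diagonalUnitary_eq_one [Nonempty ι] (h : Matrix.unitaryGroup ι K) :
    ∃ d : ι → unitary K,
      ((h * diagonalUnitary d : Matrix.unitaryGroup ι K) : Matrix ι ι K).det = 1 := by
  let δ : unitary K := ⟨_, Matrix.det_of_mem_unitary h.2⟩
  refine ⟨Pi.mulSingle (Classical.arbitrary ι) (star δ), ?_⟩
  have hprod : ∏ i, Pi.mulSingle (M := fun _ => unitary K) (Classical.arbitrary ι) (star δ) i =
      star δ := by
    rw [Finset.prod_pi_mulSingle', if_pos (Finset.mem_univ _)]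
  rw [Matrix.UnitaryGroup.mul_val, Matrix.det_mul, coe_diagonalUnitary, Matrix.det_diagonal,
    ← Submonoid.coe_finsetProd, hprod]
  exact Unitary.mul_star_self_of_mem δ.2

-- For `h` of determinant one, `B * h⁻¹ * B⁻¹` conjugates `H` to a group that is monomial on pairs
-- with respect to the basis `B * h`.
theorem exists_det_eq_one_forall_isPairMonomial [Nonempty ι] {τ : ι → ι}
    {H : Subgroup (Matrix.unitaryGroup ι K)} {B : Matrix.unitaryGroup ι K}
    (hH : ∀ g ∈ H, IsPairMonomial τ (matrixWrt B g)) (h : Matrix.unitaryGroup ι K) :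
    ∃ x : Matrix.unitaryGroup ι K, (x : Matrix ι ι K).det = 1 ∧
      ∀ g, x * g * x⁻¹ ∈ H → IsPairMonomial τ (matrixWrt h (B⁻¹ * g * B)) := by
  obtain ⟨d, hd⟩ := exists_det_mul_diagonalUnitary_eq_one h
  set k := h * diagonalUnitary d
  refine ⟨B * k⁻¹ * B⁻¹, ?_, fun g hg => .of_matrixWrt_mul_diagonalUnitary (d := d) ?_⟩
  · have hgroup : B * k⁻¹ * B⁻¹ * (B * k) = B := by group
    have hdet := congrArg (fun u : Matrix.unitaryGroup ι K => (u : Matrix ι ι K).det) hgroup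
    simp only [Matrix.UnitaryGroup.mul_val (B * k⁻¹ * B⁻¹), Matrix.UnitaryGroup.mul_val B k,
      Matrix.det_mul, hd, mul_one] at hdet
    exact (mul_eq_right₀ (Matrix.UnitaryGroup.det_isUnit B).ne_zero).mp hdet
  · have hgroup : B⁻¹ * (B * k⁻¹ * B⁻¹ * g * (B * k⁻¹ * B⁻¹)⁻¹) * B =
        k⁻¹ * (B⁻¹ * g * B) * k := by group
    have hmono := hH _ hg
    rwa [matrixWrt, hgroup] at hmono

theorem HasThreeFrameBase.exists_forall_mem_scalarUnitary [Nonempty ι] {τ : ι → ι}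
    (hτ : HasThreeFrameBase K τ) {H : Subgroup (Matrix.unitaryGroup ι K)}
    {B : Matrix.unitaryGroup ι K} (hH : ∀ g ∈ H, IsPairMonomial τ (matrixWrt B g)) :
    ∃ x : Fin 3 → Matrix.unitaryGroup ι K, (∀ i, (x i : Matrix ι ι K).det = 1) ∧
      ∀ g ∈ H, (∀ i, x i * g * (x i)⁻¹ ∈ H) → g ∈ scalarUnitary ι K := by
  obtain ⟨h, hh⟩ := hτ
  choose x hdet hx using fun i => exists_det_eq_one_forall_isPairMonomial hH (h i)
  refine ⟨x, hdet, fun g hg hgx => ?_⟩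
  have hscalar : B⁻¹ * g * B ∈ scalarUnitary ι K := hh _ (hH g hg) fun i => hx i g (hgx i)
  have hBg : B⁻¹ * g * B = g := by
    refine mul_right_cancel (b := B) ?_
    rw [(commute_of_mem_scalarUnitary hscalar B).eq]
    group
  rwa [hBg] at hscalar

theorem HasExtraSymmetry.mono {G G' : Subgroup (Matrix.unitaryGroup ι K)} {i : ι}
    (h : HasExtraSymmetry G i) (hle : G ≤ G') : HasExtraSymmetry G' i := by
  rcases h with ⟨c, hc, hcG⟩ | ⟨j, hij, x, y, hx, hy, hxy, hx0, hy0, ⟨r, hr, hr'⟩, g, hg, hg'⟩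
  · exact .inl ⟨c, hc, hle hcG⟩
  · exact .inr ⟨j, hij, x, y, hx, hy, hxy, hx0, hy0, ⟨r, hle hr, hr'⟩, g, hle hg, hg'⟩

theorem exists_isPairMonomial_of_isPGroup_two [Finite K] {H P : Subgroup (Matrix.unitaryGroup ι K)}
    (hsolv : Group.IsSolvable H) (hindex : ¬ 2 ∣ H.index) (hcard : (Nat.card H : K) ≠ 0)
    (h2 : (2 : K) ≠ 0) (hnorm : ∀ a : K, star a = a → ∃ b, b * star b = a) (hP : IsPGroup 2 P)
    (hneg : ∀ i, coordUnitary i (-1 : unitary K) ∈ P) {o : ι}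
    (hext : ∀ i, i ≠ o → HasExtraSymmetry P i) :
    ∃ (B : Matrix.unitaryGroup ι K) (τ : ι → ι), Function.Involutive τ ∧
      ∀ g ∈ H, IsPairMonomial τ (matrixWrt B g) := by
  obtain ⟨u, hu⟩ := exists_forall_mem_conj_of_isPGroup hP hindex
  let c := (MulAut.conj u).toMonoidHom
  have hle : P ≤ H.map c := fun g hg => ⟨u⁻¹ * g * u, hu g hg, by simp [c, mul_assoc]⟩
  have hG : IsReflectionGroup (H.map c) := by
    refine ⟨h2, ?_, fun i => hle (hneg i)⟩
    rintro _ ⟨g, hg, rfl⟩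
    have hpow : g ^ Nat.card H = 1 := congrArg Subtype.val (pow_card_eq_one' (x := (⟨g, hg⟩ : H)))
    exact ⟨Nat.card H, hcard, by rw [← map_pow, hpow, map_one]⟩
  have h2star : star (2 : K) = 2 := by rw [← one_add_one_eq_two, star_add, star_one]
  obtain ⟨b, hb⟩ := hnorm 2 h2star
  obtain ⟨B, τ, hτ, hB⟩ := hG.exists_isPairMonomial
    (Group.isSolvable_of_surjective (c.subgroupMap_surjective H)) (fun i hi => (hext i hi).mono hle)
    hb
  refine ⟨u⁻¹ * B, τ, hτ, fun g hg => ?_⟩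
  have hconj : (u⁻¹ * B)⁻¹ * g * (u⁻¹ * B) = B⁻¹ * c g * B := by
    simp [c, mul_assoc]
  rw [matrixWrt, hconj]
  exact hB _ ⟨g, hg, rfl⟩

end ThreeConjugates

section TwoSubgroups

theorem isPGroup_closure_of_commute {G : Type*} [Group G] {p e : ℕ} {S : Set G}
    (hcomm : ∀ a ∈ S, ∀ b ∈ S, a * b = b * a) (hpow : ∀ a ∈ S, a ^ p ^ e = 1) :
    IsPGroup p (Subgroup.closure S) := by
  have := Subgroup.isMulCommutative_closure hcomm
  refine fun g => ⟨e, Subtype.ext ?_⟩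
  obtain ⟨g, hg⟩ := g
  change g ^ p ^ e = 1
  induction hg using Subgroup.closure_induction with
  | mem a ha => exact hpow a ha
  | one => exact one_pow _
  | mul a b ha hb iha ihb =>
    have hab : Commute a b := setLike_mul_comm ha hb
    rw [hab.mul_pow, iha, ihb, one_mul]
  | inv a _ iha => rw [inv_pow, iha, inv_one]

section Diagonal

variable {K : Type*} [Field K] [StarRing K] {ι : Type*} [Fintype ι] [DecidableEq ι] {e : ℕ}

/-- The diagonal unitary matrices of exponent `2 ^ e`; a 2-group that serves as a source of
coordinate matrices. -/
def diagonalTwoGroup (ι K : Type*) [Fintype ι] [DecidableEq ι] [Field K] [StarRing K] (e : ℕ) :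
    Subgroup (Matrix.unitaryGroup ι K) :=
  (powMonoidHom (2 ^ e) : (ι → unitary K) →* (ι → unitary K)).ker.map diagonalUnitary

theorem isPGroup_diagonalTwoGroup : IsPGroup 2 (diagonalTwoGroup ι K e) :=
  IsPGroup.map (fun d => ⟨e, Subtype.ext d.2⟩) _

theorem coordUnitary_mem_diagonalTwoGroup {c : unitary K} (hc : c ^ 2 ^ e = 1) (i : ι) :
    coordUnitary i c ∈ diagonalTwoGroup ι K e := by
  refine ⟨Pi.mulSingle (M := fun _ => unitary K) i c, ?_, rfl⟩
  change Pi.mulSingle (M := fun _ => unitary K) i c ^ 2 ^ e = 1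
  rw [← Pi.mulSingle_pow, hc, Pi.mulSingle_one]

theorem exists_isPGroup_two_of_star_eq_neg {I : K} (hI : I * I = -1) (hstar : star I = -I) :
    ∃ P : Subgroup (Matrix.unitaryGroup ι K), IsPGroup 2 P ∧
      (∀ i, coordUnitary i (-1 : unitary K) ∈ P) ∧ ∀ i, HasExtraSymmetry P i := by
  have hu : I ∈ unitary K := by
    rw [Unitary.mem_iff, hstar]
    simp [hI]
  let c : unitary K := ⟨I, hu⟩
  have hc : c ^ 2 = -1 := Subtype.ext (by simp [c, sq, hI, Unitary.coe_neg])
  have hc4 : c ^ 2 ^ 2 = 1 := by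
    rw [show 2 ^ 2 = 2 * 2 from rfl, pow_mul, hc, neg_one_sq]
  exact ⟨diagonalTwoGroup ι K 2, isPGroup_diagonalTwoGroup,
    coordUnitary_mem_diagonalTwoGroup (even_two.pow_of_ne_zero two_ne_zero).neg_one_pow,
    fun i => .inl ⟨c, hI, coordUnitary_mem_diagonalTwoGroup hc4 i⟩⟩

end Diagonal

section PlaneRotation

variable {K : Type*} [Field K] {ι : Type*} [DecidableEq ι] {i j k l : ι}

theorem planeRotation_swap (x y : K) : planeRotation j i x y = planeRotation i j x (-y) := by
  simp only [planeRotation, planeMatrix]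
  module

theorem planeRotation_one_zero : planeRotation i j (1 : K) 0 = 1 := by
  rw [planeRotation, sub_self, planeMatrix_eq_zero, add_zero]

variable [Fintype ι]

theorem planeRotation_mul (hij : i ≠ j) (x y x' y' : K) :
    planeRotation i j x y * planeRotation i j x' y' =
      planeRotation i j (x * x' - y * y') (x * y' + y * x') := by
  rw [planeRotation, one_add_mul, planeMatrix_mul_planeRotation hij, planeRotation, add_assoc,
    planeMatrix_add, planeRotation]
  congr 2 <;> ring

theorem commute_planeRotation_self (hij : i ≠ j) (x y x' y' : K) :
    Commute (planeRotation i j x y) (planeRotation i j x' y') := by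
  rw [Commute, SemiconjBy, planeRotation_mul hij, planeRotation_mul hij]
  congr 1 <;> ring

theorem planeMatrix_mul_eq_zero (hik : i ≠ k) (hil : i ≠ l) (hjk : j ≠ k) (hjl : j ≠ l)
    (u v u' v' : K) : planeMatrix i j u v * planeMatrix k l u' v' = 0 := by
  simp only [planeMatrix, add_mul, mul_add, sub_mul, mul_sub, smul_mul_assoc, mul_smul_comm,
    Matrix.single_mul_single_of_ne _ _ _ _ hik, Matrix.single_mul_single_of_ne _ _ _ _ hil,
    Matrix.single_mul_single_of_ne _ _ _ _ hjk, Matrix.single_mul_single_of_ne _ _ _ _ hjl]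
  simp

theorem commute_planeRotation (hik : i ≠ k) (hil : i ≠ l) (hjk : j ≠ k) (hjl : j ≠ l)
    (x y x' y' : K) : Commute (planeRotation i j x y) (planeRotation k l x' y') := by
  refine (Commute.one_left _).add_left ((Commute.one_right _).add_right ?_)
  rw [Commute, SemiconjBy, planeMatrix_mul_eq_zero hik hil hjk hjl,
    planeMatrix_mul_eq_zero hik.symm hjk.symm hil.symm hjl.symm]

theorem diagonal_mul_planeRotation_mul_diagonal {d : ι → K} (hd : ∀ i, d i * d i = 1) (x y : K) :
    Matrix.diagonal d * planeRotation i j x y * Matrix.diagonal d =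
      planeRotation i j x (d i * d j * y) := by
  have hsingle (k l : ι) : Matrix.diagonal d * Matrix.single k l (1 : K) * Matrix.diagonal d =
      (d k * d l) • Matrix.single k l 1 := by
    ext a b
    rw [Matrix.mul_diagonal, Matrix.diagonal_mul, Matrix.smul_apply, Matrix.single_apply]
    split_ifs with h
    · rw [h.1, h.2, smul_eq_mul]; ring
    · simp
  have hone : Matrix.diagonal d * Matrix.diagonal d = 1 := by simp [hd]
  simp only [planeRotation, planeMatrix, mul_add, add_mul, mul_sub, sub_mul, smul_mul_assoc,
    mul_smul_comm, hsingle, hd, mul_one, hone, mul_comm (d j) (d i)]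
  module

theorem planeRotation_pow (hij : i ≠ j) (h2 : (2 : K) ≠ 0) {I : K} (hI : I * I = -1) (a b : K)
    (N : ℕ) : planeRotation i j ((a + b) / 2) ((a - b) / (2 * I)) ^ N =
      planeRotation i j ((a ^ N + b ^ N) / 2) ((a ^ N - b ^ N) / (2 * I)) := by
  have hI0 : I ≠ 0 := by rintro rfl; simp at hI
  induction N with
  | zero => simp [one_add_one_eq_two, h2, planeRotation_one_zero]
  | succ N ih =>
    rw [pow_succ, ih, planeRotation_mul hij]
    congr 1
    · field_simp
      linear_combination -(a ^ N - b ^ N) * (a - b) * hI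
    · field_simp
      ring

theorem planeRotation_mem_unitaryGroup [StarRing K] (hij : i ≠ j) {x y : K}
    (hxy : x * star x + y * star y = 1) (hyx : y * star x = x * star y) :
    planeRotation i j x y ∈ Matrix.unitaryGroup ι K := by
  rw [Matrix.mem_unitaryGroup_iff, star_planeRotation, planeRotation_mul hij,
    ← planeRotation_one_zero (i := i) (j := j)]
  congr 1
  · linear_combination hxy
  · linear_combination hyx

end PlaneRotation

section RotationTwoGroup

variable {K : Type*} [Field K] [StarRing K] {ι : Type*} [Fintype ι] [DecidableEq ι] {τ : ι → ι}
  {e : ℕ}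

/-- The unitary rotations of exponent `2 ^ e` of the coordinate planes `(i, τ i)`. -/
def pairRotations (K : Type*) [Field K] [StarRing K] (τ : ι → ι) (e : ℕ) :
    Set (Matrix.unitaryGroup ι K) :=
  {g | g ^ 2 ^ e = 1 ∧ ∃ i x y, i ≠ τ i ∧ (g : Matrix ι ι K) = planeRotation i (τ i) x y}

theorem mul_comm_of_mem_pairRotations (hτ : Function.Involutive τ)
    {g g' : Matrix.unitaryGroup ι K} (hg : g ∈ pairRotations K τ e)
    (hg' : g' ∈ pairRotations K τ e) : g * g' = g' * g := by
  obtain ⟨-, i, x, y, hi, hgi⟩ := hg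
  obtain ⟨-, j, x', y', hj, hgj⟩ := hg'
  refine Subtype.ext ?_
  rw [Matrix.UnitaryGroup.mul_val, Matrix.UnitaryGroup.mul_val, hgi, hgj]
  rcases eq_or_ne i j with rfl | hij
  · exact (commute_planeRotation_self hi x y x' y').eq
  rcases eq_or_ne (τ i) j with rfl | hij'
  · rw [hτ i, planeRotation_swap (i := i) (j := τ i) x' y']
    exact (commute_planeRotation_self hi x y x' (-y')).eq
  · exact (commute_planeRotation hij (fun h => hij' (by rw [h, hτ j])) hij'
      (hτ.injective.ne hij) x y x' y').eq

theorem diagonalTwoGroup_le_normalizer_closure_pairRotations :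
    diagonalTwoGroup ι K 1 ≤ Subgroup.normalizer (Subgroup.closure (pairRotations K τ e)) := by
  rw [Subgroup.le_normalizer_closure_iff]
  rintro _ ⟨d, hd, rfl⟩ g ⟨hpow, i, x, y, hi, hg⟩
  have hd2 : d * d = 1 := by simpa [sq] using hd
  have hinv : (diagonalUnitary d)⁻¹ = diagonalUnitary d := by
    rw [← map_inv, inv_eq_of_mul_eq_one_left hd2]
  have hdd (k : ι) : (d k : K) * d k = 1 := congrArg Subtype.val (congrFun hd2 k)
  refine Subgroup.subset_closure ⟨by rw [conj_pow, hpow, mul_one, mul_inv_cancel], i, x,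
    d i * d (τ i) * y, hi, ?_⟩
  rw [hinv, Matrix.UnitaryGroup.mul_val, Matrix.UnitaryGroup.mul_val, hg, coe_diagonalUnitary]
  exact diagonal_mul_planeRotation_mul_diagonal hdd x y

theorem isPGroup_diagonalTwoGroup_sup_closure_pairRotations (hτ : Function.Involutive τ) :
    IsPGroup 2 (diagonalTwoGroup ι K 1 ⊔ Subgroup.closure (pairRotations K τ e) :
      Subgroup (Matrix.unitaryGroup ι K)) :=
  isPGroup_diagonalTwoGroup.to_sup_of_normal_right'
    (isPGroup_closure_of_commute (fun _ hg _ hg' => mul_comm_of_mem_pairRotations hτ hg hg')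
      fun _ hg => hg.1)
    diagonalTwoGroup_le_normalizer_closure_pairRotations

theorem exists_mem_pairRotations (h2 : (2 : K) ≠ 0) {I a b x y : K} (hI : I * I = -1)
    (ha : a ^ 2 ^ e = 1) (hb : b ^ 2 ^ e = 1) (hx : x = (a + b) / 2) (hy : y = (a - b) / (2 * I))
    (hxy : x * star x + y * star y = 1) (hyx : y * star x = x * star y) {i : ι} (hi : i ≠ τ i) :
    ∃ g ∈ pairRotations K τ e, (g : Matrix ι ι K) = planeRotation i (τ i) x y := by
  refine ⟨⟨_, planeRotation_mem_unitaryGroup hi hxy hyx⟩, ⟨Subtype.ext ?_, i, x, y, hi, rfl⟩, rfl⟩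
  change planeRotation i (τ i) x y ^ 2 ^ e = 1
  rw [hx, hy, planeRotation_pow hi h2 hI, ha, hb, sub_self, zero_div, one_add_one_eq_two,
    div_self h2, planeRotation_one_zero]

omit [Fintype ι] [DecidableEq ι] in
theorem pow_four_ne_one_of_star_eq_neg (h2 : (2 : K) ≠ 0) {I ζ : K} (hI : I * I = -1)
    (hstar : star I = I) (hζ : star ζ = -ζ) : ζ ^ 4 ≠ 1 := by
  intro h4
  have hζ0 : ζ ≠ 0 := by rintro rfl; simp at h4
  have hfixed : star ζ = ζ := by
    have hfactor : ((ζ - 1) * (ζ + 1)) * ((ζ - I) * (ζ + I)) = 0 := by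
      linear_combination h4 - (ζ ^ 2 - 1) * hI
    rcases mul_eq_zero.mp hfactor with h | h <;> rcases mul_eq_zero.mp h with h | h
    · rw [sub_eq_zero.mp h, star_one]
    · rw [eq_neg_of_add_eq_zero_left h, star_neg, star_one]
    · rw [sub_eq_zero.mp h, hstar]
    · rw [eq_neg_of_add_eq_zero_left h, star_neg, hstar]
  exact mul_ne_zero h2 hζ0 (by linear_combination hζ - hfixed)

omit [Fintype ι] [DecidableEq ι] in
theorem exists_circle_point_of_star_eq_neg (h2 : (2 : K) ≠ 0) {I ζ : K} (hI : I * I = -1)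
    (hstar : star I = I) (hζ : star ζ = -ζ) (hζ0 : ζ ≠ 0) :
    ∃ x y : K, x = (ζ + -ζ⁻¹) / 2 ∧ y = (ζ - -ζ⁻¹) / (2 * I) ∧
      star x = -x ∧ star y = -y ∧ x * x + y * y = -1 ∧ x ≠ 0 ∧ y ≠ 0 := by
  have hI0 : I ≠ 0 := by rintro rfl; simp at hI
  have h2star : star (2 : K) = 2 := by rw [← one_add_one_eq_two, star_add, star_one]
  have hζ4 := pow_four_ne_one_of_star_eq_neg h2 hI hstar hζ
  have hζinv : star ζ⁻¹ = -ζ⁻¹ := by rw [star_inv₀, hζ, inv_neg]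
  refine ⟨_, _, rfl, rfl, ?_, ?_, ?_, fun h => hζ4 ?_, fun h => hζ4 ?_⟩
  · rw [star_div₀, star_add, star_neg, hζ, hζinv, h2star]
    ring
  · rw [star_div₀, star_sub, star_neg, star_mul', hζ, hζinv, h2star, hstar]
    ring
  · field_simp
    linear_combination ((ζ ^ 2 - 1) ^ 2 + 4 * ζ ^ 2) * hI
  · field_simp at h
    linear_combination (ζ ^ 2 + 1) * h
  · field_simp at h
    linear_combination (ζ ^ 2 - 1) * h

theorem hasExtraSymmetry_of_pairRotations_subset (h2 : (2 : K) ≠ 0) {I ζ : K} (hI : I * I = -1)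
    (hstar : star I = I) (hζ : star ζ = -ζ) (hpow : ζ ^ 2 ^ e = 1)
    {P : Subgroup (Matrix.unitaryGroup ι K)} (hP : pairRotations K τ e ⊆ P) {i : ι} (hi : i ≠ τ i) :
    HasExtraSymmetry P i := by
  have hI0 : I ≠ 0 := by rintro rfl; simp at hI
  have hζ0 : ζ ≠ 0 := by rintro rfl; simp at hpow
  have hζ4 := pow_four_ne_one_of_star_eq_neg h2 hI hstar hζ
  have hdvd : 4 ∣ 2 ^ e := by
    rcases le_total e 2 with he | he
    · obtain ⟨k, hk⟩ := pow_dvd_pow 2 he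
      exact absurd (by rw [show 4 = 2 ^ e * k from hk, pow_mul, hpow, one_pow]) hζ4
    · exact pow_dvd_pow 2 he
  have heven : Even (2 ^ e) := even_iff_two_dvd.mpr ((by decide : 2 ∣ 4).trans hdvd)
  have hIpow : I ^ 2 ^ e = 1 := by
    obtain ⟨k, hk⟩ := hdvd
    rw [hk, pow_mul, show I ^ 4 = 1 by linear_combination (I * I - 1) * hI, one_pow]
  obtain ⟨x, y, hx, hy, hxs, hys, hxy, hx0, hy0⟩ :=
    exists_circle_point_of_star_eq_neg h2 hI hstar hζ hζ0
  obtain ⟨r, hr, hr'⟩ := exists_mem_pairRotations (x := 0) (y := 1) h2 hI hIpow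
    (heven.neg_pow I ▸ hIpow) (by ring) (by field_simp; ring) (by simp) (by simp) hi
  obtain ⟨g, hg, hg'⟩ := exists_mem_pairRotations h2 hI hpow
    (by rw [heven.neg_pow, inv_pow, hpow, inv_one]) hx hy
    (by rw [hxs, hys]; linear_combination -hxy) (by rw [hxs, hys]; ring) hi
  exact .inr ⟨τ i, hi, x, y, hxs, hys, hxy, hx0, hy0, ⟨r, hP hr, hr'⟩, g, hP hg, hg'⟩

theorem exists_isPGroup_two_of_star_eq_self (h2 : (2 : K) ≠ 0) {I ζ : K} (hI : I * I = -1)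
    (hstar : star I = I) (hζ : star ζ = -ζ) (hpow : ζ ^ 2 ^ e = 1) (hτ : Function.Involutive τ) :
    ∃ P : Subgroup (Matrix.unitaryGroup ι K), IsPGroup 2 P ∧
      (∀ i, coordUnitary i (-1 : unitary K) ∈ P) ∧ ∀ i, i ≠ τ i → HasExtraSymmetry P i :=
  ⟨_, isPGroup_diagonalTwoGroup_sup_closure_pairRotations hτ,
    fun i => Subgroup.mem_sup_left (coordUnitary_mem_diagonalTwoGroup (by simp) i),
    fun _ hi => hasExtraSymmetry_of_pairRotations_subset h2 hI hstar hζ hpow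
      (Subgroup.subset_closure.trans (SetLike.coe_subset_coe.mpr le_sup_right)) hi⟩

theorem exists_isPGroup_two (h2 : (2 : K) ≠ 0) {I ζ : K} (hI : I * I = -1) (hζ : star ζ = -ζ)
    (hpow : ζ ^ 2 ^ e = 1) (hτ : Function.Involutive τ) :
    ∃ P : Subgroup (Matrix.unitaryGroup ι K), IsPGroup 2 P ∧
      (∀ i, coordUnitary i (-1 : unitary K) ∈ P) ∧ ∀ i, i ≠ τ i → HasExtraSymmetry P i := by
  have hsq : star I * star I = I * I := by rw [← star_mul', hI, star_neg, star_one]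
  rcases mul_self_eq_mul_self_iff.mp hsq with hstar | hstar
  · exact exists_isPGroup_two_of_star_eq_self h2 hI hstar hζ hpow hτ
  · obtain ⟨P, hP, hneg, hext⟩ := exists_isPGroup_two_of_star_eq_neg (ι := ι) hI hstar
    exact ⟨P, hP, hneg, fun i _ => hext i⟩

end RotationTwoGroup

end TwoSubgroups

section FiniteField

theorem exists_pow_eq_of_pow_eq_one {G : Type*} [Group G] [IsCyclic G] {m n : ℕ} (hm : m ≠ 0)
    (hcard : Nat.card G = m * n) {x : G} (hx : x ^ m = 1) : ∃ y : G, y ^ n = x := by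
  obtain ⟨g, hg⟩ := IsCyclic.exists_generator (α := G)
  obtain ⟨k, rfl⟩ := Subgroup.mem_zpowers_iff.mp (hg x)
  have hdvd : ((m * n : ℕ) : ℤ) ∣ m * k := by
    rw [← hcard, ← orderOf_eq_card_of_forall_mem_zpowers hg, orderOf_dvd_iff_zpow_eq_one, mul_comm,
      _root_.zpow_mul, zpow_natCast, hx]
  rw [Nat.cast_mul] at hdvd
  obtain ⟨l, rfl⟩ := Int.dvd_of_mul_dvd_mul_left (Nat.cast_ne_zero.mpr hm) hdvd
  exact ⟨g ^ l, by rw [← zpow_natCast, ← _root_.zpow_mul, mul_comm]⟩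

variable {K : Type*} [Field K] [Fintype K] {q : ℕ}

theorem card_units_eq_of_card_eq_sq (hcard : Fintype.card K = q ^ 2) :
    Nat.card Kˣ = (q - 1) * (q + 1) := by
  rw [Nat.card_units, Nat.card_eq_fintype_card, hcard, mul_comm]
  simpa using Nat.sq_sub_sq q 1

theorem two_le_of_card_eq_sq (hcard : Fintype.card K = q ^ 2) : 2 ≤ q := by
  have := Fintype.one_lt_card (α := K)
  by_contra! hlt
  interval_cases q <;> omega

theorem odd_of_card_eq_sq (hcard : Fintype.card K = q ^ 2) (h2 : (2 : K) ≠ 0) : Odd q := by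
  have hchar : ringChar K ≠ 2 := fun h => h2 (by simpa [h] using CharP.cast_eq_zero K (ringChar K))
  exact Nat.odd_pow_iff two_ne_zero |>.mp
    (hcard ▸ Nat.odd_iff.mpr (FiniteField.odd_card_of_char_ne_two hchar))

theorem exists_mul_self_eq_neg_one (hcard : Fintype.card K = q ^ 2) (h2 : (2 : K) ≠ 0) :
    ∃ I : K, I * I = -1 := by
  have hmod : IsSquare (-1 : K) := by
    obtain ⟨k, hk⟩ := odd_of_card_eq_sq hcard h2
    rw [FiniteField.isSquare_neg_one_iff, hcard, hk]
    ring_nf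
    omega
  exact hmod.imp fun _ h => h.symm

theorem exists_mul_pow_eq (hcard : Fintype.card K = q ^ 2) {a : K} (ha : a ^ q = a) :
    ∃ b : K, b * b ^ q = a := by
  have hq := two_le_of_card_eq_sq hcard
  rcases eq_or_ne a 0 with rfl | ha0
  · exact ⟨0, zero_mul _⟩
  have hpow : Units.mk0 a ha0 ^ (q - 1) = 1 := Units.ext <| by
    rw [Units.val_pow_eq_pow_val, Units.val_mk0, pow_sub₀ a ha0 (by omega), ha, pow_one,
      mul_inv_cancel₀ ha0, Units.val_one]
  obtain ⟨b, hb⟩ := exists_pow_eq_of_pow_eq_one (by omega) (card_units_eq_of_card_eq_sq hcard) hpow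
  exact ⟨b, by rw [← pow_succ', ← Units.val_pow_eq_pow_val, hb, Units.val_mk0]⟩

theorem exists_pow_eq_neg_self (hcard : Fintype.card K = q ^ 2) (h2 : (2 : K) ≠ 0) :
    ∃ (ζ : K) (e : ℕ), ζ ^ q = -ζ ∧ ζ ^ 2 ^ e = 1 := by
  have hq := two_le_of_card_eq_sq hcard
  have hodd := odd_of_card_eq_sq hcard h2
  have hcard' : Nat.card Kˣ = (q + 1) * (q - 1) := by
    rw [card_units_eq_of_card_eq_sq hcard, mul_comm]
  obtain ⟨y, hy⟩ := exists_pow_eq_of_pow_eq_one (by omega) hcard'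
    (x := (-1 : Kˣ)) hodd.add_one.neg_one_pow
  obtain ⟨v, u, hu, hv⟩ := Nat.exists_eq_two_pow_mul_odd (n := q - 1) (by omega)
  have hpow : ((y : K) ^ u) ^ 2 ^ v = -1 := by
    rw [← pow_mul, mul_comm, ← hv, ← Units.val_pow_eq_pow_val, hy, Units.val_neg, Units.val_one]
  refine ⟨(y : K) ^ u, v + 1, ?_, ?_⟩
  · obtain ⟨r, rfl⟩ := Nat.exists_eq_add_of_le' (one_le_two.trans hq)
    rw [pow_succ, ← Nat.add_sub_cancel (n := r) (m := 1), hv, pow_mul, hpow, hu.neg_one_pow,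
      neg_one_mul]
  · rw [pow_succ, pow_mul, hpow, neg_one_sq]

end FiniteField

section UnitaryGroup

variable {K : Type*} [Field K] [Fintype K] [StarRing K] {q n : ℕ}

theorem exists_forall_mem_scalarUnitary_of_isSolvable (hcard : Fintype.card K = q ^ 2)
    (hstar : ∀ a : K, star a = a ^ q) (hn : 3 ≤ n) (h2 : (2 : K) ≠ 0) (h3 : (3 : K) ≠ 0)
    {H : Subgroup (Matrix.unitaryGroup (Fin n) K)} (hsolv : Group.IsSolvable H)
    (hindex : ¬ 2 ∣ H.index) (hcardH : (Nat.card H : K) ≠ 0) :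
    ∃ x : Fin 3 → Matrix.unitaryGroup (Fin n) K,
      (∀ i, (x i : Matrix (Fin n) (Fin n) K).det = 1) ∧
      ∀ g ∈ H, (∀ i, x i * g * (x i)⁻¹ ∈ H) → g ∈ scalarUnitary (Fin n) K := by
  let o : Fin n := ⟨n - 1, by omega⟩
  have : Nonempty (Fin n) := ⟨o⟩
  have hnorm (a : K) (ha : star a = a) : ∃ b, b * star b = a :=
    (exists_mul_pow_eq hcard (hstar a ▸ ha)).imp fun b hb => hstar b ▸ hb
  obtain ⟨I, hI⟩ := exists_mul_self_eq_neg_one hcard h2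
  obtain ⟨ζ, e, hζ, hpow⟩ := exists_pow_eq_neg_self hcard h2
  obtain ⟨P, hP, hneg, hext⟩ := exists_isPGroup_two h2 hI ((hstar ζ).trans hζ) hpow
    (adjacentPairing_involutive 0 n le_rfl)
  have hmoved (i : Fin n) (hi : i ≠ o) : i ≠ adjacentPairing 0 n le_rfl i := by
    rw [Ne, Fin.ext_iff] at hi ⊢
    rw [val_adjacentPairing]
    split_ifs <;> grind
  obtain ⟨B, τ, hτ, hB⟩ := exists_isPairMonomial_of_isPGroup_two hsolv hindex hcardH h2 hnorm hP
    hneg fun i hi => hext i (hmoved i hi)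
  exact (hasThreeFrameBase_of_involutive hn hτ h2 h3 hnorm).exists_forall_mem_scalarUnitary hB

omit [Fintype K] in
theorem range_toUnits_eq_GUgrp :
    (Unitary.toUnits : Matrix.unitaryGroup (Fin n) K →* GL (Fin n) K).range =
      GUgrp n (starRingEnd K) := by
  ext g
  constructor
  · rintro ⟨a, rfl⟩
    exact Unitary.star_mul_self_of_mem a.2
  · intro hg
    exact ⟨⟨g, Matrix.mem_unitaryGroup_iff'.mpr hg⟩, Units.ext rfl⟩

theorem exists_inf_conjBy_subset_scalars (hcard : Fintype.card K = q ^ 2)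
    (hstar : ∀ a : K, star a = a ^ q) (hn : 3 ≤ n) (h2 : (2 : K) ≠ 0) (h3 : (3 : K) ≠ 0)
    {H : Subgroup (GL (Fin n) K)} (hle : H ≤ GUgrp n (starRingEnd K)) (hsolv : Group.IsSolvable H)
    (hindex : ¬ 2 ∣ H.relIndex (GUgrp n (starRingEnd K))) (hcardH : (Nat.card H : K) ≠ 0) :
    ∃ x ∈ GUgrp n (starRingEnd K) ⊓ SLsub n K, ∃ y ∈ GUgrp n (starRingEnd K) ⊓ SLsub n K,
      ∃ z ∈ GUgrp n (starRingEnd K) ⊓ SLsub n K, ∀ g ∈ H ⊓ conjBy H x ⊓ conjBy H y ⊓ conjBy H z,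
        ∃ c : K, (g : Matrix (Fin n) (Fin n) K) = c • (1 : Matrix (Fin n) (Fin n) K) := by
  let f : Matrix.unitaryGroup (Fin n) K →* GL (Fin n) K := Unitary.toUnits
  have hf : Function.Injective f := Unitary.toUnits_injective
  have hrange : f.range = GUgrp n (starRingEnd K) := range_toUnits_eq_GUgrp
  have hcard' : (Nat.card (H.comap f) : K) ≠ 0 := fun h0 => hcardH <|
    zero_dvd_iff.mp (h0 ▸ Nat.cast_dvd_cast (Subgroup.card_comap_dvd_of_injective H f hf))
  obtain ⟨x, hdet, hx⟩ := exists_forall_mem_scalarUnitary_of_isSolvable hcard hstar hn h2 h3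
    (Group.isSolvable_of_isSolvable_injective (f := f.subgroupComap H)
      fun a b hab => Subtype.ext (hf (congrArg Subtype.val hab)))
    (by rwa [Subgroup.index_comap, hrange]) hcard'
  have hmem (i : Fin 3) : f (x i) ∈ GUgrp n (starRingEnd K) ⊓ SLsub n K :=
    ⟨hrange ▸ ⟨x i, rfl⟩, hdet i⟩
  have hconj {w g : GL (Fin n) K} (hg : g ∈ conjBy H w) : w * g * w⁻¹ ∈ H := by
    obtain ⟨h, hh, rfl⟩ := hg
    simpa [mul_assoc] using hh
  refine ⟨_, hmem 0, _, hmem 1, _, hmem 2, ?_⟩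
  rintro g ⟨⟨⟨hg, hg0⟩, hg1⟩, hg2⟩
  obtain ⟨a, rfl⟩ : g ∈ f.range := hrange ▸ hle hg
  refine hx a hg fun i => ?_
  have hfi : f (x i) * f a * (f (x i))⁻¹ ∈ H := by
    fin_cases i
    exacts [hconj hg0, hconj hg1, hconj hg2]
  simpa using hfi

end UnitaryGroup

theorem stmt10_general {q n : ℕ} {K : Type*} [Field K] [Fintype K] (hcard : Fintype.card K = q ^ 2)
    (φ : K →+* K) (hφ : ∀ a, φ a = a ^ q) (hn : 3 ≤ n) (h2 : (2 : K) ≠ 0) (h3 : (3 : K) ≠ 0)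
    (H : Subgroup (GL (Fin n) K)) (hle : H ≤ GUgrp n φ) (hsolv : Group.IsSolvable H)
    (hindex : ¬ 2 ∣ H.relIndex (GUgrp n φ)) (hcardH : (Nat.card H : K) ≠ 0) :
    ∃ x ∈ GUgrp n φ ⊓ SLsub n K, ∃ y ∈ GUgrp n φ ⊓ SLsub n K, ∃ z ∈ GUgrp n φ ⊓ SLsub n K,
      ∀ g ∈ H ⊓ conjBy H x ⊓ conjBy H y ⊓ conjBy H z,
        ∃ c : K, (g : Matrix (Fin n) (Fin n) K) = c • (1 : Matrix (Fin n) (Fin n) K) := by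
  let _ : StarRing K :=
    { star := φ
      star_involutive := fun a => by
        rw [hφ, hφ, ← pow_mul, ← pow_two, ← hcard, FiniteField.pow_card]
      star_mul := fun a b => (map_mul φ a b).trans (mul_comm _ _)
      star_add := map_add φ }
  exact exists_inf_conjBy_subset_scalars hcard hφ hn h2 h3 hle hsolv hindex hcardH

theorem stmt10 (p f q n : ℕ) (hp : p.Prime) (hf : 1 ≤ f) (hq : q = p ^ f)
    (K : Type) [Field K] [Fintype K] (hcard : Fintype.card K = q ^ 2)
    (φ : K →+* K) (hφ : ∀ x : K, φ x = x ^ q)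
    (hn : 3 ≤ n) (hnonsolv : ¬ IsSolvable ↥(GUgrp n φ))
    (π : Set ℕ) (hπ : ∀ r ∈ π, r.Prime) (h2pi : 2 ∈ π) (h3pi : 3 ∈ π) (hppi : p ∉ π)
    (H : Subgroup (GL (Fin n) K)) (hH : IsHallSubgroupIn π (GUgrp n φ) H)
    (hsolv : IsSolvable ↥H)
    :
    ∃ x y z : GL (Fin n) K,
      x ∈ (H : Set (GL (Fin n) K)) * ((GUgrp n φ ⊓ SLsub n K : Subgroup (GL (Fin n) K)) : Set (GL (Fin n) K)) ∧
      y ∈ (H : Set (GL (Fin n) K)) * ((GUgrp n φ ⊓ SLsub n K : Subgroup (GL (Fin n) K)) : Set (GL (Fin n) K)) ∧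
      z ∈ (H : Set (GL (Fin n) K)) * ((GUgrp n φ ⊓ SLsub n K : Subgroup (GL (Fin n) K)) : Set (GL (Fin n) K)) ∧
    ∀ g ∈ H ⊓ conjBy H x ⊓ conjBy H y ⊓ conjBy H z,
      ∃ c : K, (g : Matrix (Fin n) (Fin n) K) = c • (1 : Matrix (Fin n) (Fin n) K) := by
  obtain ⟨hle, hprimes, hindex⟩ := hH
  have : Fact p.Prime := ⟨hp⟩
  have : CharP K p := charP_of_card_eq_prime_pow (f := f * 2) (by rw [hcard, hq, pow_mul])
  have hne {r : ℕ} (hr : r ∈ π) : (r : K) ≠ 0 :=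
    CharP.cast_ne_zero_of_ne_of_prime K (hπ r hr) fun h => hppi (h ▸ hr)
  have hcardH : (Nat.card H : K) ≠ 0 := fun h =>
    hppi (hprimes p hp ((CharP.cast_eq_zero_iff K p _).mp h))
  obtain ⟨x, hx, y, hy, z, hz, hxyz⟩ := stmt10_general hcard φ hφ hn (mod_cast hne h2pi)
    (mod_cast hne h3pi) H hle hsolv (hindex 2 h2pi) hcardH
  have hsub := Set.subset_mul_right (t := ((GUgrp n φ ⊓ SLsub n K : Subgroup _) : Set _)) H.one_mem
  exact ⟨x, y, z, hsub hx, hsub hy, hsub hz, hxyz⟩
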